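/- arXiv:1307.5793 — 2 statements merged into one kernel-verified Lean document; each statement's English description precedes it below -/
import Mathlib

section
/- The set of Coxeter numbers of the A-type Niemeier root systems (those containing at least one A-type irreducible component) is exactly {2, 3, 4, 5, 6, 7, 8, 9, 10, 12, 13, 16, 18, 25}, and this set coincides with the set of integers n > 1 for which the Hecke congruence group Γ0(n) has genus zero. -/
noncomputable section

open Topology MeasureTheory

/-- `e2 x = e^{2πix}`. -/
def e2 (x : ℂ) : ℂ := Complex.exp (2 * (Real.pi : ℂ) * Complex.I * x)

/-- The upper half-plane, viewed as a subset of `ℂ`. -/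
def UHP : Set ℂ := {τ : ℂ | 0 < τ.im}
/-- The irreducible simply-laced (ADE) root systems; the natural number argument of
`A`/`D` is the rank. -/
inductive ADE : Type
  | A : ℕ → ADE
  | D : ℕ → ADE
  | E6 : ADE
  | E7 : ADE
  | E8 : ADE
  deriving DecidableEq

namespace ADE

/-- Validity of the rank parameter: `A n` needs `n ≥ 1` and `D n` needs `n ≥ 4`. -/
def valid : ADE → Prop
  | A n => 1 ≤ n
  | D n => 4 ≤ n
  | _ => True

def isA : ADE → Bool | A _ => true | _ => false
def isD : ADE → Bool | D _ => true | _ => false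
def isE6 : ADE → Bool | E6 => true | _ => false

def rank : ADE → ℕ
  | A n => n
  | D n => n
  | E6 => 6
  | E7 => 7
  | E8 => 8

/-- The Coxeter number. -/
def cox : ADE → ℕ
  | A n => n + 1
  | D n => 2 * n - 2
  | E6 => 12
  | E7 => 18
  | E8 => 30

/-- The divisors `n_i` of the Coxeter number `m` such that `Ω^X = Σ_i Ω_m(n_i)`;
`Ω^{A_{m-1}} = Ω_m(1)`, `Ω^{D_{m/2+1}} = Ω_m(1) + Ω_m(m/2)`,
`Ω^{E6} = Ω_{12}(1)+Ω_{12}(4)+Ω_{12}(6)`, `Ω^{E7} = Ω_{18}(1)+Ω_{18}(6)+Ω_{18}(9)`,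
`Ω^{E8} = Ω_{30}(1)+Ω_{30}(6)+Ω_{30}(10)+Ω_{30}(15)`. -/
def omegaDivs (m : ℕ) : ADE → List ℕ
  | A _ => [1]
  | D _ => [1, m / 2]
  | E6 => [1, 4, 6]
  | E7 => [1, 6, 9]
  | E8 => [1, 6, 10, 15]

/-- The Coxeter Frame shape, as a list of pairs `(n_i, k_i)` standing for `∏ n_i^{k_i}`. -/
def frame : ADE → List (ℕ × ℤ)
  | A n => [(n + 1, 1), (1, -1)]
  | D n => [(2, 1), (2 * n - 2, 1), (1, -1), (n - 1, -1)]
  | E6 => [(2, 1), (3, 1), (12, 1), (1, -1), (4, -1), (6, -1)]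
  | E7 => [(2, 1), (3, 1), (18, 1), (1, -1), (6, -1), (9, -1)]
  | E8 => [(2, 1), (3, 1), (5, 1), (30, 1), (1, -1), (6, -1), (10, -1), (15, -1)]

end ADE

/-- The 23 Niemeier root systems, as unions (lists) of their irreducible components. -/
def NiemeierRootSystems : List (List ADE) :=
  [ List.replicate 24 (.A 1), List.replicate 12 (.A 2), List.replicate 8 (.A 3),
    List.replicate 6 (.A 4), [.A 5, .A 5, .A 5, .A 5, .D 4], List.replicate 4 (.A 6),
    [.A 7, .A 7, .D 5, .D 5], List.replicate 3 (.A 8), [.A 9, .A 9, .D 6],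
    [.A 11, .D 7, .E6], [.A 12, .A 12], [.A 15, .D 9], [.A 17, .E7], [.A 24],
    List.replicate 6 (.D 4), List.replicate 4 (.D 6), List.replicate 3 (.D 8),
    [.D 10, .E7, .E7], [.D 12, .D 12], [.D 16, .E8], [.D 24],
    List.replicate 4 .E6, List.replicate 3 .E8 ]

/-- The Coxeter number of a union of components (that of its first component). -/
def coxOf : List ADE → ℕ
  | [] => 0
  | C :: _ => C.cox

/-- The Coxeter Frame shape of a union of components. -/
def frameOf (X : List ADE) : List (ℕ × ℤ) := (X.map ADE.frame).flatten
/-- The subset `Γ0(N)+S = ∪_{e ∈ S} W_N(e)` of `SL₂(ℝ)`, where `W_N(e)` consists of the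
matrices `(1/√e)[[ae, b],[cN, de]]` with `a,b,c,d ∈ ℤ` and `ade - bc(N/e) = 1`.
In particular `GammaPlus N {1} = Γ0(N)`. -/
def GammaPlus (N : ℕ) (S : Set ℕ) : Set (Matrix.SpecialLinearGroup (Fin 2) ℝ) :=
  { g | ∃ e ∈ S, ∃ a b c d : ℤ,
      a * d * (e : ℤ) - b * c * ((N / e : ℕ) : ℤ) = 1 ∧
      (g : Matrix (Fin 2) (Fin 2) ℝ) =
        (Real.sqrt (e : ℝ))⁻¹ •
          !![(a : ℝ) * (e : ℝ), (b : ℝ); (c : ℝ) * (N : ℝ), (d : ℝ) * (e : ℝ)] }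

/-- The genus zero group `Γ^X` attached to a Niemeier root system `X`:
`Γ0(m)` if `X` has an A-type component (`m` the Coxeter number), `Γ0(2n)+n` if `X` has a
D-type but no A-type component and Coxeter number `2n`, `Γ0(12)+4` for `X = E6⁴` and
`Γ0(30)+6,10,15` for `X = E8³`. -/
def GammaX (X : List ADE) : Set (Matrix.SpecialLinearGroup (Fin 2) ℝ) :=
  if X.any ADE.isA then GammaPlus (coxOf X) {1}
  else if X.any ADE.isD then GammaPlus (coxOf X) {1, coxOf X / 2}
  else if X.any ADE.isE6 then GammaPlus 12 {1, 4}
  else GammaPlus 30 {1, 6, 10, 15}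

open scoped Manifold in
/-- `f` is a principal modulus (Hauptmodul) for `Γ ⊆ SL₂(ℝ)`: it is a `Γ`-invariant
holomorphic function on the upper half-plane generating the field of `Γ`-invariant
functions, i.e. inducing an isomorphism from `Γ\ℍ` onto the complement of a finite set
of points of the Riemann sphere; equivalently, `f` is injective on `Γ`-orbits and its
range is cofinite in `ℂ`. -/
def IsPrincipalModulus (Γ : Set (Matrix.SpecialLinearGroup (Fin 2) ℝ))
    (f : UpperHalfPlane → ℂ) : Prop :=
  MDifferentiable 𝓘(ℂ) 𝓘(ℂ) f ∧
  (∀ γ ∈ Γ, ∀ τ : UpperHalfPlane, f (γ • τ) = f τ) ∧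
  (∀ τ₁ τ₂ : UpperHalfPlane, f τ₁ = f τ₂ → ∃ γ ∈ Γ, γ • τ₁ = τ₂) ∧
  (Set.range f)ᶜ.Finite

/-!
A Hauptmodul of `Γ` identifies `Γ \ ℍ` with the plane minus a finite set of points. A homomorphism
from `Γ` to a group which is trivial on the elliptic and the parabolic elements has, locally on the
whole plane, a locally constant equivariant section. The sections glue because the plane is simply
connected, so the homomorphism is trivial.
At every level outside the list, reduction modulo a suitable integer or a modular symbol gives such
a homomorphism of `Γ₀(N)` which is not trivial.

At the levels in the list, some eta quotient is invariant under `Γ₀(N)` and has a simple pole at the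
cusp `∞` and no other pole. It takes each value near infinity once, hence every value once.
-/

section

open UpperHalfPlane MatrixGroups CongruenceSubgroup
open scoped Manifold

/-! ### Gluing along convex sets in the plane -/

theorem isPreconnected_diff_of_bounded {E : Type*} [NormedAddCommGroup E]
    [NormedSpace ℝ E] (hE : 1 < Module.rank ℝ E) {U F : Set E} (hU : IsOpen U)
    (hconv : Convex ℝ U) (hbdd : Bornology.IsBounded U) (hF : F.Countable) :
    IsPreconnected (U \ F) := by
  rcases U.eq_empty_or_nonempty with rfl | hne
  · simpa using isPreconnected_empty
  obtain ⟨h, hball, -, -⟩ := exists_homeomorph_image_interior_closure_frontier_eq_unitBall hconv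
    (by rwa [hU.interior_eq]) hbdd
  rw [hU.interior_eq] at hball
  let Φ : E → E := fun x => h.symm (Homeomorph.unitBall x)
  have hΦ : Continuous Φ := by fun_prop
  have hΦ_inj : Function.Injective Φ :=
    h.symm.injective.comp (Subtype.val_injective.comp Homeomorph.unitBall.injective)
  have hΦ_range : Set.range Φ = U := by
    rw [show Φ = h.symm ∘ Subtype.val ∘ Homeomorph.unitBall from rfl, Set.range_comp,
      Homeomorph.unitBall.surjective.range_comp, Subtype.range_coe, ← hball,
      ← Set.image_comp, h.symm_comp_self, Set.image_id]
  rw [← hΦ_range, ← Set.image_compl_preimage]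
  exact ((hF.preimage hΦ_inj).isConnected_compl_of_one_lt_rank hE).isPreconnected.image _
    hΦ.continuousOn

theorem isPreconnected_diff_of_convex {E : Type*} [NormedAddCommGroup E] [NormedSpace ℝ E]
    (hE : 1 < Module.rank ℝ E) {U F : Set E} (hU : IsOpen U) (hconv : Convex ℝ U)
    (hF : F.Countable) : IsPreconnected (U \ F) := by
  refine isPreconnected_of_forall_pair fun x hx y hy => ?_
  let B := Metric.ball (0 : E) (max ‖x‖ ‖y‖ + 1)
  refine ⟨(U ∩ B) \ F, Set.sdiff_subset_sdiff_left Set.inter_subset_left, ⟨⟨hx.1, ?_⟩, hx.2⟩,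
    ⟨⟨hy.1, ?_⟩, hy.2⟩, isPreconnected_diff_of_bounded hE (hU.inter Metric.isOpen_ball)
    (hconv.inter (convex_ball _ _)) (Metric.isBounded_ball.subset Set.inter_subset_right) hF⟩
  · simpa [B] using (le_max_left ‖x‖ ‖y‖).trans_lt (lt_add_one _)
  · simpa [B] using (le_max_right ‖x‖ ‖y‖).trans_lt (lt_add_one _)

theorem exists_isPreconnected_of_glue {X : Type*} [TopologicalSpace X] [PreconnectedSpace X]
    {P : Set X → Prop}
    (local_mem : ∀ x, ∃ U, IsOpen U ∧ IsPreconnected U ∧ x ∈ U ∧ P U)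
    (glue : ∀ U V, IsOpen U → IsOpen V → IsPreconnected U → IsPreconnected V →
      P U → P V → P (U ∪ V)) (x y : X) :
    ∃ U, IsOpen U ∧ IsPreconnected U ∧ x ∈ U ∧ y ∈ U ∧ P U := by
  refine isPreconnected_univ.induction₂
    (fun x y => ∃ U, IsOpen U ∧ IsPreconnected U ∧ x ∈ U ∧ y ∈ U ∧ P U)
    (fun x _ => ?_) ?_ ?_ (Set.mem_univ x) (Set.mem_univ y)
  · obtain ⟨U, hU, hconn, hx, hP⟩ := local_mem x
    rw [nhdsWithin_univ]
    filter_upwards [hU.mem_nhds hx] with y hy using ⟨U, hU, hconn, hx, hy, hP⟩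
  · rintro x y z _ _ _ ⟨U, hU, hUc, hxU, hyU, hPU⟩ ⟨V, hV, hVc, hyV, hzV, hPV⟩
    exact ⟨U ∪ V, hU.union hV, hUc.union y hyU hyV hVc, Or.inl hxU, Or.inr hzV,
      glue U V hU hV hUc hVc hPU hPV⟩
  · rintro x y _ _ ⟨U, hU, hconn, hx, hy, hP⟩
    exact ⟨U, hU, hconn, hy, hx, hP⟩

theorem convex_reProdIm_of_isPreconnected {s t : Set ℝ} (hs : IsPreconnected s)
    (ht : IsPreconnected t) : Convex ℝ (s ×ℂ t) :=
  (hs.ordConnected.convex.linear_preimage Complex.reLm).inter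
    (ht.ordConnected.convex.linear_preimage Complex.imLm)

theorem isPreconnected_inter_of_isPreconnected {s t : Set ℝ} (hs : IsPreconnected s)
    (ht : IsPreconnected t) : IsPreconnected (s ∩ t) :=
  (hs.ordConnected.inter ht.ordConnected).isPreconnected

theorem exists_isOpen_reProdIm_subset {W : Set ℂ} (hW : IsOpen W) {c : ℂ} (hc : c ∈ W) :
    ∃ U V : Set ℝ, (IsOpen U ∧ IsPreconnected U ∧ c.re ∈ U) ∧
      (IsOpen V ∧ IsPreconnected V ∧ c.im ∈ V) ∧ U ×ℂ V ⊆ W := by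
  have hW' : Complex.equivRealProdCLM.symm ⁻¹' W ∈ 𝓝 (c.re, c.im) :=
    (hW.preimage Complex.equivRealProdCLM.symm.continuous).mem_nhds
      (by rwa [Set.mem_preimage, ← Complex.equivRealProdCLM_apply,
        ContinuousLinearEquiv.symm_apply_apply])
  obtain ⟨ε, hε, hball⟩ := Metric.mem_nhds_iff.1 hW'
  rw [← ball_prod_same] at hball
  refine ⟨Metric.ball c.re ε, Metric.ball c.im ε,
    ⟨Metric.isOpen_ball, Metric.isPreconnected_ball, Metric.mem_ball_self hε⟩,
    ⟨Metric.isOpen_ball, Metric.isPreconnected_ball, Metric.mem_ball_self hε⟩,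
    fun z hz => ?_⟩
  have hz' := hball (show Complex.equivRealProdCLM z ∈ _ from hz)
  rwa [Set.mem_preimage, ContinuousLinearEquiv.symm_apply_apply] at hz'

section Gluing
variable {Q : Set ℂ → Prop} (anti : ∀ ⦃V W⦄, V ⊆ W → Q W → Q V)
  (local_mem : ∀ c, ∃ W, IsOpen W ∧ c ∈ W ∧ Q W)
  (glue : ∀ V W, IsOpen V → IsOpen W → Convex ℝ (V ∩ W) → Q V → Q W → Q (V ∪ W))
include anti local_mem glue

theorem exists_isOpen_Icc_reProdIm (a b y : ℝ) :
    ∃ V, IsOpen V ∧ IsPreconnected V ∧ y ∈ V ∧ Q (Set.Icc a b ×ℂ V) := by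
  have hstrip := exists_isPreconnected_of_glue
    (P := fun U => ∃ V, IsOpen V ∧ IsPreconnected V ∧ y ∈ V ∧ Q (U ×ℂ V)) (fun x => ?_)
    ?_ a b
  · obtain ⟨U, -, hUc, ha, hb, V, hV, hVc, hy, hQ⟩ := hstrip
    exact ⟨V, hV, hVc, hy,
      anti (Set.inter_subset_inter_left _ (Set.preimage_mono (hUc.Icc_subset ha hb))) hQ⟩
  · obtain ⟨W, hW, hc, hQ⟩ := local_mem ⟨x, y⟩
    obtain ⟨U, V, ⟨hU, hUc, hx⟩, ⟨hV, hVc, hy⟩, hUV⟩ := exists_isOpen_reProdIm_subset hW hc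
    exact ⟨U, hU, hUc, hx, V, hV, hVc, hy, anti hUV hQ⟩
  · rintro U U' hU hU' hUc hUc' ⟨V, hV, hVc, hy, hQ⟩ ⟨V', hV', hVc', hy', hQ'⟩
    have hconn := isPreconnected_inter_of_isPreconnected hVc hVc'
    have hopen := hV.inter hV'
    have hleft : Q (U ×ℂ (V ∩ V')) := anti (fun z hz => And.intro hz.1 hz.2.1) hQ
    have hright : Q (U' ×ℂ (V ∩ V')) := anti (fun z hz => And.intro hz.1 hz.2.2) hQ'
    refine ⟨V ∩ V', hopen, hconn, ⟨hy, hy'⟩,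
      anti (fun z hz => hz.1.imp (And.intro · hz.2) (And.intro · hz.2))
        (glue _ _ (hU.reProdIm hopen) (hU'.reProdIm hopen) ?_ hleft hright)⟩
    exact (convex_reProdIm_of_isPreconnected hUc hconn).inter
      (convex_reProdIm_of_isPreconnected hUc' hconn)

theorem of_isBounded_of_glue {K : Set ℂ} (hK : Bornology.IsBounded K) : Q K := by
  obtain ⟨B, hB⟩ := hK.exists_norm_le
  have hQ := exists_isPreconnected_of_glue (P := fun V => Q (Set.Ioo (-(B + 1)) (B + 1) ×ℂ V))
    (fun y => ?_) (fun V V' hV hV' hVc hVc' h h' => ?_) (-B) B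
  · obtain ⟨V, -, hVc, hmin, hmax, hQ⟩ := hQ
    refine anti (fun z hz => ?_) hQ
    have hre := abs_le.1 ((Complex.abs_re_le_norm z).trans (hB z hz))
    have him := abs_le.1 ((Complex.abs_im_le_norm z).trans (hB z hz))
    exact ⟨⟨by linarith [hre.1], by linarith [hre.2]⟩, hVc.Icc_subset hmin hmax him⟩
  · obtain ⟨V, hV, hVc, hy, hQ⟩ :=
      exists_isOpen_Icc_reProdIm anti local_mem glue (-(B + 1)) (B + 1) y
    exact ⟨V, hV, hVc, hy,
      anti (fun z hz => And.intro (Set.Ioo_subset_Icc_self hz.1) hz.2) hQ⟩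
  · refine anti (fun z hz => hz.2.imp (And.intro hz.1) (And.intro hz.1))
      (glue _ _ (isOpen_Ioo.reProdIm hV) (isOpen_Ioo.reProdIm hV') ?_ h h')
    exact (convex_reProdIm_of_isPreconnected isPreconnected_Ioo hVc).inter
      (convex_reProdIm_of_isPreconnected isPreconnected_Ioo hVc')

end Gluing

/-! ### The modular group -/

/-- The element of `SL(2, ℤ)` with rows `(a, b)` and `(c, d)`. -/
def mkSL (a b c d : ℤ) (h : a * d - b * c = 1) : SL(2, ℤ) :=
  ⟨!![a, b; c, d], by rw [Matrix.det_fin_two_of, h]⟩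

section mkSL
variable (a b c d : ℤ) (h : a * d - b * c = 1)

@[simp] theorem mkSL_apply_zero_zero : mkSL a b c d h 0 0 = a := rfl
@[simp] theorem mkSL_apply_zero_one : mkSL a b c d h 0 1 = b := rfl
@[simp] theorem mkSL_apply_one_zero : mkSL a b c d h 1 0 = c := rfl
@[simp] theorem mkSL_apply_one_one : mkSL a b c d h 1 1 = d := rfl

end mkSL

theorem SL_ext {γ δ : SL(2, ℤ)} (h00 : γ 0 0 = δ 0 0) (h01 : γ 0 1 = δ 0 1)
    (h10 : γ 1 0 = δ 1 0) (h11 : γ 1 1 = δ 1 1) : γ = δ := by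
  ext i j
  fin_cases i <;> fin_cases j <;> assumption

theorem SL_det (γ : SL(2, ℤ)) : γ 0 0 * γ 1 1 - γ 0 1 * γ 1 0 = 1 := by
  rw [← Matrix.det_fin_two, γ.det_coe]

theorem SL_mul_apply (γ δ : SL(2, ℤ)) (i j : Fin 2) :
    (γ * δ) i j = γ i 0 * δ 0 j + γ i 1 * δ 1 j := by
  rw [Matrix.SpecialLinearGroup.coe_mul, Matrix.mul_apply, Fin.sum_univ_two]

theorem SL_inv_apply_zero_zero (γ : SL(2, ℤ)) : γ⁻¹ 0 0 = γ 1 1 := by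
  simp [Matrix.SpecialLinearGroup.coe_inv, Matrix.adjugate_fin_two]

theorem SL_inv_apply_one_zero (γ : SL(2, ℤ)) : γ⁻¹ 1 0 = -γ 1 0 := by
  simp [Matrix.SpecialLinearGroup.coe_inv, Matrix.adjugate_fin_two]

theorem mem_Gamma0_iff_dvd {N : ℕ} {γ : SL(2, ℤ)} : γ ∈ Gamma0 N ↔ (N : ℤ) ∣ γ 1 0 := by
  rw [Gamma0_mem, ZMod.intCast_zmod_eq_zero_iff_dvd]

theorem Gamma0_le_Gamma0 {M N : ℕ} (h : M ∣ N) : Gamma0 N ≤ Gamma0 M := fun _ hγ =>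
  mem_Gamma0_iff_dvd.2 ((Int.natCast_dvd_natCast.2 h).trans (mem_Gamma0_iff_dvd.1 hγ))

theorem coe_SL_smul (γ : SL(2, ℤ)) (τ : ℍ) :
    ((γ • τ : ℍ) : ℂ) = (γ 0 0 * τ + γ 0 1) / (γ 1 0 * τ + γ 1 1) := by
  rw [coe_specialLinearGroup_apply]
  simp

theorem im_SL_smul (γ : SL(2, ℤ)) (τ : ℍ) :
    (γ • τ).im = τ.im / Complex.normSq (γ 1 0 * τ + γ 1 1) := by
  rw [ModularGroup.im_smul_eq_div_normSq]
  simp [denom]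

theorem continuous_SL_smul (γ : SL(2, ℤ)) : Continuous fun τ : ℍ => γ • τ :=
  continuous_const_smul (Matrix.SpecialLinearGroup.mapGL ℝ γ)

theorem apply_one_zero_eq_zero_of_one_lt_im {γ : SL(2, ℤ)} {τ : ℍ} (h1 : 1 < τ.im)
    (h2 : 1 < (γ • τ).im) : γ 1 0 = 0 := by
  by_contra hc
  have hc1 : (1 : ℝ) ≤ (γ 1 0 : ℝ) ^ 2 := by
    exact_mod_cast (one_le_sq_iff_one_le_abs _).2 (Int.one_le_abs hc)
  have him : τ.im ^ 2 ≤ Complex.normSq (γ 1 0 * τ + γ 1 1) := by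
    rw [Complex.normSq_apply]
    simp only [Complex.add_re, Complex.mul_re, Complex.intCast_re, coe_re, Complex.intCast_im,
      zero_mul, sub_zero, Complex.add_im, Complex.mul_im, coe_im, add_zero]
    nlinarith [sq_nonneg (τ.im), mul_self_nonneg ((γ 1 0 : ℝ) * τ.re + γ 1 1)]
  rw [im_SL_smul, lt_div_iff₀ (by nlinarith)] at h2
  nlinarith

theorem exists_nhds_smul_eq_of_smul_mem (τ₁ τ₂ : ℍ) :
    ∃ V₁ V₂ : Set ℍ, IsOpen V₁ ∧ IsOpen V₂ ∧ τ₁ ∈ V₁ ∧ τ₂ ∈ V₂ ∧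
      ∀ γ : SL(2, ℤ), ∀ z ∈ V₁, γ • z ∈ V₂ → γ • τ₁ = τ₂ := by
  obtain ⟨K, hK, hτK⟩ := exists_compact_mem_nhds τ₁
  obtain ⟨L, hL, hτL⟩ := exists_compact_mem_nhds τ₂
  have hfin := ProperlyDiscontinuousSMul.finite_disjoint_inter_image
    (Γ := (Matrix.SpecialLinearGroup.mapGL (n := Fin 2) (R := ℤ) ℝ).range) hK hL
  have hloc : ∀ γ : (Matrix.SpecialLinearGroup.mapGL (n := Fin 2) (R := ℤ) ℝ).range,
      ∀ᶠ V in (𝓝 (τ₁, τ₂)).smallSets, γ • τ₁ ≠ τ₂ → ∀ z ∈ V, γ • z.1 ≠ z.2 := by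
    intro γ
    by_cases h : γ • τ₁ = τ₂
    · simp [h]
    · have hc : Continuous fun z : ℍ × ℍ => γ • z.1 :=
        (continuous_const_smul (γ : GL (Fin 2) ℝ)).comp continuous_fst
      have : {z : ℍ × ℍ | γ • z.1 ≠ z.2} ∈ 𝓝 (τ₁, τ₂) :=
        (isOpen_ne_fun hc continuous_snd).mem_nhds h
      filter_upwards [Filter.eventually_smallSets_subset.2 this] with V hV _ z hz using hV hz
  have hall := ((Filter.eventually_all_finite hfin).2 fun γ _ => hloc γ).and
    (Filter.eventually_smallSets_subset.2 (prod_mem_nhds hτK hτL))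
  obtain ⟨s, hs, hall⟩ := Filter.eventually_smallSets.1 hall
  obtain ⟨V₁, V₂, h₁, hτ₁, h₂, hτ₂, hV⟩ := mem_nhds_prod_iff'.1 hs
  refine ⟨V₁, V₂, h₁, h₂, hτ₁, hτ₂, fun γ z hz hγz => ?_⟩
  by_contra hne
  obtain ⟨hmove, hKL⟩ := hall (V₁ ×ˢ V₂) hV
  have hm : (z, γ • z) ∈ V₁ ×ˢ V₂ := ⟨hz, hγz⟩
  exact hmove ⟨Matrix.SpecialLinearGroup.mapGL ℝ γ, ⟨γ, rfl⟩⟩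
    ⟨γ • z, ⟨z, (hKL hm).1, rfl⟩, (hKL hm).2⟩ hne _ hm rfl

theorem exists_nhds_smul_eq_self_of_smul_mem (τ : ℍ) :
    ∃ V : Set ℍ, IsOpen V ∧ τ ∈ V ∧
      ∀ γ : SL(2, ℤ), ∀ z ∈ V, γ • z ∈ V → γ • τ = τ := by
  obtain ⟨V₁, V₂, h₁, h₂, hτ₁, hτ₂, hV⟩ := exists_nhds_smul_eq_of_smul_mem τ τ
  exact ⟨V₁ ∩ V₂, h₁.inter h₂, ⟨hτ₁, hτ₂⟩, fun γ z hz hγz => hV γ z hz.1 hγz.2⟩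

theorem exists_isCompact_smul_mem_or_lt_im (Γ : Subgroup SL(2, ℤ)) [Γ.FiniteIndex] (Y : ℝ) :
    ∃ K : Set ℍ, IsCompact K ∧ ∀ τ : ℍ,
      (∃ γ ∈ Γ, γ • τ ∈ K) ∨ ∃ g : SL(2, ℤ), Y < (g • τ).im := by
  obtain ⟨R, hR, -⟩ := Γ.exists_isComplement_right 1
  have hRfin : R.Finite := hR.finite_right_iff.2 inferInstance
  refine ⟨⋃ r ∈ R, (fun z => r • z) '' ModularGroup.truncatedFundamentalDomain Y,
    hRfin.isCompact_biUnion fun r _ =>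
      (ModularGroup.isCompact_truncatedFundamentalDomain Y).image (continuous_SL_smul r),
    fun τ => ?_⟩
  obtain ⟨g, hg⟩ := ModularGroup.exists_smul_mem_fd τ
  refine (lt_or_ge Y (g • τ).im).symm.imp (fun h => ?_) fun h => ⟨g, h⟩
  obtain ⟨⟨γ, r⟩, hgr⟩ := hR.surjective g⁻¹
  refine ⟨(γ : SL(2, ℤ))⁻¹, inv_mem γ.2, Set.mem_biUnion r.2 ⟨g • τ, ⟨hg, h⟩, ?_⟩⟩
  have hr : (r : SL(2, ℤ)) = (γ : SL(2, ℤ))⁻¹ * g⁻¹ := by rw [← hgr]; simp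
  simp only [hr, mul_smul, inv_smul_smul]

/-! ### Hauptmoduln -/

/-- Hauptmoduln for a subgroup `Γ` of the modular group: `IsPrincipalModulus` with the group in
`SL(2, ℤ)` instead of a set of real matrices. -/
structure IsHauptmodul (Γ : Subgroup SL(2, ℤ)) (f : ℍ → ℂ) : Prop where
  mdiff : MDifferentiable 𝓘(ℂ) 𝓘(ℂ) f
  inv : ∀ γ ∈ Γ, ∀ τ : ℍ, f (γ • τ) = f τ
  sep : ∀ τ₁ τ₂ : ℍ, f τ₁ = f τ₂ → ∃ γ ∈ Γ, γ • τ₁ = τ₂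
  cofinite : (Set.range f)ᶜ.Finite

theorem gammaPlus_one_eq_image (n : ℕ) :
    GammaPlus n {1} =
      (Matrix.SpecialLinearGroup.map (n := Fin 2) (Int.castRingHom ℝ)) ''
        (Gamma0 n : Set SL(2, ℤ)) := by
  ext g
  constructor
  · rintro ⟨e, rfl, a, b, c, d, hdet, hg⟩
    refine ⟨mkSL a b (c * n) d ?_, ?_, ?_⟩
    · simp only [Nat.cast_one, mul_one, Nat.div_one] at hdet
      linarith
    · exact mem_Gamma0_iff_dvd.2 (by simp)
    · ext i j
      rw [hg]
      fin_cases i <;> fin_cases j <;> simp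
  · rintro ⟨γ, hγ, rfl⟩
    obtain ⟨c, hc⟩ := mem_Gamma0_iff_dvd.1 hγ
    refine ⟨1, rfl, γ 0 0, γ 0 1, c, γ 1 1, ?_, ?_⟩
    · have hdet := SL_det γ
      rw [hc] at hdet
      simp only [Nat.cast_one, mul_one, Nat.div_one]
      linarith
    · ext i j
      fin_cases i <;> fin_cases j <;> simp [hc, mul_comm]

theorem isPrincipalModulus_gammaPlus_iff (n : ℕ) (f : ℍ → ℂ) :
    IsPrincipalModulus (GammaPlus n {1}) f ↔ IsHauptmodul (Gamma0 n) f := by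
  have hsmul : ∀ (γ : SL(2, ℤ)) (τ : ℍ),
      (Matrix.SpecialLinearGroup.map (n := Fin 2) (Int.castRingHom ℝ) γ) • τ = γ • τ := by
    intro γ τ
    ext
    rw [coe_specialLinearGroup_apply, coe_specialLinearGroup_apply]
    simp
  rw [IsPrincipalModulus, gammaPlus_one_eq_image]
  simp only [Set.forall_mem_image, Set.exists_mem_image, hsmul]
  exact ⟨fun h => ⟨h.1, h.2.1, h.2.2.1, h.2.2.2⟩, fun h => ⟨h.1, h.2, h.3, h.4⟩⟩

theorem isOpenMap_of_mdifferentiable {f : ℍ → ℂ} (hf : MDifferentiable 𝓘(ℂ) 𝓘(ℂ) f)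
    (hne : ∃ z w, f z ≠ f w) : IsOpenMap f := by
  intro V hV
  have hpre : IsPreconnected {z : ℂ | 0 < z.im} := (convex_halfSpace_im_gt 0).isPreconnected
  have han : AnalyticOnNhd ℂ (f ∘ ofComplex) {z : ℂ | 0 < z.im} :=
    (UpperHalfPlane.mdifferentiable_iff.1 hf).analyticOnNhd
      (isOpen_lt continuous_const Complex.continuous_im)
  rcases han.is_constant_or_isOpen hpre with ⟨w, hw⟩ | hopen
  · obtain ⟨z, z', hz⟩ := hne
    have hz₁ := hw z z.im_pos
    have hz₂ := hw z' z'.im_pos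
    simp only [Function.comp_apply, ofComplex_apply] at hz₁ hz₂
    exact absurd (hz₁.trans hz₂.symm) hz
  · have himage := hopen (UpperHalfPlane.coe '' V) (by rintro _ ⟨z, -, rfl⟩; exact z.im_pos)
      (isOpenEmbedding_coe.isOpenMap V hV)
    rwa [Set.image_image, show (fun x : ℍ => (f ∘ ofComplex) (x : ℂ)) = f by
      ext; simp [ofComplex_apply]] at himage

/-! ### Homomorphisms killing elliptic and parabolic elements -/

/-- The group of integral upper triangular matrices, the stabilizer of the cusp `∞`. -/
def upperTriangular : Subgroup SL(2, ℤ) where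
  carrier := {g | g 1 0 = 0}
  mul_mem' {a b} ha hb := by simp_all [SL_mul_apply]
  one_mem' := by simp
  inv_mem' {a} ha := by simp_all [SL_inv_apply_one_zero]

theorem mem_upperTriangular {g : SL(2, ℤ)} : g ∈ upperTriangular ↔ g 1 0 = 0 := Iff.rfl

theorem im_smul_of_mem_upperTriangular {g : SL(2, ℤ)} (hg : g ∈ upperTriangular) (τ : ℍ) :
    (g • τ).im = τ.im := by
  rw [mem_upperTriangular] at hg
  have hdet := SL_det g
  rw [hg, mul_zero, sub_zero] at hdet
  rw [im_SL_smul, hg]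
  rcases Int.eq_one_or_neg_one_of_mul_eq_one' hdet with h | h <;> simp [h]

section EquivariantSection

variable {Γ : Subgroup SL(2, ℤ)} {f : ℍ → ℂ} {A : Type*} [Group A] {φ : Γ →* A}

/-- `s` is locally constant and `φ`-equivariant on `f ⁻¹' W`. For a Hauptmodul `f` this is a
trivialization over `W` of the `A`-covering of `Γ \ ℍ` given by `φ`. -/
structure IsEquivariantSection (f : ℍ → ℂ) (φ : Γ →* A) (W : Set ℂ) (s : ℍ → A) : Prop where
  smul_eq : ∀ γ : Γ, ∀ z, f z ∈ W → s ((γ : SL(2, ℤ)) • z) = φ γ * s z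
  eventually_eq : ∀ z, f z ∈ W → ∀ᶠ w in 𝓝 z, s w = s z

namespace IsEquivariantSection

theorem mono {V W : Set ℂ} {s : ℍ → A} (h : IsEquivariantSection f φ W s) (hVW : V ⊆ W) :
    IsEquivariantSection f φ V s :=
  ⟨fun γ z hz => h.smul_eq γ z (hVW hz), fun z hz => h.eventually_eq z (hVW hz)⟩

theorem mul_right {W : Set ℂ} {s : ℍ → A} (h : IsEquivariantSection f φ W s) (a : A) :
    IsEquivariantSection f φ W fun z => s z * a :=
  ⟨fun γ z hz => by rw [h.smul_eq γ z hz, mul_assoc],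
    fun z hz => (h.eventually_eq z hz).mono fun w hw => by rw [hw]⟩

end IsEquivariantSection

theorem exists_isEquivariantSection_of_cover {ι : Type*} (V : ι → Set ℍ) (W : Set ℂ)
    (hV : ∀ i, IsOpen (V i))
    (hcover : ∀ z, f z ∈ W → ∃ i, ∃ γ : Γ, (γ : SL(2, ℤ)) • z ∈ V i)
    (hker : ∀ i j, ∀ γ : Γ, ∀ z ∈ V i, (γ : SL(2, ℤ)) • z ∈ V j → φ γ = 1) :
    ∃ s, IsEquivariantSection f φ W s := by
  classical
  let s : ℍ → A := fun z => if h : ∃ γ : Γ, ∃ i, (γ : SL(2, ℤ)) • z ∈ V i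
    then (φ h.choose)⁻¹ else 1
  have hs : ∀ z i, ∀ γ : Γ, (γ : SL(2, ℤ)) • z ∈ V i → s z = (φ γ)⁻¹ := by
    intro z i γ hγ
    have h : ∃ γ : Γ, ∃ i, (γ : SL(2, ℤ)) • z ∈ V i := ⟨γ, i, hγ⟩
    simp only [s, dif_pos h]
    obtain ⟨j, hj⟩ := h.choose_spec
    have hφ := hker i j (h.choose * γ⁻¹) _ hγ (by rw [← mul_smul]; simpa using hj)
    rw [map_mul, map_inv, mul_inv_eq_one] at hφ
    rw [hφ]
  refine ⟨s, fun γ z hz => ?_, fun z hz => ?_⟩ <;> obtain ⟨i, δ, hδ⟩ := hcover z hz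
  · rw [hs z i δ hδ, hs _ i (δ * γ⁻¹) (by rw [← mul_smul]; simpa using hδ)]
    simp
  · filter_upwards [((hV i).preimage (continuous_SL_smul δ)).mem_nhds hδ] with w hw
    rw [hs w i δ hw, hs z i δ hδ]

namespace IsHauptmodul

theorem continuous (hf : IsHauptmodul Γ f) : Continuous f := hf.mdiff.continuous

theorem isOpenMap (hf : IsHauptmodul Γ f) : IsOpenMap f := by
  refine isOpenMap_of_mdifferentiable hf.mdiff ?_
  by_contra! h
  have hfin : (Set.range f).Finite :=
    (Set.finite_singleton (f I)).subset (by rintro _ ⟨z, rfl⟩; exact h z I)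
  exact Set.infinite_univ (α := ℂ) (by simpa using hfin.union hf.cofinite)

theorem inv_mul_eq_of_isPreconnected (hf : IsHauptmodul Γ f) {W : Set ℂ} {s t : ℍ → A}
    (hW : IsOpen W) (hconn : IsPreconnected (W \ (Set.range f)ᶜ))
    (hs : IsEquivariantSection f φ W s) (ht : IsEquivariantSection f φ W t) {z w : ℍ}
    (hz : f z ∈ W) (hw : f w ∈ W) : (t z)⁻¹ * s z = (t w)⁻¹ * s w := by
  have hfiber : ∀ x y, f x ∈ W → f x = f y → (t x)⁻¹ * s x = (t y)⁻¹ * s y := by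
    intro x y hx hxy
    obtain ⟨γ, hγ, rfl⟩ := hf.sep x y hxy
    rw [hs.smul_eq ⟨γ, hγ⟩ x hx, ht.smul_eq ⟨γ, hγ⟩ x hx]
    group
  have hquot := hconn.induction₂
    (fun c d => ∀ x y, f x = c → f y = d → (t x)⁻¹ * s x = (t y)⁻¹ * s y)
    ?_ ?_ ?_ ⟨hz, not_not_intro ⟨z, rfl⟩⟩ ⟨hw, not_not_intro ⟨w, rfl⟩⟩
  · exact hquot z w rfl rfl
  · rintro c ⟨hc, hcr⟩
    obtain ⟨x₀, rfl⟩ := not_not.1 hcr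
    have himage := hf.isOpenMap.image_mem_nhds
      ((hs.eventually_eq x₀ hc).and (ht.eventually_eq x₀ hc))
    refine mem_nhdsWithin_of_mem_nhds ?_
    filter_upwards [himage, hW.mem_nhds hc] with d hd hdW x y hx hy
    obtain ⟨u, ⟨hsu, htu⟩, rfl⟩ := hd
    rw [← hfiber x₀ x hc hx.symm, ← hfiber u y hdW hy.symm, hsu, htu]
  · rintro c d e _ ⟨_, hdr⟩ _ hcd hde x y hx hy
    obtain ⟨u, rfl⟩ := not_not.1 hdr
    rw [hcd x u hx rfl, hde u y rfl hy]
  · intro c d _ _ h x y hx hy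
    rw [h y x hy hx]

theorem exists_isEquivariantSection_union (hf : IsHauptmodul Γ f) {V W : Set ℂ}
    (hV : IsOpen V) (hW : IsOpen W) (hconn : IsPreconnected ((V ∩ W) \ (Set.range f)ᶜ))
    (hVs : ∃ s, IsEquivariantSection f φ V s) (hWs : ∃ s, IsEquivariantSection f φ W s) :
    ∃ s, IsEquivariantSection f φ (V ∪ W) s := by
  classical
  obtain ⟨s, hs⟩ := hVs
  obtain ⟨t, ht, hts⟩ : ∃ t, IsEquivariantSection f φ W t ∧ ∀ z, f z ∈ V ∩ W → t z = s z := by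
    obtain ⟨t, ht⟩ := hWs
    by_cases hne : ∃ z, f z ∈ V ∩ W
    · obtain ⟨z₀, hz₀⟩ := hne
      refine ⟨_, ht.mul_right ((t z₀)⁻¹ * s z₀), fun z hz => ?_⟩
      rw [hf.inv_mul_eq_of_isPreconnected (hV.inter hW) hconn (hs.mono Set.inter_subset_left)
        (ht.mono Set.inter_subset_right) hz₀ hz]
      group
    · exact ⟨t, ht, fun z hz => absurd ⟨z, hz⟩ hne⟩
  refine ⟨fun z => if f z ∈ V then s z else t z, fun γ z hz => ?_, fun z hz => ?_⟩
  · simp only [hf.inv γ γ.2]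
    split_ifs with h
    · exact hs.smul_eq γ z h
    · exact ht.smul_eq γ z (hz.resolve_left h)
  · by_cases h : f z ∈ V
    · filter_upwards [hs.eventually_eq z h, (hV.preimage hf.continuous).mem_nhds h] with w hw hwV
      rw [if_pos h, if_pos (Set.mem_preimage.1 hwV), hw]
    · have hzW := hz.resolve_left h
      filter_upwards [ht.eventually_eq z hzW, (hW.preimage hf.continuous).mem_nhds hzW]
        with w hw hwW
      rw [if_neg h]
      split_ifs with hwV
      · rw [← hts w ⟨hwV, hwW⟩, hw]
      · exact hw

theorem exists_isEquivariantSection_nhds_of_mem_range (hf : IsHauptmodul Γ f)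
    (hell : ∀ γ : Γ, (∃ τ : ℍ, (γ : SL(2, ℤ)) • τ = τ) → φ γ = 1) {c : ℂ}
    (hc : c ∈ Set.range f) :
    ∃ W, IsOpen W ∧ c ∈ W ∧ ∃ s, IsEquivariantSection f φ W s := by
  obtain ⟨τ, rfl⟩ := hc
  obtain ⟨V, hV, hτV, hfix⟩ := exists_nhds_smul_eq_self_of_smul_mem τ
  refine ⟨f '' V, hf.isOpenMap V hV, ⟨τ, hτV, rfl⟩,
    exists_isEquivariantSection_of_cover (fun _ : Unit => V) _ (fun _ => hV) ?_
      fun _ _ γ z hz hγz => hell γ ⟨τ, hfix γ z hz hγz⟩⟩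
  rintro z ⟨w, hw, hwz⟩
  obtain ⟨γ, hγ, h⟩ := hf.sep z w hwz.symm
  exact ⟨(), ⟨γ, hγ⟩, by rwa [h]⟩

/- A point outside the range of `f` corresponds to cusps: near it `f` takes its values in the
`Γ`-orbits of the horoballs `{z | 1 < (q.out⁻¹ • z).im}`, one for each `q` in `Γ \ SL(2, ℤ) / B`,
and an element of `Γ` that moves one such horoball to meet another one is parabolic. -/
theorem exists_isEquivariantSection_nhds_of_notMem_range [Γ.FiniteIndex]
    (hf : IsHauptmodul Γ f)
    (hpar : ∀ γ : Γ, ∀ g : SL(2, ℤ), (g⁻¹ * γ * g) 1 0 = 0 → φ γ = 1) {c : ℂ}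
    (hc : c ∉ Set.range f) :
    ∃ W, IsOpen W ∧ c ∈ W ∧ ∃ s, IsEquivariantSection f φ W s := by
  obtain ⟨K, hK, hcov⟩ := exists_isCompact_smul_mem_or_lt_im Γ 1
  refine ⟨(f '' K)ᶜ, (hK.image hf.continuous).isClosed.isOpen_compl,
    fun ⟨z, _, hz⟩ => hc ⟨z, hz⟩, exists_isEquivariantSection_of_cover
    (fun q : DoubleCoset.Quotient (Γ : Set SL(2, ℤ)) (upperTriangular : Set SL(2, ℤ)) =>
      {z : ℍ | 1 < (q.out⁻¹ • z).im}) _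
    (fun q => isOpen_lt continuous_const (continuous_im.comp (continuous_SL_smul _)))
    (fun z hz => ?_) fun q r γ z hz hγz => ?_⟩
  · obtain ⟨g, hg⟩ := (hcov z).resolve_left
      fun ⟨δ, hδ, hδK⟩ => hz ⟨_, hδK, hf.inv δ hδ z⟩
    obtain ⟨h, k, hh, hk, hout⟩ := DoubleCoset.mk_out_eq_mul Γ upperTriangular g⁻¹
    refine ⟨DoubleCoset.mk Γ upperTriangular g⁻¹, ⟨h, hh⟩, ?_⟩
    have hsmul : (h * g⁻¹ * k)⁻¹ • h • z = k⁻¹ • g • z := by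
      rw [← mul_smul, ← mul_smul]
      congr 1
      group
    rwa [Set.mem_ofPred_eq, hout, hsmul, im_smul_of_mem_upperTriangular (inv_mem hk)]
  · rw [Set.mem_ofPred_eq] at hz hγz
    have hsmul : (r.out⁻¹ * γ * q.out) • q.out⁻¹ • z = r.out⁻¹ • (γ : SL(2, ℤ)) • z := by
      rw [← mul_smul, ← mul_smul]
      congr 1
      group
    have hupper := apply_one_zero_eq_zero_of_one_lt_im hz (γ := r.out⁻¹ * γ * q.out)
      (by rwa [hsmul])
    have hqr : q = r := by
      rw [← DoubleCoset.out_eq' _ _ q, ← DoubleCoset.out_eq' _ _ r]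
      refine (DoubleCoset.eq _ _ _ _).2 ⟨γ, γ.2, _, inv_mem (mem_upperTriangular.2 hupper), ?_⟩
      group
    subst hqr
    exact hpar γ _ hupper

theorem exists_isEquivariantSection_of_isBounded [Γ.FiniteIndex] (hf : IsHauptmodul Γ f)
    (hell : ∀ γ : Γ, (∃ τ : ℍ, (γ : SL(2, ℤ)) • τ = τ) → φ γ = 1)
    (hpar : ∀ γ : Γ, ∀ g : SL(2, ℤ), (g⁻¹ * γ * g) 1 0 = 0 → φ γ = 1) {K : Set ℂ}
    (hK : Bornology.IsBounded K) : ∃ s, IsEquivariantSection f φ K s := by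
  refine of_isBounded_of_glue (Q := fun W => ∃ s, IsEquivariantSection f φ W s)
    (fun V W hVW ⟨s, hs⟩ => ⟨s, hs.mono hVW⟩) (fun c => ?_) (fun V W hV hW hconv hVs hWs => ?_) hK
  · by_cases hc : c ∈ Set.range f
    · exact hf.exists_isEquivariantSection_nhds_of_mem_range hell hc
    · exact hf.exists_isEquivariantSection_nhds_of_notMem_range hpar hc
  · exact hf.exists_isEquivariantSection_union hV hW (isPreconnected_diff_of_convex
      (by simp [Complex.rank_real_complex]) (hV.inter hW) hconv hf.cofinite.countable) hVs hWs

theorem map_eq_one [Γ.FiniteIndex] (hf : IsHauptmodul Γ f) (φ : Γ →* A)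
    (hell : ∀ γ : Γ, (∃ τ : ℍ, (γ : SL(2, ℤ)) • τ = τ) → φ γ = 1)
    (hpar : ∀ γ : Γ, ∀ g : SL(2, ℤ), (g⁻¹ * γ * g) 1 0 = 0 → φ γ = 1) (γ : Γ) : φ γ = 1 := by
  obtain ⟨p⟩ : Joined (I : ℍ) ((γ : SL(2, ℤ)) • I) := PathConnectedSpace.joined _ _
  obtain ⟨s, hs⟩ := hf.exists_isEquivariantSection_of_isBounded hell hpar
    (isCompact_range (hf.continuous.comp p.continuous)).isBounded
  have hmem : ∀ t, f (p t) ∈ Set.range (f ∘ p) := fun t => ⟨t, rfl⟩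
  have hconst : IsLocallyConstant fun t => s (p t) := by
    rw [IsLocallyConstant.iff_eventually_eq]
    exact fun t => p.continuous.continuousAt.eventually (hs.eventually_eq _ (hmem t))
  have hends := hconst.apply_eq_of_isPreconnected isPreconnected_univ
    (Set.mem_univ 0) (Set.mem_univ 1)
  have hI : f I ∈ Set.range (f ∘ p) := ⟨0, congrArg f p.source⟩
  rw [p.source, p.target, hs.smul_eq γ I hI] at hends
  exact right_eq_mul.1 hends

end IsHauptmodul

end EquivariantSection

/-! ### Elliptic and parabolic residues -/

theorem trace_eq_add (γ : SL(2, ℤ)) : γ.1.trace = γ 0 0 + γ 1 1 := Matrix.trace_fin_two _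

theorem trace_conj (γ g : SL(2, ℤ)) : (g⁻¹ * γ * g).1.trace = γ.1.trace := by
  rw [mul_assoc, Matrix.SpecialLinearGroup.coe_mul, Matrix.trace_mul_comm,
    ← Matrix.SpecialLinearGroup.coe_mul, mul_assoc, mul_inv_cancel, mul_one]

theorem abs_trace_eq_two_of_apply_one_zero {γ : SL(2, ℤ)} (h : γ 1 0 = 0) :
    |γ.1.trace| = 2 := by
  have hdet := SL_det γ
  rw [h, mul_zero, sub_zero] at hdet
  rw [trace_eq_add]
  rcases Int.eq_one_or_neg_one_of_mul_eq_one' hdet with h | h <;> simp [h]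

theorem abs_trace_le_two_of_smul_eq_self {γ : SL(2, ℤ)} {τ : ℍ} (h : γ • τ = τ) :
    |γ.1.trace| ≤ 2 := by
  by_cases hc : γ 1 0 = 0
  · exact (abs_trace_eq_two_of_apply_one_zero hc).le
  have hdet : (Matrix.SpecialLinearGroup.mapGL ℝ γ).val.det = 1 := by
    rw [← Matrix.GeneralLinearGroup.val_det_apply, Matrix.SpecialLinearGroup.det_mapGL,
      Units.val_one]
  have hell : (Matrix.SpecialLinearGroup.mapGL ℝ γ).IsElliptic := by
    refine isElliptic_of_exists_smul_eq_self (by simp only [hdet, one_pos])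
      (fun hcenter => hc ?_) ⟨τ, h⟩
    obtain ⟨r, hr⟩ := Matrix.GeneralLinearGroup.mem_center_iff_val_mem_range_scalar.1 hcenter
    simpa using (congrFun₂ hr 1 0).symm
  have hdisc : (γ 0 0 + γ 1 1 : ℝ) ^ 2 < 2 ^ 2 := by
    rw [Matrix.GeneralLinearGroup.IsElliptic, Matrix.IsElliptic, Matrix.discr_fin_two, hdet,
      Matrix.trace_fin_two, sub_neg] at hell
    norm_num at hell ⊢
    exact hell
  rw [trace_eq_add]
  exact (sq_lt_sq₀ (abs_nonneg _) zero_le_two).1 (by rw [sq_abs]; exact_mod_cast hdisc) |>.le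

/-- The reduction modulo a divisor of the level of the lower right entry. -/
def lowerRightHom {M N : ℕ} (h : M ∣ N) : Gamma0 N →* (ZMod M)ˣ :=
  MonoidHom.toHomUnits ((ZMod.castHom h (ZMod M)).toMonoidHom.comp (Gamma0Map N))

theorem coe_lowerRightHom {M N : ℕ} (h : M ∣ N) (γ : Gamma0 N) :
    ((lowerRightHom h γ : (ZMod M)ˣ) : ZMod M) = ((γ : SL(2, ℤ)) 1 1 : ℤ) := by
  simp [lowerRightHom, Gamma0Map]

theorem lowerRightHom_surjective {M N : ℕ} (hN : N ≠ 0) (h : M ∣ N) :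
    Function.Surjective (lowerRightHom h) := by
  intro u
  have : NeZero N := ⟨hN⟩
  obtain ⟨v, rfl⟩ := ZMod.unitsMap_surjective h u
  obtain ⟨x, y, hxy⟩ := Nat.isCoprime_iff_coprime.2 (ZMod.val_coe_unit_coprime v)
  refine ⟨⟨mkSL x (-y) N (v : ZMod N).val (by linarith), Gamma0_mem.2 (by simp)⟩, ?_⟩
  ext
  rw [coe_lowerRightHom]
  simp [ZMod.unitsMap_val]

theorem lowerRightHom_sq_add_one {M N : ℕ} (h : M ∣ N) (γ : Gamma0 N) :
    (lowerRightHom h γ : ZMod M) ^ 2 + 1 = γ.1.1.trace * lowerRightHom h γ := by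
  have hc : ((γ.1 1 0 : ℤ) : ZMod M) = 0 :=
    Gamma0_mem.1 (Gamma0_le_Gamma0 h γ.2)
  have hdet := congrArg (Int.cast : ℤ → ZMod M) (SL_det γ.1)
  rw [coe_lowerRightHom, trace_eq_add]
  push_cast at hdet ⊢
  rw [hc] at hdet
  linear_combination -hdet

theorem IsHauptmodul.eq_top_of_forall_mem {N M : ℕ} (hN : N ≠ 0) (hM : M ∣ N) {f : ℍ → ℂ}
    (hf : IsHauptmodul (Gamma0 N) f) (H : Subgroup (ZMod M)ˣ)
    (hH : ∀ u : (ZMod M)ˣ, ∀ t : ℤ, |t| ≤ 2 → (u : ZMod M) ^ 2 + 1 = t * u → u ∈ H) :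
    H = ⊤ := by
  have : NeZero N := ⟨hN⟩
  have hmem : ∀ γ : Gamma0 N, |γ.1.1.trace| ≤ 2 → lowerRightHom hM γ ∈ H := fun γ hγ =>
    hH _ _ hγ (lowerRightHom_sq_add_one hM γ)
  refine (Subgroup.eq_top_iff' H).2 fun u => ?_
  obtain ⟨γ, rfl⟩ := lowerRightHom_surjective hN hM u
  rw [← QuotientGroup.eq_one_iff]
  refine hf.map_eq_one ((QuotientGroup.mk' H).comp (lowerRightHom hM))
    (fun δ ⟨τ, hτ⟩ => ?_) (fun δ g hg => ?_) γ
  · exact (QuotientGroup.eq_one_iff _).2 (hmem δ (abs_trace_le_two_of_smul_eq_self hτ))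
  · refine (QuotientGroup.eq_one_iff _).2 (hmem δ ?_)
    rw [← trace_conj δ.1 g, abs_trace_eq_two_of_apply_one_zero hg]

theorem mem_zpowers_neg_one {R : Type*} [Ring R] {u : Rˣ} :
    u ∈ Subgroup.zpowers (-1 : Rˣ) ↔ u = 1 ∨ u = -1 := by
  constructor
  · rintro ⟨n, rfl⟩
    exact n.even_or_odd.imp (fun h => h.neg_one_zpow) fun h => h.neg_one_zpow
  · rintro (rfl | rfl)
    · exact one_mem _
    · exact Subgroup.mem_zpowers _

theorem not_isHauptmodul_of_pow {N M D k w : ℕ} (hN : N ≠ 0) (hM : M ∣ N) (hD : D ∣ M)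
    (hH : ∀ u : ZMod M, ∀ t ∈ Finset.Icc (-2 : ℤ) 2, u ^ 2 + 1 = t * u →
      (ZMod.cast u : ZMod D) ^ k = 1 ∨ (ZMod.cast u : ZMod D) ^ k = -1)
    (hw : w.Coprime M) (hwk : ¬ ((w : ZMod D) ^ k = 1 ∨ (w : ZMod D) ^ k = -1)) (f : ℍ → ℂ) :
    ¬ IsHauptmodul (Gamma0 N) f := by
  intro hf
  let H : Subgroup (ZMod M)ˣ :=
    (Subgroup.zpowers (-1 : (ZMod D)ˣ)).comap ((powMonoidHom k).comp (ZMod.unitsMap hD))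
  have hmem : ∀ u : (ZMod M)ˣ, u ∈ H ↔
      (ZMod.cast (u : ZMod M) : ZMod D) ^ k = 1 ∨
        (ZMod.cast (u : ZMod M) : ZMod D) ^ k = -1 := by
    intro u
    rw [Subgroup.mem_comap, mem_zpowers_neg_one, Units.ext_iff, Units.ext_iff]
    simp [ZMod.unitsMap_val]
  have htop : H = ⊤ := hf.eq_top_of_forall_mem hN hM H fun u t ht hu =>
    (hmem u).2 (hH u t (Finset.mem_Icc.2 (abs_le.1 ht)) hu)
  have hwH := (hmem (ZMod.unitOfCoprime w hw)).1 (htop ▸ Subgroup.mem_top _)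
  rw [ZMod.coe_unitOfCoprime, ZMod.cast_natCast hD] at hwH
  exact hwk hwH

theorem pow_twelve_eq_one_of_sq_add_one_eq {R : Type*} [CommRing R] [IsDomain R] {u : R} {t : ℤ}
    (ht : |t| ≤ 2) (hu : u ^ 2 + 1 = t * u) : u ^ 12 = 1 := by
  obtain ⟨hge, hle⟩ := abs_le.1 ht
  interval_cases t <;> push_cast at hu
  · have hroot : (u + 1) ^ 2 = 0 := by linear_combination hu
    rw [eq_neg_of_add_eq_zero_left (pow_eq_zero_iff two_ne_zero |>.1 hroot)]
    norm_num
  · have hcube : u ^ 3 = 1 := by linear_combination (u - 1) * hu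
    rw [show 12 = 3 * 4 from rfl, pow_mul, hcube, one_pow]
  · have hsq : u ^ 2 = -1 := by linear_combination hu
    rw [show 12 = 2 * 6 from rfl, pow_mul, hsq]
    norm_num
  · have hcube : u ^ 3 = -1 := by linear_combination (u + 1) * hu
    rw [show 12 = 3 * 4 from rfl, pow_mul, hcube]
    norm_num
  · have hroot : (u - 1) ^ 2 = 0 := by linear_combination hu
    rw [sub_eq_zero.1 (pow_eq_zero_iff two_ne_zero |>.1 hroot), one_pow]

theorem IsHauptmodul.sub_one_dvd_twelve {N p : ℕ} (hN : N ≠ 0) (hp : p.Prime) (hpN : p ∣ N)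
    {f : ℍ → ℂ} (hf : IsHauptmodul (Gamma0 N) f) : p - 1 ∣ 12 := by
  have : Fact p.Prime := ⟨hp⟩
  have htop : (powMonoidHom 12 : (ZMod p)ˣ →* (ZMod p)ˣ).ker = ⊤ :=
    hf.eq_top_of_forall_mem hN hpN _ fun u t ht hu =>
      MonoidHom.mem_ker.2 (Units.ext (pow_twelve_eq_one_of_sq_add_one_eq ht hu))
  obtain ⟨g, hg⟩ := IsCyclic.exists_generator (α := (ZMod p)ˣ)
  rw [← ZMod.card_units, ← Nat.card_eq_fintype_card, ← orderOf_eq_card_of_forall_mem_zpowers hg]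
  exact orderOf_dvd_of_pow_eq_one (MonoidHom.mem_ker.1 (htop ▸ Subgroup.mem_top g))

theorem not_isHauptmodul_of_dvd {N M : ℕ} (hN : N ≠ 0) (hMN : M ∣ N)
    (hM : M ∈ [14, 15, 20, 21, 24, 26, 27, 32, 35, 39, 65, 91, 125]) (f : ℍ → ℂ) :
    ¬ IsHauptmodul (Gamma0 N) f := by
  obtain ⟨D, k, w, hD, hw, hwk, hH⟩ : ∃ D k w : ℕ, D ∣ M ∧ w.Coprime M ∧
      ¬ ((w : ZMod D) ^ k = 1 ∨ (w : ZMod D) ^ k = -1) ∧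
      ∀ u : ZMod M, ∀ t ∈ Finset.Icc (-2 : ℤ) 2, u ^ 2 + 1 = t * u →
        (ZMod.cast u : ZMod D) ^ k = 1 ∨ (ZMod.cast u : ZMod D) ^ k = -1 := by
    simp only [List.mem_cons, List.not_mem_nil, or_false] at hM
    rcases hM with rfl | rfl | rfl | rfl | rfl | rfl | rfl | rfl | rfl | rfl | rfl | rfl | rfl
    · exact ⟨14, 1, 3, by decide +kernel⟩
    · exact ⟨15, 1, 2, by decide +kernel⟩
    · exact ⟨20, 2, 3, by decide +kernel⟩
    · exact ⟨21, 3, 2, by decide +kernel⟩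
    · exact ⟨12, 1, 5, by decide +kernel⟩
    · exact ⟨26, 2, 3, by decide +kernel⟩
    · exact ⟨27, 3, 2, by decide +kernel⟩
    · exact ⟨32, 4, 3, by decide +kernel⟩
    · exact ⟨35, 1, 2, by decide +kernel⟩
    · exact ⟨39, 3, 2, by decide +kernel⟩
    · exact ⟨65, 2, 2, by decide +kernel⟩
    · exact ⟨91, 3, 2, by decide +kernel⟩
    · exact ⟨125, 10, 2, by decide +kernel⟩
  exact not_isHauptmodul_of_pow hN hMN hD hH hw hwk f

/-! ### Modular symbols -/

/-- A Manin symbol: a function of the bottom rows `(c, d)` of `SL(2, ℤ)` satisfying the two-term and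
three-term Manin relations, so that it assigns a value to the oriented geodesic from `g ∞` to
`g 0` and these values add up to zero around every triangle of the Farey tessellation. -/
structure IsManinSymbol (f : ℤ → ℤ → ℤ) : Prop where
  swap : ∀ c d, f d (-c) = -f c d
  add : ∀ c d, IsCoprime c d → f c d = f (c + d) d + f c (c + d)

/-- The value on the path from `∞` to the cusp `p / q` that runs through the convergents of a
continued fraction of `p / q`: the previous convergent `r / s` is the one with `p s - r q = 1` and
`0 ≤ s < q`. -/
def cuspSymbol (f : ℤ → ℤ → ℤ) (p : ℤ) (q : ℕ) : ℤ :=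
  if _h : q = 0 then 0 else
    cuspSymbol f ((p * ((p : ZMod q)⁻¹).val - 1) / q) ((p : ZMod q)⁻¹).val
      - f q ((p : ZMod q)⁻¹).val
  termination_by q
  decreasing_by
    have : NeZero q := ⟨_h⟩
    exact ZMod.val_lt _

theorem cuspSymbol_zero (f : ℤ → ℤ → ℤ) (p : ℤ) : cuspSymbol f p 0 = 0 := by
  rw [cuspSymbol, dif_pos rfl]

theorem cuspSymbol_of_lt (f : ℤ → ℤ → ℤ) {p r : ℤ} {q s : ℕ} (h : p * s - r * q = 1)
    (hs : s < q) : cuspSymbol f p q = cuspSymbol f r s - f q s := by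
  have hq : q ≠ 0 := by omega
  have hinv : ((p : ZMod q)⁻¹).val = s := by
    have hmul : (p : ZMod q) * (s : ZMod q) = 1 := by
      have hcast := congrArg (Int.cast : ℤ → ZMod q) h
      push_cast at hcast
      simpa using hcast
    rw [ZMod.inv_eq_of_mul_eq_one _ _ _ hmul, ZMod.val_natCast, Nat.mod_eq_of_lt hs]
  rw [cuspSymbol, dif_neg hq, hinv, show p * s - 1 = r * q by linarith,
    Int.mul_ediv_cancel _ (by exact_mod_cast hq)]

/-- The value at the cusp `g ∞`. At `∞` itself the sign is `0`, and so is the value. -/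
def symbolAt (f : ℤ → ℤ → ℤ) (g : SL(2, ℤ)) : ℤ :=
  cuspSymbol f ((g 1 0).sign * g 0 0) (g 1 0).natAbs

theorem symbolAt_of_apply_one_zero (f : ℤ → ℤ → ℤ) {g : SL(2, ℤ)} (h : g 1 0 = 0) :
    symbolAt f g = 0 := by
  rw [symbolAt, h, Int.natAbs_zero, cuspSymbol_zero]

theorem symbolAt_of_apply_one_zero_eq (f : ℤ → ℤ → ℤ) {g : SL(2, ℤ)} {q : ℕ} (h : g 1 0 = q) :
    symbolAt f g = cuspSymbol f (g 0 0) q := by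
  rw [symbolAt, h, Int.natAbs_natCast]
  rcases q.eq_zero_or_pos with rfl | hq
  · rw [cuspSymbol_zero, cuspSymbol_zero]
  · rw [Int.sign_eq_one_of_pos (by exact_mod_cast hq), one_mul]

theorem symbolAt_neg (f : ℤ → ℤ → ℤ) (g : SL(2, ℤ)) : symbolAt f (-g) = symbolAt f g := by
  simp [symbolAt]

theorem symbolAt_mul_of_apply_one_zero (f : ℤ → ℤ → ℤ) (g : SL(2, ℤ)) {u : SL(2, ℤ)}
    (hu : u 1 0 = 0) : symbolAt f (g * u) = symbolAt f g := by
  have hdet := SL_det u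
  rw [hu, mul_zero, sub_zero] at hdet
  rcases Int.eq_one_or_neg_one_of_mul_eq_one hdet with h | h <;>
    simp [symbolAt, SL_mul_apply, hu, h]

theorem mul_S_apply_zero (g : SL(2, ℤ)) (i : Fin 2) : (g * ModularGroup.S) i 0 = g i 1 := by
  rw [SL_mul_apply, ModularGroup.coe_S]
  simp

theorem mul_S_apply_one (g : SL(2, ℤ)) (i : Fin 2) : (g * ModularGroup.S) i 1 = -g i 0 := by
  rw [SL_mul_apply, ModularGroup.coe_S]
  simp

section ManinSymbol

variable {f : ℤ → ℤ → ℤ} (hf : IsManinSymbol f)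
include hf

theorem IsManinSymbol.apply_neg_neg (c d : ℤ) : f (-c) (-d) = f c d := by
  rw [hf.swap, hf.swap, neg_neg]

theorem IsManinSymbol.cuspSymbol_sub_cuspSymbol {p r : ℤ} {q s : ℕ} (h : p * s - r * q = 1) :
    cuspSymbol f r s - cuspSymbol f p q = f q s := by
  induction s using Nat.strong_induction_on generalizing p r q with
  | _ s ih =>
    by_cases hs : s < q
    · rw [cuspSymbol_of_lt f h hs]
      ring
    obtain ⟨t, rfl⟩ := Nat.exists_eq_add_of_le (not_lt.1 hs)
    push_cast at h
    rcases q.eq_zero_or_pos with rfl | hq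
    · obtain ⟨rfl, ht⟩ | ⟨-, ht⟩ := Int.mul_eq_one_iff_eq_one_or_neg_one.1
        (show p * t = 1 by simpa using h)
      · obtain rfl : t = 1 := by exact_mod_cast ht
        have hswap := hf.swap (-1) 0
        have hneg := hf.apply_neg_neg 1 0
        rw [neg_neg] at hswap
        rw [neg_zero] at hneg
        rw [cuspSymbol_zero, cuspSymbol_of_lt f (r := -1) (s := 0) (by simp) (by simp),
          cuspSymbol_zero]
        push_cast
        linarith
      · omega
    · have hshort := ih t (by omega) (p := p) (r := r - p) (q := q) (by linarith)
      have hstep : cuspSymbol f r (q + t) = cuspSymbol f (r - p) t - f (q + t : ℕ) t :=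
        cuspSymbol_of_lt f (by push_cast; linarith) (by omega)
      have hadd := hf.add q t ⟨p - r, p, by linarith⟩
      push_cast at hstep ⊢
      linarith

theorem symbolAt_mul_S_sub_of_nonneg {g : SL(2, ℤ)} (hc : 0 ≤ g 1 0) (hd : 0 ≤ g 1 1) :
    symbolAt f (g * ModularGroup.S) - symbolAt f g = f (g 1 0) (g 1 1) := by
  obtain ⟨q, hq⟩ := Int.eq_ofNat_of_zero_le hc
  obtain ⟨s, hs⟩ := Int.eq_ofNat_of_zero_le hd
  have hdet := SL_det g
  rw [hq, hs] at hdet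
  rw [symbolAt_of_apply_one_zero_eq f hq,
    symbolAt_of_apply_one_zero_eq f ((mul_S_apply_zero g 1).trans hs), mul_S_apply_zero,
    hf.cuspSymbol_sub_cuspSymbol hdet, hq, hs]

theorem symbolAt_mul_S_sub (g : SL(2, ℤ)) :
    symbolAt f (g * ModularGroup.S) - symbolAt f g = f (g 1 0) (g 1 1) := by
  wlog hc : 0 ≤ g 1 0 generalizing g
  · have h := this (-g) (by simpa using (not_le.1 hc).le)
    rw [neg_mul, symbolAt_neg, symbolAt_neg] at h
    simpa [hf.apply_neg_neg] using h
  rcases le_total 0 (g 1 1) with hd | hd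
  · exact symbolAt_mul_S_sub_of_nonneg hf hc hd
  · have hSS : -(g * ModularGroup.S) * ModularGroup.S = g := by
      rw [← mul_neg, ← ModularGroup.S_inv, inv_mul_cancel_right]
    have h := symbolAt_mul_S_sub_of_nonneg hf (g := -(g * ModularGroup.S))
      (by rwa [Matrix.SpecialLinearGroup.coe_neg, Matrix.neg_apply, mul_S_apply_zero, neg_nonneg])
      (by rwa [Matrix.SpecialLinearGroup.coe_neg, Matrix.neg_apply, mul_S_apply_one, neg_neg])
    rw [hSS, symbolAt_neg, Matrix.SpecialLinearGroup.coe_neg, Matrix.neg_apply, Matrix.neg_apply,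
      mul_S_apply_zero, mul_S_apply_one, hf.swap, hf.apply_neg_neg] at h
    linarith

end ManinSymbol

theorem eq_apply_one_of_mul_S_of_mul_T {α : Type*} {F : SL(2, ℤ) → α}
    (hS : ∀ g, F (g * ModularGroup.S) = F g) (hT : ∀ g, F (g * ModularGroup.T) = F g)
    (g : SL(2, ℤ)) : F g = F 1 := by
  have hg : g ∈ Subgroup.closure {ModularGroup.S, ModularGroup.T} := by
    rw [SpecialLinearGroup.SL2Z_generators]
    exact Subgroup.mem_top g
  have hmul : ∀ y ∈ ({ModularGroup.S, ModularGroup.T} : Set SL(2, ℤ)), ∀ x, F (x * y) = F x := by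
    rintro y (rfl | rfl)
    exacts [hS, hT]
  induction hg using Subgroup.closure_induction_right with
  | one => rfl
  | mul_right x _ y hy ih => rw [hmul y hy, ih]
  | mul_inv_cancel x _ y hy ih => rw [← hmul y hy, inv_mul_cancel_right, ih]

section InvariantSymbol

variable {f : ℤ → ℤ → ℤ} (hf : IsManinSymbol f)
include hf

theorem symbolAt_mul {γ : SL(2, ℤ)}
    (hγ : ∀ g : SL(2, ℤ), f ((γ * g) 1 0) ((γ * g) 1 1) = f (g 1 0) (g 1 1)) (g : SL(2, ℤ)) :
    symbolAt f (γ * g) = symbolAt f γ + symbolAt f g := by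
  have hone : symbolAt f 1 = 0 := symbolAt_of_apply_one_zero f (by simp)
  suffices symbolAt f (γ * g) - symbolAt f g = symbolAt f (γ * 1) - symbolAt f 1 by
    rw [mul_one, hone] at this
    linarith
  refine eq_apply_one_of_mul_S_of_mul_T (F := fun x => symbolAt f (γ * x) - symbolAt f x)
    (fun x => ?_) (fun x => ?_) g
  · have hx := symbolAt_mul_S_sub hf x
    have hγx := symbolAt_mul_S_sub hf (γ * x)
    rw [hγ, mul_assoc] at hγx
    linarith
  · have hT : ModularGroup.T 1 0 = 0 := by simp [ModularGroup.coe_T]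
    rw [← mul_assoc, symbolAt_mul_of_apply_one_zero f _ hT, symbolAt_mul_of_apply_one_zero f _ hT]

variable {Γ : Subgroup SL(2, ℤ)}
  (hΓ : ∀ γ ∈ Γ, ∀ g : SL(2, ℤ), f ((γ * g) 1 0) ((γ * g) 1 1) = f (g 1 0) (g 1 1))

/-- The period homomorphism of a `Γ`-invariant Manin symbol, written multiplicatively. -/
def symbolHom : Γ →* Multiplicative ℤ where
  toFun γ := Multiplicative.ofAdd (symbolAt f γ)
  map_one' := by
    rw [OneMemClass.coe_one, symbolAt_of_apply_one_zero f (by simp), ofAdd_zero]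
  map_mul' x y := by rw [Subgroup.coe_mul, symbolAt_mul hf (hΓ x x.2), ofAdd_add]

theorem symbolHom_eq_one_iff (γ : Γ) : symbolHom hf hΓ γ = 1 ↔ symbolAt f γ = 0 := ofAdd_eq_one

theorem symbolHom_eq_one_of_conj (γ : Γ) (g : SL(2, ℤ)) (hg : (g⁻¹ * γ * g) 1 0 = 0) :
    symbolHom hf hΓ γ = 1 := by
  have hmul := symbolAt_mul hf (hΓ γ γ.2) g
  have hinv := symbolAt_mul_of_apply_one_zero f g hg
  rw [← mul_assoc, mul_inv_cancel_left] at hinv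
  rw [symbolHom_eq_one_iff]
  linarith

end InvariantSymbol

theorem isOfFinOrder_of_smul_eq_self {γ : SL(2, ℤ)} {τ : ℍ} (h : γ • τ = τ) :
    IsOfFinOrder γ := by
  let ψ := (Matrix.SpecialLinearGroup.mapGL (n := Fin 2) (R := ℤ) ℝ).rangeRestrict
  have hψ : Function.Injective ψ := MonoidHom.rangeRestrict_injective_iff.2
    Matrix.SpecialLinearGroup.mapGL_injective
  rw [← hψ.isOfFinOrder_iff]
  by_contra hinf
  have hfin := ProperlyDiscontinuousSMul.finite_disjoint_inter_image
    (Γ := (Matrix.SpecialLinearGroup.mapGL (n := Fin 2) (R := ℤ) ℝ).range)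
    (isCompact_singleton (x := τ)) (isCompact_singleton (x := τ))
  refine Set.infinite_range_of_injective (injective_pow_iff_not_isOfFinOrder.2 hinf)
    (hfin.subset ?_)
  rintro _ ⟨n, rfl⟩
  have hpow : ψ γ ^ n • τ = τ := pow_mem (show ψ γ ∈ MulAction.stabilizer _ τ from h) n
  exact ⟨τ, ⟨τ, rfl, hpow⟩, rfl⟩

theorem IsHauptmodul.symbolAt_eq_zero {Γ Δ : Subgroup SL(2, ℤ)} [Γ.FiniteIndex] {F : ℍ → ℂ}
    (hF : IsHauptmodul Γ F) (hle : Γ ≤ Δ) {f : ℤ → ℤ → ℤ} (hf : IsManinSymbol f)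
    (hΔ : ∀ γ ∈ Δ, ∀ g : SL(2, ℤ), f ((γ * g) 1 0) ((γ * g) 1 1) = f (g 1 0) (g 1 1))
    {γ : SL(2, ℤ)} (hγ : γ ∈ Δ) : symbolAt f γ = 0 := by
  let φ := symbolHom hf hΔ
  have hell : ∀ δ : Γ, (∃ τ : ℍ, (δ : SL(2, ℤ)) • τ = τ) →
      (φ.comp (Subgroup.inclusion hle)) δ = 1 := fun δ ⟨τ, hτ⟩ =>
    (MonoidHom.isOfFinOrder _
      (Γ.subtype_injective.isOfFinOrder_iff.1 (isOfFinOrder_of_smul_eq_self hτ))).eq_one'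
  obtain ⟨k, hk, -, hmem⟩ := Γ.exists_pow_mem_of_index_ne_zero Subgroup.FiniteIndex.index_ne_zero γ
  have htriv : φ ⟨γ, hγ⟩ ^ k = 1 := by
    rw [← map_pow]
    exact hF.map_eq_one (φ.comp (Subgroup.inclusion hle)) hell
      (fun δ g hg => symbolHom_eq_one_of_conj hf hΔ (Subgroup.inclusion hle δ) g hg) ⟨γ ^ k, hmem⟩
  exact (symbolHom_eq_one_iff hf hΔ ⟨γ, hγ⟩).1 ((pow_eq_one_iff_left hk.ne').1 htriv)

/-! ### Periods of edge sums -/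

/-- The intersection number of a bottom row modulo `N` with a list of oriented edges of the quotient
of the Farey tessellation by `Gamma0 N`, each edge given by a bottom row. It is a Manin symbol when
the edges are those crossed by a closed path. -/
def edgeSum (N : ℕ) (L : List (ℤ × ℤ)) (c d : ℤ) : ℤ :=
  (L.map fun e => (if (N : ℤ) ∣ c * e.2 - d * e.1 then (1 : ℤ) else 0) -
    if (N : ℤ) ∣ c * e.1 + d * e.2 then 1 else 0).sum

theorem edgeSum_congr {N : ℕ} (L : List (ℤ × ℤ)) {u c d c' d' : ℤ} (hu : IsCoprime u N)
    (hc : (N : ℤ) ∣ c' - u * c) (hd : (N : ℤ) ∣ d' - u * d) :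
    edgeSum N L c' d' = edgeSum N L c d := by
  have hdvd : ∀ x y : ℤ, (N : ℤ) ∣ c' * x + d' * y ↔ (N : ℤ) ∣ c * x + d * y := by
    intro x y
    have hsum : (N : ℤ) ∣ (c' - u * c) * x + (d' - u * d) * y :=
      dvd_add (hc.mul_right x) (hd.mul_right y)
    rw [show c' * x + d' * y = u * (c * x + d * y) + ((c' - u * c) * x + (d' - u * d) * y) by ring,
      dvd_add_left hsum]
    exact ⟨hu.symm.dvd_of_dvd_mul_left, fun h => h.mul_left _⟩
  simp only [edgeSum, sub_eq_add_neg, ← mul_neg, hdvd]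

theorem edgeSum_swap (N : ℕ) (L : List (ℤ × ℤ)) (c d : ℤ) :
    edgeSum N L d (-c) = -edgeSum N L c d := by
  rw [edgeSum, edgeSum, List.sum_neg, List.map_map]
  refine congrArg List.sum (List.map_congr_left fun e _ => ?_)
  rw [Function.comp_apply, neg_sub, show d * e.2 - -c * e.1 = c * e.1 + d * e.2 by ring,
    show d * e.1 + -c * e.2 = -(c * e.2 - d * e.1) by ring]
  simp only [dvd_neg]

theorem edgeSum_eq_zero {N : ℕ} {L : List (ℤ × ℤ)} {c d : ℤ}
    (h : ∀ e ∈ L, ¬ (N : ℤ) ∣ c * e.2 - d * e.1 ∧ ¬ (N : ℤ) ∣ c * e.1 + d * e.2) :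
    edgeSum N L c d = 0 := by
  rw [edgeSum, List.map_congr_left (g := fun _ => (0 : ℤ)) fun e he => by
    rw [if_neg (h e he).1, if_neg (h e he).2, sub_zero]]
  simp

theorem exists_isCoprime_mul_of_dvd {N a b c d : ℤ} (hab : IsCoprime a b) (hcd : IsCoprime c d)
    (h : N ∣ c * b - d * a) : ∃ u, IsCoprime u N ∧ N ∣ c - u * a ∧ N ∣ d - u * b := by
  obtain ⟨x, y, hxy⟩ := hab
  obtain ⟨z, w, hzw⟩ := hcd
  obtain ⟨k, hk⟩ := h
  refine ⟨x * c + y * d, ⟨z * a + w * b, k * (y * z - x * w), ?_⟩, ⟨y * k, ?_⟩, ⟨-x * k, ?_⟩⟩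
  · linear_combination hxy + (x * a + y * b) * hzw - (y * z - x * w) * hk
  · linear_combination y * hk - c * hxy
  · linear_combination -x * hk - d * hxy

/-- The bottom rows `(c, d)` such that the edge `e`, up to orientation, is one of the three sides
`(c, d)`, `(c + d, d)`, `(c, c + d)` of a triangle. -/
def incidentEdges (e : ℤ × ℤ) : List (ℤ × ℤ) :=
  [e, (-e.2, e.1), (e.1 - e.2, e.2), (-e.2 - e.1, e.1), (e.1, e.2 - e.1), (-e.2, e.1 + e.2)]

theorem edgeSum_sides_eq_zero {N : ℕ} {L : List (ℤ × ℤ)} {c d : ℤ}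
    (h : ∀ e ∈ L.flatMap incidentEdges, ¬ (N : ℤ) ∣ c * e.2 - d * e.1) :
    edgeSum N L c d = 0 ∧ edgeSum N L (c + d) d = 0 ∧ edgeSum N L c (c + d) = 0 := by
  have hinc : ∀ e ∈ L, ∀ y ∈ incidentEdges e, ¬ (N : ℤ) ∣ c * y.2 - d * y.1 :=
    fun e he y hy => h y (List.mem_flatMap.2 ⟨e, he, hy⟩)
  simp only [incidentEdges, List.forall_mem_cons, List.not_mem_nil, false_implies,
    implies_true, and_true] at hinc
  refine ⟨edgeSum_eq_zero fun e he => ?_, edgeSum_eq_zero fun e he => ?_,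
    edgeSum_eq_zero fun e he => ?_⟩ <;>
  · have hnot := hinc e he
    ring_nf at hnot ⊢
    tauto

theorem isManinSymbol_edgeSum {N : ℕ} {L : List (ℤ × ℤ)}
    (h : ∀ e ∈ L.flatMap incidentEdges, e.1.gcd e.2 = 1 ∧
      edgeSum N L e.1 e.2 = edgeSum N L (e.1 + e.2) e.2 + edgeSum N L e.1 (e.1 + e.2)) :
    IsManinSymbol (edgeSum N L) where
  swap := edgeSum_swap N L
  add c d hcd := by
    by_cases hinc : ∃ e ∈ L.flatMap incidentEdges, (N : ℤ) ∣ c * e.2 - d * e.1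
    · obtain ⟨e, he, hdvd⟩ := hinc
      obtain ⟨u, hu, hc, hd⟩ :=
        exists_isCoprime_mul_of_dvd (Int.isCoprime_iff_gcd_eq_one.2 (h e he).1) hcd hdvd
      have hsum : (N : ℤ) ∣ (c + d) - u * (e.1 + e.2) := by
        rw [mul_add, add_sub_add_comm]
        exact dvd_add hc hd
      rw [edgeSum_congr L hu hc hd, edgeSum_congr L hu hsum hd, edgeSum_congr L hu hc hsum,
        (h e he).2]
    · push Not at hinc
      obtain ⟨hcd, hsum_right, hsum_left⟩ := edgeSum_sides_eq_zero hinc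
      rw [hcd, hsum_right, hsum_left, add_zero]

theorem edgeSum_mul_of_mem_gamma0 {N : ℕ} (L : List (ℤ × ℤ)) {γ : SL(2, ℤ)} (hγ : γ ∈ Gamma0 N)
    (g : SL(2, ℤ)) :
    edgeSum N L ((γ * g) 1 0) ((γ * g) 1 1) = edgeSum N L (g 1 0) (g 1 1) := by
  obtain ⟨k, hk⟩ := mem_Gamma0_iff_dvd.1 hγ
  have hdet := SL_det γ
  refine edgeSum_congr L (u := γ 1 1) ⟨γ 0 0, -γ 0 1 * k, ?_⟩ ⟨k * g 0 0, ?_⟩ ⟨k * g 0 1, ?_⟩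
  · linear_combination hdet + γ 0 1 * hk
  · rw [SL_mul_apply, hk]
    ring
  · rw [SL_mul_apply, hk]
    ring

theorem IsHauptmodul.cuspSymbol_eq_zero {M N : ℕ} (hN : N ≠ 0) (hMN : M ∣ N) {F : ℍ → ℂ}
    (hF : IsHauptmodul (Gamma0 N) F) {L : List (ℤ × ℤ)}
    (hL : ∀ e ∈ L.flatMap incidentEdges, e.1.gcd e.2 = 1 ∧
      edgeSum M L e.1 e.2 = edgeSum M L (e.1 + e.2) e.2 + edgeSum M L e.1 (e.1 + e.2))
    {a : ℤ} {c : ℕ} (hc : M ∣ c) (hac : IsCoprime a c) : cuspSymbol (edgeSum M L) a c = 0 := by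
  have : NeZero N := ⟨hN⟩
  obtain ⟨d, b, hdb⟩ := hac
  have hmem : mkSL a (-b) c d (by linarith) ∈ Gamma0 M :=
    mem_Gamma0_iff_dvd.2 (Int.natCast_dvd_natCast.2 hc)
  have hzero := hF.symbolAt_eq_zero (Gamma0_le_Gamma0 hMN) (isManinSymbol_edgeSum hL)
    (fun γ hγ => edgeSum_mul_of_mem_gamma0 L hγ) hmem
  rwa [symbolAt_of_apply_one_zero_eq _ (q := c) (by simp), mkSL_apply_zero_zero] at hzero

section ExceptionalLevels

/- At each of the levels `M = 36, 49, 50, 169` the list `L` is a closed path on the modular curve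
and `a / c` is a cusp, equivalent to `∞` modulo `Gamma0 M`, for which the closed image of the path
from `∞` to `a / c` has non-zero intersection number with `L`. The fractions `r / s` are the
convergents of `a / c`. -/
variable {N : ℕ} (hN : N ≠ 0) (f : ℍ → ℂ)
include hN

theorem not_isHauptmodul_of_thirtysix_dvd (h : 36 ∣ N) : ¬ IsHauptmodul (Gamma0 N) f := by
  intro hf
  have hzero := hf.cuspSymbol_eq_zero hN h (a := 5) (c := 72)
    (L := [(3, 2), (5, 2), (7, 2), (9, 2), (9, 11), (20, 11), (20, 31), (15, 31)])
    (by decide +kernel) (by norm_num) (by norm_num)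
  rw [cuspSymbol_of_lt _ (r := 2) (s := 29) (by norm_num) (by norm_num),
    cuspSymbol_of_lt _ (r := 1) (s := 15) (by norm_num) (by norm_num),
    cuspSymbol_of_lt _ (r := 0) (s := 1) (by norm_num) (by norm_num),
    cuspSymbol_of_lt _ (r := -1) (s := 0) (by norm_num) (by norm_num), cuspSymbol_zero] at hzero
  revert hzero
  decide +kernel

theorem not_isHauptmodul_of_fortynine_dvd (h : 49 ∣ N) : ¬ IsHauptmodul (Gamma0 N) f := by
  intro hf
  have hzero := hf.cuspSymbol_eq_zero hN h (a := 5) (c := 49)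
    (L := [(1, 11), (12, 11), (23, 11), (23, 34)])
    (by decide +kernel) (by norm_num) (by norm_num)
  rw [cuspSymbol_of_lt _ (r := 1) (s := 10) (by norm_num) (by norm_num),
    cuspSymbol_of_lt _ (r := 0) (s := 1) (by norm_num) (by norm_num),
    cuspSymbol_of_lt _ (r := -1) (s := 0) (by norm_num) (by norm_num), cuspSymbol_zero] at hzero
  revert hzero
  decide +kernel

theorem not_isHauptmodul_of_fifty_dvd (h : 50 ∣ N) : ¬ IsHauptmodul (Gamma0 N) f := by
  intro hf
  have hzero := hf.cuspSymbol_eq_zero hN h (a := 17) (c := 50)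
    (L := [(1, 18), (19, 18), (37, 18), (5, 18), (23, 18), (23, 41)])
    (by decide +kernel) (by norm_num) (by norm_num)
  rw [cuspSymbol_of_lt _ (r := 1) (s := 3) (by norm_num) (by norm_num),
    cuspSymbol_of_lt _ (r := 0) (s := 1) (by norm_num) (by norm_num),
    cuspSymbol_of_lt _ (r := -1) (s := 0) (by norm_num) (by norm_num), cuspSymbol_zero] at hzero
  revert hzero
  decide +kernel

theorem not_isHauptmodul_of_onehundredsixtynine_dvd (h : 169 ∣ N) :
    ¬ IsHauptmodul (Gamma0 N) f := by
  intro hf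
  have hzero := hf.cuspSymbol_eq_zero hN h (a := 123) (c := 338)
    (L := [(1, 31), (32, 31), (63, 31)])
    (by decide +kernel) (by norm_num) (by norm_num)
  rw [cuspSymbol_of_lt _ (r := 4) (s := 11) (by norm_num) (by norm_num),
    cuspSymbol_of_lt _ (r := 1) (s := 3) (by norm_num) (by norm_num),
    cuspSymbol_of_lt _ (r := 0) (s := 1) (by norm_num) (by norm_num),
    cuspSymbol_of_lt _ (r := -1) (s := 0) (by norm_num) (by norm_num), cuspSymbol_zero] at hzero
  revert hzero
  decide +kernel

end ExceptionalLevels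

/-! ### The list of levels -/

/-- The minimal levels, among those whose prime factors `p` satisfy `p - 1 ∣ 12`, for which
`Gamma0` has no Hauptmodul. -/
def obstructingLevels : List ℕ :=
  [14, 15, 20, 21, 24, 26, 27, 32, 35, 36, 39, 49, 50, 65, 91, 125, 169]

theorem not_isHauptmodul_of_mem_obstructingLevels {N M : ℕ} (hN : N ≠ 0) (hMN : M ∣ N)
    (hM : M ∈ obstructingLevels) (f : ℍ → ℂ) : ¬ IsHauptmodul (Gamma0 N) f := by
  have hsplit : ∀ M ∈ obstructingLevels, M = 36 ∨ M = 49 ∨ M = 50 ∨ M = 169 ∨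
      M ∈ [14, 15, 20, 21, 24, 26, 27, 32, 35, 39, 65, 91, 125] := by
    decide
  rcases hsplit M hM with rfl | rfl | rfl | rfl | hM
  · exact not_isHauptmodul_of_thirtysix_dvd hN f hMN
  · exact not_isHauptmodul_of_fortynine_dvd hN f hMN
  · exact not_isHauptmodul_of_fifty_dvd hN f hMN
  · exact not_isHauptmodul_of_onehundredsixtynine_dvd hN f hMN
  · exact not_isHauptmodul_of_dvd hN hMN hM f

section Sieve

variable {N : ℕ} (hprime : ∀ p, p.Prime → p ∣ N → p - 1 ∣ 12)
  (hN : ∀ M ∈ obstructingLevels, ¬ M ∣ N)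
include hprime hN

theorem dvd_of_forall_obstructingLevels_not_dvd : N ∣ 2 ^ 4 * 3 ^ 2 * 5 ^ 2 * 7 * 13 := by
  refine (Nat.dvd_iff_prime_pow_dvd_dvd _ _).2 fun p k hp hpk => ?_
  rcases k.eq_zero_or_pos with rfl | hk
  · rw [pow_zero]
    exact one_dvd _
  have hdvd : p - 1 ∣ 12 := hprime p hp ((dvd_pow_self p hk.ne').trans hpk)
  have hle : p ≤ 13 := by
    have := Nat.le_of_dvd (by norm_num) hdvd
    omega
  have hpow : ∀ m, p ^ (m + 1) ∈ obstructingLevels → p ^ k ∣ p ^ m := fun m hm =>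
    pow_dvd_pow p (not_lt.1 fun hlt => hN _ hm ((pow_dvd_pow p hlt).trans hpk))
  have hcases : ∀ p ≤ 13, p.Prime → p - 1 ∣ 12 → p = 2 ∨ p = 3 ∨ p = 5 ∨ p = 7 ∨ p = 13 := by
    decide
  rcases hcases p hle hp hdvd with rfl | rfl | rfl | rfl | rfl
  · exact (hpow 4 (by decide)).trans (by norm_num)
  · exact (hpow 2 (by decide)).trans (by norm_num)
  · exact (hpow 2 (by decide)).trans (by norm_num)
  · exact (hpow 1 (by decide)).trans (by norm_num)
  · exact (hpow 1 (by decide)).trans (by norm_num)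

theorem mem_of_forall_obstructingLevels_not_dvd :
    N ∈ [1, 2, 3, 4, 5, 6, 7, 8, 9, 10, 12, 13, 16, 18, 25] := by
  obtain ⟨_, _, h2357, h13, rfl⟩ :=
    Nat.dvd_mul.1 (dvd_of_forall_obstructingLevels_not_dvd hprime hN)
  obtain ⟨_, _, h235, h7, rfl⟩ := Nat.dvd_mul.1 h2357
  obtain ⟨_, _, h23, h5, rfl⟩ := Nat.dvd_mul.1 h235
  obtain ⟨_, _, h2, h3, rfl⟩ := Nat.dvd_mul.1 h23
  obtain ⟨a, ha, rfl⟩ := (Nat.dvd_prime_pow Nat.prime_two).1 h2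
  obtain ⟨b, hb, rfl⟩ := (Nat.dvd_prime_pow Nat.prime_three).1 h3
  obtain ⟨c, hc, rfl⟩ := (Nat.dvd_prime_pow Nat.prime_five).1 h5
  rw [← pow_one 7] at h7
  rw [← pow_one 13] at h13
  obtain ⟨d, hd, rfl⟩ := (Nat.dvd_prime_pow (by norm_num)).1 h7
  obtain ⟨e, he, rfl⟩ := (Nat.dvd_prime_pow (by norm_num)).1 h13
  have hdecide : ∀ x : Fin 5 × Fin 3 × Fin 3 × Fin 2 × Fin 2,
      let n := 2 ^ x.1.1 * 3 ^ x.2.1.1 * 5 ^ x.2.2.1.1 * 7 ^ x.2.2.2.1.1 * 13 ^ x.2.2.2.2.1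
      (∀ M ∈ obstructingLevels, ¬ M ∣ n) →
        n ∈ [1, 2, 3, 4, 5, 6, 7, 8, 9, 10, 12, 13, 16, 18, 25] := by
    decide +kernel
  exact hdecide (⟨a, by omega⟩, ⟨b, by omega⟩, ⟨c, by omega⟩, ⟨d, by omega⟩, ⟨e, by omega⟩) hN

end Sieve

theorem IsHauptmodul.level_mem {N : ℕ} (hN : 1 < N) {f : ℍ → ℂ}
    (hf : IsHauptmodul (Gamma0 N) f) :
    N ∈ ({2, 3, 4, 5, 6, 7, 8, 9, 10, 12, 13, 16, 18, 25} : Set ℕ) := by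
  have hN0 : N ≠ 0 := by omega
  have hmem : N ∈ [1, 2, 3, 4, 5, 6, 7, 8, 9, 10, 12, 13, 16, 18, 25] :=
    mem_of_forall_obstructingLevels_not_dvd (fun p hp hpN => hf.sub_one_dvd_twelve hN0 hp hpN)
      fun M hM hMN => not_isHauptmodul_of_mem_obstructingLevels hN0 hMN hM f hf
  simpa [hN.ne'] using hmem

/-! ### Functions of degree one -/

theorem compl_subset_of_isOpen_of_closure_subset {U D : Set ℂ} (hU : IsOpen U)
    (hne : U.Nonempty) (hD : D.Countable) (hcl : closure U ⊆ U ∪ D) : Dᶜ ⊆ U := by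
  have hpre : IsPreconnected Dᶜ := (hD.isConnected_compl_of_one_lt_rank
    (by rw [Complex.rank_real_complex]; exact Nat.one_lt_ofNat)).isPreconnected
  have hdense : Dense Dᶜ := hD.dense_compl ℝ
  by_contra hnot
  obtain ⟨c, hcD, hcU⟩ := Set.not_subset.1 hnot
  obtain ⟨z, hz, hzD⟩ := hdense.inter_open_nonempty U hU hne
  have hcover : Dᶜ ⊆ U ∪ (closure U)ᶜ := fun x hx =>
    (em (x ∈ closure U)).imp_left fun h => (hcl h).resolve_right hx
  obtain ⟨w, -, hwU, hw⟩ := hpre U (closure U)ᶜ hU isClosed_closure.isOpen_compl hcover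
    ⟨z, hzD, hz⟩ ⟨c, hcD, fun h => (hcl h).elim hcU hcD⟩
  exact hw (subset_closure hwU)

theorem exists_finite_forall_eq_mul {G : Type*} [Group G] (H : Subgroup G) [H.FiniteIndex] :
    ∃ R : Set G, R.Finite ∧ ∀ g, ∃ h ∈ H, ∃ r ∈ R, h * r = g := by
  obtain ⟨R, hR, -⟩ := H.exists_isComplement_right 1
  refine ⟨R, hR.finite_right_iff.2 inferInstance, fun g => ?_⟩
  obtain ⟨⟨h, r⟩, hhr⟩ := hR.surjective g
  exact ⟨h, h.2, r, r.2, hhr⟩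

/-- The finite limits of `t` at the cusps. -/
def cuspLimits (t : ℍ → ℂ) : Set ℂ :=
  {c | ∃ g : SL(2, ℤ), Filter.Tendsto (fun τ : ℍ => t (g • τ)) atImInfty (𝓝 c)}

/-- The map `Γ\ℍ → ℂ` induced by an invariant function `t` is proper over a neighbourhood of `c`:
the points with values near `c` can be moved by `Γ` into one compact set. -/
def IsProperOver (Γ : Subgroup SL(2, ℤ)) (t : ℍ → ℂ) (c : ℂ) : Prop :=
  ∃ V ∈ 𝓝 c, ∃ K : Set ℍ, IsCompact K ∧ ∀ τ, t τ ∈ V → ∃ γ ∈ Γ, γ • τ ∈ K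

/-- The values taken by `t` on at least two orbits of `Γ`. -/
def doubleValues (Γ : Subgroup SL(2, ℤ)) (t : ℍ → ℂ) : Set ℂ :=
  {c | ∃ τ₁ τ₂, t τ₁ = c ∧ t τ₂ = c ∧ ∀ γ ∈ Γ, γ • τ₁ ≠ τ₂}

section DegreeOne
variable {Γ : Subgroup SL(2, ℤ)} {t : ℍ → ℂ}

theorem finite_cuspLimits [Γ.FiniteIndex] (hinv : ∀ γ ∈ Γ, ∀ τ : ℍ, t (γ • τ) = t τ) :
    (cuspLimits t).Finite := by
  obtain ⟨R, hR, hRg⟩ := exists_finite_forall_eq_mul Γ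
  refine (hR.image fun r => Filter.limUnder atImInfty fun τ : ℍ => t (r • τ)).subset ?_
  rintro c ⟨g, hg⟩
  obtain ⟨γ, hγ, r, hr, rfl⟩ := hRg g
  simp only [mul_smul, hinv γ hγ] at hg
  exact ⟨r, hr, hg.limUnder_eq⟩

theorem isProperOver_of_notMem_cuspLimits [Γ.FiniteIndex]
    (hinv : ∀ γ ∈ Γ, ∀ τ : ℍ, t (γ • τ) = t τ)
    (hcusp : ∀ g : SL(2, ℤ), (∃ L, Filter.Tendsto (fun τ : ℍ => t (g • τ)) atImInfty (𝓝 L)) ∨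
      Filter.Tendsto (fun τ : ℍ => t (g • τ)) atImInfty (Bornology.cobounded ℂ))
    {c : ℂ} (hc : c ∉ cuspLimits t) : IsProperOver Γ t c := by
  have havoid (g : SL(2, ℤ)) : ∃ V ∈ 𝓝 c, ∀ᶠ τ in atImInfty, t (g • τ) ∉ V := by
    rcases hcusp g with ⟨L, hL⟩ | hinf
    · have hLc : L ≠ c := fun h => hc ⟨g, h ▸ hL⟩
      obtain ⟨A, hA, B, hB, hAB⟩ := Filter.disjoint_iff.1 (disjoint_nhds_nhds.2 hLc)
      exact ⟨B, hB, (hL.eventually hA).mono fun τ hτ => Set.disjoint_left.1 hAB hτ⟩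
    · exact ⟨Metric.ball c 1, Metric.ball_mem_nhds c one_pos, hinf Metric.isBounded_ball⟩
  choose V hV hVt using havoid
  obtain ⟨R, hR, hRg⟩ := exists_finite_forall_eq_mul Γ
  have hall := (Filter.eventually_all_finite hR).2 fun r _ => hVt r
  rw [Filter.eventually_iff, atImInfty_mem] at hall
  obtain ⟨Y, hY⟩ := hall
  obtain ⟨K, hK, hKc⟩ := exists_isCompact_smul_mem_or_lt_im Γ Y
  refine ⟨⋂ r ∈ R, V r, (Filter.biInter_mem hR).2 fun r _ => hV r, K, hK, fun τ hτ => ?_⟩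
  refine (hKc τ).resolve_right ?_
  rintro ⟨g, hg⟩
  obtain ⟨γ, hγ, r, hr, hgr⟩ := hRg g⁻¹
  have hval : t (r • g • τ) = t τ := by
    rw [← hinv γ hγ, ← mul_smul, ← mul_smul, hgr, inv_mul_cancel, one_smul]
  exact hY (g • τ) hg.le r hr (hval ▸ Set.mem_iInter₂.1 hτ r hr)

theorem exists_lt_im_of_lt_norm [Γ.FiniteIndex] (ht : Continuous t)
    (hinv : ∀ γ ∈ Γ, ∀ τ : ℍ, t (γ • τ) = t τ)
    (hcusp : ∀ g ∉ Γ, ∃ L, Filter.Tendsto (fun τ : ℍ => t (g • τ)) atImInfty (𝓝 L)) (Y : ℝ) :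
    ∃ M : ℝ, ∀ τ, M < ‖t τ‖ → ∃ γ ∈ Γ, Y < (γ • τ).im := by
  obtain ⟨R, hR, hRg⟩ := exists_finite_forall_eq_mul Γ
  have hb : ∀ r ∈ R, ∃ B : ℝ, ∀ᶠ τ in atImInfty, r ∉ Γ → ‖t (r • τ)‖ ≤ B := by
    intro r _
    by_cases hr : r ∈ Γ
    · exact ⟨0, by simp [hr]⟩
    · obtain ⟨L, hL⟩ := hcusp r hr
      exact ⟨‖L‖ + 1, (hL.norm.eventually_le_const (lt_add_one _)).mono fun _ h _ => h⟩
  choose! B hB using hb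
  have hall := (Filter.eventually_all_finite hR).2 hB
  rw [Filter.eventually_iff, atImInfty_mem] at hall
  obtain ⟨Y', hY'⟩ := hall
  obtain ⟨K, hK, hKc⟩ := exists_isCompact_smul_mem_or_lt_im Γ (max Y Y')
  obtain ⟨M, hM⟩ := hK.exists_bound_of_continuousOn ht.continuousOn
  obtain ⟨M', hM'⟩ := (hR.image B).bddAbove
  refine ⟨max M M', fun τ hτ => ?_⟩
  rcases hKc τ with ⟨γ, hγ, h⟩ | ⟨g, hg⟩
  · have hle := hM _ h
    rw [hinv γ hγ] at hle
    exact absurd hτ (not_lt.2 (hle.trans (le_max_left _ _)))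
  · obtain ⟨γ, hγ, r, hr, hgr⟩ := hRg g⁻¹
    by_cases hrΓ : r ∈ Γ
    · refine ⟨g, ?_, (le_max_left _ _).trans_lt hg⟩
      rw [← inv_mem_iff, ← hgr]
      exact mul_mem hγ hrΓ
    · have hval : t (r • g • τ) = t τ := by
        rw [← hinv γ hγ, ← mul_smul, ← mul_smul, hgr, inv_mul_cancel, one_smul]
      have hle := hY' (g • τ) ((le_max_right _ _).trans hg.le) r hr hrΓ
      rw [hval] at hle
      exact absurd hτ (not_lt.2 ((hle.trans (hM' ⟨r, hr, rfl⟩)).trans (le_max_right _ _)))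

theorem exists_countable_forall_injOn_nhds (ht : MDifferentiable 𝓘(ℂ) 𝓘(ℂ) t)
    (hne : ∃ z w, t z ≠ t w) :
    ∃ D : Set ℍ, D.Countable ∧ ∀ τ ∉ D, ∃ V ∈ 𝓝 τ, Set.InjOn t V := by
  have hd := UpperHalfPlane.mdifferentiable_iff.1 ht
  have hU : IsOpen {z : ℂ | 0 < z.im} := isOpen_lt continuous_const Complex.continuous_im
  have hpre : IsPreconnected {z : ℂ | 0 < z.im} := (convex_halfSpace_im_gt 0).isPreconnected
  have hA := hd.analyticOnNhd hU
  have hcount : ({z : ℂ | 0 < z.im} ∩ {z | deriv (t ∘ ofComplex) z = 0}).Countable := by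
    rcases hA.deriv.eqOn_zero_or_eventually_ne_zero_of_preconnected hpre with h0 | hcod
    · obtain ⟨z, w, hzw⟩ := hne
      have hconst := hU.is_const_of_deriv_eq_zero hpre hd h0 z.im_pos w.im_pos
      simp only [Function.comp_apply, ofComplex_apply] at hconst
      exact absurd hconst hzw
    · rw [Set.inter_comm]
      have hcod' : {z | deriv (t ∘ ofComplex) z = 0}ᶜ ∈
        Filter.codiscreteWithin {z : ℂ | 0 < z.im} := hcod
      exact (HereditarilyLindelofSpace.isLindelof _).countable_of_isDiscrete
        (isDiscrete_of_codiscreteWithin hcod')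
  refine ⟨UpperHalfPlane.coe ⁻¹' _, hcount.preimage UpperHalfPlane.coe_injective, fun τ hτ => ?_⟩
  have hs := (hA τ τ.im_pos).hasStrictDerivAt
  have hleft := hs.eventually_left_inverse fun h => hτ ⟨τ.im_pos, h⟩
  refine ⟨_, continuous_coe.continuousAt hleft, fun z hz w hw h => ?_⟩
  simp only [Set.mem_preimage, Set.mem_ofPred_eq, Function.comp_apply, ofComplex_apply] at hz hw
  rw [h, hw] at hz
  exact UpperHalfPlane.coe_injective hz.symm

theorem isOpen_doubleValues (hopen : IsOpenMap t) : IsOpen (doubleValues Γ t) := by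
  rw [isOpen_iff_mem_nhds]
  rintro c ⟨τ₁, τ₂, h1, h2, h12⟩
  obtain ⟨V₁, V₂, hV₁, hV₂, hτ₁, hτ₂, hV⟩ := exists_nhds_smul_eq_of_smul_mem τ₁ τ₂
  have hnhds₁ : t '' V₁ ∈ 𝓝 c := (hopen _ hV₁).mem_nhds ⟨τ₁, hτ₁, h1⟩
  have hnhds₂ : t '' V₂ ∈ 𝓝 c := (hopen _ hV₂).mem_nhds ⟨τ₂, hτ₂, h2⟩
  filter_upwards [hnhds₁, hnhds₂]
  rintro x ⟨z, hz, rfl⟩ ⟨w, hw, hzw⟩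
  exact ⟨z, w, rfl, hzw, fun γ hγ h => h12 γ hγ (hV γ z hz (h ▸ hw))⟩

theorem mem_doubleValues_of_mem_closure (hcont : Continuous t)
    (hinv : ∀ γ ∈ Γ, ∀ τ : ℍ, t (γ • τ) = t τ) {c : ℂ} (hproper : IsProperOver Γ t c)
    (hinj : ∀ τ, t τ = c → ∃ W ∈ 𝓝 τ, Set.InjOn t W) (hc : c ∈ closure (doubleValues Γ t)) :
    c ∈ doubleValues Γ t := by
  obtain ⟨V, hV, K, hK, hVK⟩ := hproper
  obtain ⟨x, hx, hxc⟩ := mem_closure_iff_seq_limit.1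
    (mem_closure_iff_nhds.2 fun W hW => by
      obtain ⟨y, hy, hyd⟩ := mem_closure_iff_nhds.1 hc _ (Filter.inter_mem hW hV)
      exact ⟨y, hy.1, hyd, hy.2⟩ : c ∈ closure (doubleValues Γ t ∩ V))
  have hpts (n) : ∃ p : ℍ × ℍ, p ∈ K ×ˢ K ∧ t p.1 = x n ∧ t p.2 = x n ∧
      ∀ γ ∈ Γ, γ • p.1 ≠ p.2 := by
    obtain ⟨⟨τ₁, τ₂, h1, h2, h12⟩, hxV⟩ := hx n
    obtain ⟨γ₁, hγ₁, hK₁⟩ := hVK τ₁ (h1 ▸ hxV)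
    obtain ⟨γ₂, hγ₂, hK₂⟩ := hVK τ₂ (h2 ▸ hxV)
    refine ⟨(γ₁ • τ₁, γ₂ • τ₂), ⟨hK₁, hK₂⟩, by rw [hinv γ₁ hγ₁, h1], by rw [hinv γ₂ hγ₂, h2],
      fun γ hγ h => h12 (γ₂⁻¹ * γ * γ₁) (mul_mem (mul_mem (inv_mem hγ₂) hγ) hγ₁) ?_⟩
    rw [mul_smul, mul_smul, h, inv_smul_smul]
  choose p hpK hp1 hp2 hp using hpts
  obtain ⟨⟨τ₁, τ₂⟩, -, φ, hφ, hlim⟩ := (hK.prod hK).tendsto_subseq hpK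
  have hlim₁ : Filter.Tendsto (fun n => (p (φ n)).1) Filter.atTop (𝓝 τ₁) :=
    (continuous_fst.tendsto _).comp hlim
  have hlim₂ : Filter.Tendsto (fun n => (p (φ n)).2) Filter.atTop (𝓝 τ₂) :=
    (continuous_snd.tendsto _).comp hlim
  have hxφ := hxc.comp hφ.tendsto_atTop
  have hval₁ : t τ₁ = c := tendsto_nhds_unique ((hcont.tendsto _).comp hlim₁)
    (hxφ.congr fun n => (hp1 (φ n)).symm)
  have hval₂ : t τ₂ = c := tendsto_nhds_unique ((hcont.tendsto _).comp hlim₂)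
    (hxφ.congr fun n => (hp2 (φ n)).symm)
  refine ⟨τ₁, τ₂, hval₁, hval₂, fun γ hγ hγτ => ?_⟩
  obtain ⟨W, hW, hWinj⟩ := hinj τ₂ hval₂
  have hlim₃ : Filter.Tendsto (fun n => γ • (p (φ n)).1) Filter.atTop (𝓝 τ₂) :=
    hγτ ▸ ((continuous_SL_smul γ).tendsto _).comp hlim₁
  obtain ⟨n, hn1, hn2⟩ := ((hlim₃.eventually hW).and (hlim₂.eventually hW)).exists
  exact hp (φ n) γ hγ (hWinj hn1 hn2 (by rw [hinv γ hγ, hp1, hp2]))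

theorem mem_range_of_mem_closure (hcont : Continuous t)
    (hinv : ∀ γ ∈ Γ, ∀ τ : ℍ, t (γ • τ) = t τ) {c : ℂ} (hproper : IsProperOver Γ t c)
    (hc : c ∈ closure (Set.range t)) : c ∈ Set.range t := by
  obtain ⟨V, hV, K, hK, hVK⟩ := hproper
  have hcK : c ∈ closure (t '' K) := by
    rw [mem_closure_iff_nhds] at hc ⊢
    intro W hW
    obtain ⟨_, hx, τ, rfl⟩ := hc _ (Filter.inter_mem hW hV)
    obtain ⟨γ, hγ, hγK⟩ := hVK τ hx.2
    exact ⟨t τ, hx.1, γ • τ, hγK, hinv γ hγ τ⟩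
  rw [(hK.image hcont).isClosed.closure_eq] at hcK
  exact Set.image_subset_range _ _ hcK

theorem compl_subset_doubleValues [Γ.FiniteIndex] (ht : MDifferentiable 𝓘(ℂ) 𝓘(ℂ) t)
    (hinv : ∀ γ ∈ Γ, ∀ τ : ℍ, t (γ • τ) = t τ)
    (hproper : ∀ c ∉ cuspLimits t, IsProperOver Γ t c) (hne : ∃ z w, t z ≠ t w)
    (hdouble : (doubleValues Γ t).Nonempty) :
    ∃ D : Set ℂ, D.Countable ∧ Dᶜ ⊆ doubleValues Γ t := by
  obtain ⟨D, hD, hDinj⟩ := exists_countable_forall_injOn_nhds ht hne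
  have hcount := (finite_cuspLimits hinv).countable.union (hD.image t)
  refine ⟨_, hcount, compl_subset_of_isOpen_of_closure_subset
    (isOpen_doubleValues (isOpenMap_of_mdifferentiable ht hne)) hdouble hcount fun c hc => ?_⟩
  refine or_iff_not_imp_right.2 fun hcn => ?_
  rw [Set.mem_union, not_or] at hcn
  exact mem_doubleValues_of_mem_closure ht.continuous hinv (hproper c hcn.1)
    (fun τ hτ => hDinj τ fun h => hcn.2 ⟨τ, h, hτ⟩) hc

theorem exists_smul_eq_of_lt_norm [Γ.FiniteIndex] (ht : Continuous t)
    (hinv : ∀ γ ∈ Γ, ∀ τ : ℍ, t (γ • τ) = t τ)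
    (hcusp : ∀ g ∉ Γ, ∃ L, Filter.Tendsto (fun τ : ℍ => t (g • τ)) atImInfty (𝓝 L)) {Y : ℝ}
    (hinj : ∀ τ τ' : ℍ, Y < τ.im → Y < τ'.im → t τ = t τ' → ∃ γ ∈ Γ, γ • τ = τ') :
    ∃ M : ℝ, ∀ z w, M < ‖t z‖ → t z = t w → ∃ γ ∈ Γ, γ • z = w := by
  obtain ⟨M, hM⟩ := exists_lt_im_of_lt_norm ht hinv hcusp Y
  refine ⟨M, fun z w hz hzw => ?_⟩
  obtain ⟨γ₁, hγ₁, h1⟩ := hM z hz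
  obtain ⟨γ₂, hγ₂, h2⟩ := hM w (hzw ▸ hz)
  obtain ⟨γ, hγ, hγz⟩ := hinj _ _ h1 h2 (by rw [hinv γ₁ hγ₁, hinv γ₂ hγ₂, hzw])
  refine ⟨γ₂⁻¹ * γ * γ₁, mul_mem (mul_mem (inv_mem hγ₂) hγ) hγ₁, ?_⟩
  rw [mul_smul, mul_smul, hγz, inv_smul_smul]

/-- If some value were taken on two orbits then, by openness and properness, so would all values
off a countable set, contradicting injectivity near infinity. -/
theorem isHauptmodul_of_injective_at_infinity [Γ.FiniteIndex]
    (ht : MDifferentiable 𝓘(ℂ) 𝓘(ℂ) t) (hinv : ∀ γ ∈ Γ, ∀ τ : ℍ, t (γ • τ) = t τ)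
    (hcusp : ∀ g ∉ Γ, ∃ L, Filter.Tendsto (fun τ : ℍ => t (g • τ)) atImInfty (𝓝 L))
    (hinf : Filter.Tendsto t atImInfty (Bornology.cobounded ℂ)) {Y : ℝ}
    (hinj : ∀ τ τ' : ℍ, Y < τ.im → Y < τ'.im → t τ = t τ' → ∃ γ ∈ Γ, γ • τ = τ') :
    IsHauptmodul Γ t := by
  have hne : ∃ z w, t z ≠ t w := by
    obtain ⟨w, hw⟩ := ((tendsto_norm_cobounded_atTop.comp hinf).eventually_gt_atTop ‖t I‖).exists
    exact ⟨I, w, fun h => hw.ne (by rw [Function.comp_apply, h])⟩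
  have hproper : ∀ c ∉ cuspLimits t, IsProperOver Γ t c := fun c =>
    isProperOver_of_notMem_cuspLimits hinv fun g => by
      by_cases hg : g ∈ Γ
      · exact .inr (by simpa only [hinv g hg] using hinf)
      · exact .inl (hcusp g hg)
  refine ⟨ht, hinv, fun τ₁ τ₂ h => ?_, (finite_cuspLimits hinv).subset ?_⟩
  · by_contra! hnot
    obtain ⟨D, hD, hsub⟩ := compl_subset_doubleValues ht hinv hproper hne
      ⟨t τ₂, τ₁, τ₂, h, rfl, hnot⟩
    obtain ⟨M, hM⟩ := exists_smul_eq_of_lt_norm ht.continuous hinv hcusp hinj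
    obtain ⟨c, hcM, hc⟩ := (hD.dense_compl ℝ).inter_open_nonempty {c : ℂ | M < ‖c‖}
      (isOpen_lt continuous_const continuous_norm) (NormedSpace.exists_lt_norm ℂ ℂ M)
    obtain ⟨z, w, rfl, hzw, hnot'⟩ := hsub hc
    obtain ⟨γ, hγ, hγz⟩ := hM z w hcM hzw.symm
    exact hnot' γ hγ hγz
  · rw [Set.compl_subset_comm]
    refine compl_subset_of_isOpen_of_closure_subset
      (isOpenMap_of_mdifferentiable ht hne).isOpen_range ⟨_, I, rfl⟩
      (finite_cuspLimits hinv).countable fun c hc => ?_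
    exact or_iff_not_imp_right.2 fun hcn =>
      mem_range_of_mem_closure ht.continuous hinv (hproper c hcn) hc

end DegreeOne

/-! ### The transformation law of the square of the eta function -/

/-- The exponent of the multiplier system of `η ^ 2` as a polynomial in the entries of a matrix,
over any ring so that it can be reduced modulo `3` and `4`. -/
def etaPoly {A : Type*} [CommRing A] (a b c d : A) : A :=
  (1 - c ^ 2) * (b * d + 3 * (c - 1) * d + c + 3) + c * (a + d - 3)

/-- An integer `n` such that `η ^ 2` has multiplier `exp (2 π i n / 12)` at `γ`. -/
def etaExp (γ : SL(2, ℤ)) : ℤ := etaPoly (γ 0 0) (γ 0 1) (γ 1 0) (γ 1 1)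

/-- The twelfth root of unity `exp (2 π i n / 12)`. -/
def zeta12 (n : ℤ) : ℂ := Complex.exp (2 * Real.pi * Complex.I / 12) ^ n

theorem zeta12_ne_zero (n : ℤ) : zeta12 n ≠ 0 := zpow_ne_zero _ (Complex.exp_ne_zero _)

theorem zeta12_add (m n : ℤ) : zeta12 (m + n) = zeta12 m * zeta12 n :=
  zpow_add₀ (Complex.exp_ne_zero _) m n

theorem zeta12_mul (m n : ℤ) : zeta12 (m * n) = zeta12 n ^ m := by
  rw [zeta12, zeta12, mul_comm m n, zpow_mul]

theorem prod_zpow_eq_zpow_sum {ι K : Type*} [Field K] {a : K} (ha : a ≠ 0) (s : Finset ι)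
    (f : ι → ℤ) : ∏ i ∈ s, a ^ f i = a ^ ∑ i ∈ s, f i := by
  classical
  induction s using Finset.induction_on with
  | empty => simp
  | insert i s hi ih => rw [Finset.sum_insert hi, Finset.prod_insert hi, zpow_add₀ ha, ih]

theorem zeta12_sum {ι : Type*} (s : Finset ι) (f : ι → ℤ) :
    zeta12 (∑ i ∈ s, f i) = ∏ i ∈ s, zeta12 (f i) :=
  (prod_zpow_eq_zpow_sum (Complex.exp_ne_zero _) s f).symm

theorem zeta12_eq_one {n : ℤ} (h : 12 ∣ n) : zeta12 n = 1 := by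
  obtain ⟨k, rfl⟩ := h
  rw [zeta12, zpow_mul, ← Complex.exp_int_mul,
    show ((12 : ℤ) : ℂ) * (2 * Real.pi * Complex.I / 12) = 2 * Real.pi * Complex.I by
      push_cast; ring,
    Complex.exp_two_pi_mul_I, one_zpow]

theorem zeta12_congr {m n : ℤ} (h : 12 ∣ m - n) : zeta12 m = zeta12 n := by
  rw [← sub_add_cancel m n, zeta12_add, zeta12_eq_one h, one_mul]

theorem norm_zeta12 (n : ℤ) : ‖zeta12 n‖ = 1 := by
  rw [zeta12, norm_zpow, show 2 * (Real.pi : ℂ) * Complex.I / 12 =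
    ((2 * Real.pi / 12 : ℝ) : ℂ) * Complex.I by push_cast; ring, Complex.norm_exp_ofReal_mul_I,
    one_zpow]

theorem zeta12_neg_three : zeta12 (-3) = Complex.I⁻¹ := by
  rw [zeta12, zpow_neg, ← Complex.exp_int_mul,
    show ((3 : ℤ) : ℂ) * (2 * Real.pi * Complex.I / 12) = Real.pi / 2 * Complex.I by
      push_cast; ring,
    Complex.exp_pi_div_two_mul_I]

theorem twelve_dvd_of_zmod {n : ℤ} (h4 : (n : ZMod 4) = 0) (h3 : (n : ZMod 3) = 0) : 12 ∣ n := by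
  rw [ZMod.intCast_zmod_eq_zero_iff_dvd] at h4 h3
  omega

theorem etaPoly_intCast {A : Type*} [CommRing A] (a b c d : ℤ) :
    ((etaPoly a b c d : ℤ) : A) = etaPoly (a : A) (b : A) (c : A) (d : A) := by
  simp [etaPoly]

theorem SL_det_intCast {A : Type*} [CommRing A] (γ : SL(2, ℤ)) :
    (γ 0 0 * γ 1 1 - γ 0 1 * γ 1 0 : A) = 1 := by
  exact_mod_cast congrArg (Int.cast : ℤ → A) (SL_det γ)

theorem etaExp_mul_T (γ : SL(2, ℤ)) : 12 ∣ etaExp (γ * ModularGroup.T) - (etaExp γ + 1) := by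
  have h4 : ∀ a b c d : ZMod 4, a * d - b * c = 1 →
      etaPoly a (a + b) c (c + d) - (etaPoly a b c d + 1) = 0 := by decide +kernel
  have h3 : ∀ a b c d : ZMod 3, a * d - b * c = 1 →
      etaPoly a (a + b) c (c + d) - (etaPoly a b c d + 1) = 0 := by decide +kernel
  have hentries : etaExp (γ * ModularGroup.T) =
      etaPoly (γ 0 0) (γ 0 0 + γ 0 1) (γ 1 0) (γ 1 0 + γ 1 1) := by
    simp [etaExp, SL_mul_apply, ModularGroup.coe_T]
  rw [hentries, etaExp]
  refine twelve_dvd_of_zmod ?_ ?_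
  · push_cast [etaPoly_intCast]
    exact h4 _ _ _ _ (SL_det_intCast γ)
  · push_cast [etaPoly_intCast]
    exact h3 _ _ _ _ (SL_det_intCast γ)

theorem etaExp_mul_S (γ : SL(2, ℤ)) : 12 ∣ etaExp (γ * ModularGroup.S) - (etaExp γ - 3) := by
  have h4 : ∀ a b c d : ZMod 4, a * d - b * c = 1 →
      etaPoly b (-a) d (-c) - (etaPoly a b c d - 3) = 0 := by decide +kernel
  have h3 : ∀ a b c d : ZMod 3, a * d - b * c = 1 →
      etaPoly b (-a) d (-c) - (etaPoly a b c d - 3) = 0 := by decide +kernel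
  have hentries : etaExp (γ * ModularGroup.S) =
      etaPoly (γ 0 1) (-γ 0 0) (γ 1 1) (-γ 1 0) := by
    simp only [etaExp, mul_S_apply_zero, mul_S_apply_one]
  rw [hentries, etaExp]
  refine twelve_dvd_of_zmod ?_ ?_
  · push_cast [etaPoly_intCast]
    exact h4 _ _ _ _ (SL_det_intCast γ)
  · push_cast [etaPoly_intCast]
    exact h3 _ _ _ _ (SL_det_intCast γ)

theorem eta_add_one (z : ℂ) :
    ModularForm.eta (z + 1) = Complex.exp (2 * Real.pi * Complex.I / 24) * ModularForm.eta z := by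
  have hq24 : Function.Periodic.qParam 24 (z + 1) =
      Complex.exp (2 * Real.pi * Complex.I / 24) * Function.Periodic.qParam 24 z := by
    rw [Function.Periodic.qParam, Function.Periodic.qParam, ← Complex.exp_add]
    congr 1
    push_cast
    ring
  have hq1 : Function.Periodic.qParam 1 (z + 1) = Function.Periodic.qParam 1 z := by
    simp only [Function.Periodic.qParam, Complex.ofReal_one, div_one, mul_add, mul_one,
      Complex.exp_periodic _]
  simp only [ModularForm.eta, ModularForm.eta_q, hq24, hq1, mul_assoc]

theorem eta_T_smul_sq (τ : ℍ) : ModularForm.eta (ModularGroup.T • τ : ℍ) ^ 2 =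
    zeta12 1 * ModularForm.eta τ ^ 2 := by
  have hT : ((ModularGroup.T • τ : ℍ) : ℂ) = τ + 1 := by
    simpa using ModularGroup.coe_T_zpow_smul_eq (n := 1) (z := τ)
  rw [hT, eta_add_one, mul_pow, zeta12, zpow_one, ← Complex.exp_nat_mul]
  congr 2
  push_cast
  ring

theorem sqrt_complex_sq (z : ℂ) : Complex.sqrt z ^ 2 = z := by
  simp [Complex.sqrt]

theorem eta_S_smul_sq (τ : ℍ) : ModularForm.eta (ModularGroup.S • τ : ℍ) ^ 2 =
    zeta12 (-3) * τ * ModularForm.eta τ ^ 2 := by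
  have h := ModularForm.eta_comp_eq_csqrt_I_inv τ.im_pos
  have hS : ((ModularGroup.S • τ : ℍ) : ℂ) = -1 / τ := by
    rw [modular_S_smul, coe_mk, neg_div, one_div, inv_neg]
  simp only [Function.comp_apply, Pi.smul_apply, Pi.mul_apply, smul_eq_mul] at h
  rw [hS, h, mul_pow, mul_pow, inv_pow, sqrt_complex_sq, sqrt_complex_sq, zeta12_neg_three,
    mul_assoc]

theorem SL_denom_ne_zero (γ : SL(2, ℤ)) (τ : ℍ) : (γ 1 0 * τ + γ 1 1 : ℂ) ≠ 0 := by
  simpa [denom] using denom_ne_zero (Matrix.SpecialLinearGroup.mapGL ℝ γ) τ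

theorem SL_denom_mul (γ δ : SL(2, ℤ)) (τ : ℍ) :
    ((γ * δ) 1 0 * τ + (γ * δ) 1 1 : ℂ) =
      (γ 1 0 * (δ • τ : ℍ) + γ 1 1) * (δ 1 0 * τ + δ 1 1) := by
  have hne := SL_denom_ne_zero δ τ
  rw [coe_SL_smul, SL_mul_apply, SL_mul_apply]
  push_cast
  field_simp
  ring

/-- The transformation law of `η ^ 2` under `γ` at the point `τ`. -/
def EtaSqLaw (γ : SL(2, ℤ)) (τ : ℍ) : Prop :=
  ModularForm.eta (γ • τ : ℍ) ^ 2 =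
    zeta12 (etaExp γ) * (γ 1 0 * τ + γ 1 1) * ModularForm.eta τ ^ 2

theorem etaSqLaw_mul_S_iff (γ : SL(2, ℤ)) (τ : ℍ) :
    EtaSqLaw (γ * ModularGroup.S) τ ↔ EtaSqLaw γ (ModularGroup.S • τ) := by
  have hS : (ModularGroup.S 1 0 * τ + ModularGroup.S 1 1 : ℂ) = τ := by
    simp [ModularGroup.coe_S]
  rw [EtaSqLaw, EtaSqLaw, mul_smul, SL_denom_mul, hS, eta_S_smul_sq, zeta12_congr (etaExp_mul_S γ),
    sub_eq_add_neg, zeta12_add]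
  ring_nf

theorem etaSqLaw_mul_T_iff (γ : SL(2, ℤ)) (τ : ℍ) :
    EtaSqLaw (γ * ModularGroup.T) τ ↔ EtaSqLaw γ (ModularGroup.T • τ) := by
  have hT : (ModularGroup.T 1 0 * τ + ModularGroup.T 1 1 : ℂ) = 1 := by
    simp [ModularGroup.coe_T]
  rw [EtaSqLaw, EtaSqLaw, mul_smul, SL_denom_mul, hT, eta_T_smul_sq, zeta12_congr (etaExp_mul_T γ),
    zeta12_add]
  ring_nf

theorem eta_smul_sq (γ : SL(2, ℤ)) (τ : ℍ) : ModularForm.eta (γ • τ : ℍ) ^ 2 =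
    zeta12 (etaExp γ) * (γ 1 0 * τ + γ 1 1) * ModularForm.eta τ ^ 2 := by
  have hinv := eq_apply_one_of_mul_S_of_mul_T (F := fun γ => ∀ τ, EtaSqLaw γ τ)
    (fun γ => propext ?_) (fun γ => propext ?_) γ
  · refine hinv.mpr (fun τ => ?_) τ
    rw [EtaSqLaw, one_smul, zeta12_eq_one (by decide)]
    simp
  · simp only [etaSqLaw_mul_S_iff]
    exact (MulAction.surjective ModularGroup.S).forall.symm
  · simp only [etaSqLaw_mul_T_iff]
    exact (MulAction.surjective ModularGroup.T).forall.symm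

theorem norm_eta_smul (γ : SL(2, ℤ)) (τ : ℍ) :
    ‖ModularForm.eta (γ • τ : ℍ)‖ ^ 4 * (γ • τ).im = ‖ModularForm.eta τ‖ ^ 4 * τ.im := by
  have hne : ‖(γ 1 0 * τ + γ 1 1 : ℂ)‖ ≠ 0 := norm_ne_zero_iff.2 (SL_denom_ne_zero γ τ)
  have h := congrArg (fun z => ‖z‖ ^ 2) (eta_smul_sq γ τ)
  simp only [norm_pow, norm_mul, norm_zeta12, one_mul] at h
  rw [pow_mul _ 2 2, h, im_SL_smul, Complex.normSq_eq_norm_sq]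
  field_simp

/-! ### Eta quotients at the cusps -/

/-- The Euler product `∏ (1 - q ^ n)` over `n ≥ 1`. -/
def eulerProd (q : ℂ) : ℂ := ∏' n : ℕ, (1 - q ^ (n + 1))

theorem eta_eq_mul_eulerProd (z : ℂ) : ModularForm.eta z =
    Function.Periodic.qParam 24 z * eulerProd (Function.Periodic.qParam 1 z) := rfl

theorem eulerProd_zero : eulerProd 0 = 1 := by simp [eulerProd]

theorem analyticAt_eulerProd_zero : AnalyticAt ℂ eulerProd 0 :=
  ModularForm.differentiableOn_tprod_one_sub_pow.analyticAt (Metric.ball_mem_nhds _ one_pos)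

theorem tendsto_eulerProd_qParam : Filter.Tendsto
    (fun τ : ℍ => eulerProd (Function.Periodic.qParam 1 τ)) atImInfty (𝓝 1) := by
  have h := analyticAt_eulerProd_zero.continuousAt.tendsto
  rw [eulerProd_zero] at h
  exact h.comp (qParam_tendsto_atImInfty one_pos)

theorem norm_eta_pow_four (τ : ℍ) : ‖ModularForm.eta τ‖ ^ 4 =
    ‖eulerProd (Function.Periodic.qParam 1 τ)‖ ^ 4 * Real.exp (-(Real.pi / 3) * τ.im) := by
  rw [eta_eq_mul_eulerProd, norm_mul, mul_pow, Function.Periodic.norm_qParam, ← Real.exp_nat_mul,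
    mul_comm]
  congr 2
  push_cast [coe_im]
  ring

/-- The Hermite decomposition `diag(δ, 1) g = γ (A B; 0 D)`, written out entry by entry. -/
theorem exists_diag_mul_eq_mul_upperTriangular (g : SL(2, ℤ)) {δ : ℕ} (hδ : 0 < δ) :
    ∃ γ : SL(2, ℤ), ∃ A D : ℕ, ∃ B : ℤ, A = Int.gcd (g 1 0) δ ∧ A * D = δ ∧
      δ * g 0 0 = γ 0 0 * A ∧ δ * g 0 1 = γ 0 0 * B + γ 0 1 * D ∧
      g 1 0 = γ 1 0 * A ∧ g 1 1 = γ 1 0 * B + γ 1 1 * D := by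
  have hdet := SL_det g
  set A := Int.gcd (g 1 0) δ with hA
  have hA0 : (A : ℤ) ≠ 0 := by
    exact_mod_cast (Int.gcd_pos_of_ne_zero_right _ (by exact_mod_cast hδ.ne')).ne'
  obtain ⟨c, hc⟩ : (A : ℤ) ∣ g 1 0 := Int.gcd_dvd_left ..
  obtain ⟨D, hD⟩ : A ∣ δ := by exact_mod_cast Int.gcd_dvd_right (g 1 0) δ
  have hDc : (δ : ℤ) = A * D := by exact_mod_cast hD
  have hcD : IsCoprime c (D : ℤ) := by
    have hbezout := Int.gcd_eq_gcd_ab (g 1 0) δ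
    rw [← hA] at hbezout
    refine ⟨Int.gcdA (g 1 0) δ, Int.gcdB (g 1 0) δ, mul_left_cancel₀ hA0 ?_⟩
    linear_combination -hbezout - Int.gcdA (g 1 0) δ * hc - Int.gcdB (g 1 0) δ * hDc
  have hcg : IsCoprime c (g 0 0) := ⟨-g 0 1 * A, g 1 1, by rw [hc] at hdet; linarith⟩
  obtain ⟨x, y, hxy⟩ := hcg.mul_right hcD
  refine ⟨mkSL (D * g 0 0) (-x) c y (by linarith), A, D, y * (δ * g 0 1) + x * g 1 1, rfl, hD.symm,
    ?_, ?_, ?_, ?_⟩ <;>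
  simp only [mkSL_apply_zero_zero, mkSL_apply_zero_one, mkSL_apply_one_zero, mkSL_apply_one_one]
  · linear_combination g 0 0 * hDc
  · linear_combination (-(δ : ℤ) * g 0 1) * hxy - x * D * hdet - x * g 0 1 * D * hc
      + x * g 0 1 * c * hDc
  · linear_combination hc
  · linear_combination (-g 1 1) * hxy + y * D * hdet + y * g 0 1 * D * hc
      - c * y * g 0 1 * hDc

theorem smul_eq_natCast_mul_smul {γ g : SL(2, ℤ)} {δ A D : ℕ} {B : ℤ} (hD : D ≠ 0)
    (h00 : δ * g 0 0 = γ 0 0 * A) (h01 : δ * g 0 1 = γ 0 0 * B + γ 0 1 * D)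
    (h10 : g 1 0 = γ 1 0 * A) (h11 : g 1 1 = γ 1 0 * B + γ 1 1 * D)
    {τ w : ℍ} (hw : (w : ℂ) = (A * τ + B) / D) : ((γ • w : ℍ) : ℂ) = δ * (g • τ : ℍ) := by
  have hDc : (D : ℂ) ≠ 0 := Nat.cast_ne_zero.2 hD
  have hw' : (w : ℂ) * D = A * τ + B := by rw [hw, div_mul_cancel₀ _ hDc]
  have hnum : (γ 0 0 * w + γ 0 1 : ℂ) * D = δ * (g 0 0 * τ + g 0 1) := by
    have h00' : (δ * g 0 0 : ℂ) = γ 0 0 * A := by exact_mod_cast h00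
    have h01' : (δ * g 0 1 : ℂ) = γ 0 0 * B + γ 0 1 * D := by exact_mod_cast h01
    linear_combination γ 0 0 * hw' - τ * h00' - h01'
  have hden : (γ 1 0 * w + γ 1 1 : ℂ) * D = g 1 0 * τ + g 1 1 := by
    have h10' : (g 1 0 : ℂ) = γ 1 0 * A := by exact_mod_cast h10
    have h11' : (g 1 1 : ℂ) = γ 1 0 * B + γ 1 1 * D := by exact_mod_cast h11
    linear_combination γ 1 0 * hw' - τ * h10' - h11'
  rw [coe_SL_smul, coe_SL_smul, ← mul_div_assoc,
    div_eq_div_iff (SL_denom_ne_zero γ w) (SL_denom_ne_zero g τ), ← hnum, ← hden]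
  ring

theorem exists_affine_map {A D : ℕ} (hA : 0 < A) (hD : 0 < D) (B : ℤ) :
    ∃ w : ℍ → ℍ, (∀ τ, (w τ : ℂ) = (A * τ + B) / D) ∧ (∀ τ, (w τ).im = A / D * τ.im) ∧
      Filter.Tendsto w atImInfty atImInfty := by
  have hpos : (0 : ℝ) < A / D := by positivity
  have him (τ : ℍ) : (((A : ℂ) * τ + B) / D).im = A / D * τ.im := by
    simp only [Complex.div_natCast_im, Complex.add_im, Complex.mul_im, Complex.natCast_re,
      Complex.natCast_im, Complex.intCast_im, zero_mul, add_zero, coe_im]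
    ring
  refine ⟨fun τ => ⟨(A * τ + B) / D, him τ ▸ mul_pos hpos τ.im_pos⟩, fun _ => rfl, him, ?_⟩
  exact Filter.tendsto_comap_iff.2 ((Filter.tendsto_comap.const_mul_atTop hpos).congr
    fun τ => (him τ).symm)

/-- Along `τ → i∞` the function `η(δ · gτ)` has order `gcd(c, δ)² / (24 δ)` in `q`, where `c` is the
lower left entry of `g`. The weight factor cancels in eta quotients of weight zero. -/
theorem exists_norm_eta_asymptotic (g : SL(2, ℤ)) {δ : ℕ} (hδ : 0 < δ) :
    ∃ u : ℍ → ℝ, ∃ k : ℝ, k ≠ 0 ∧ Filter.Tendsto u atImInfty (𝓝 k) ∧ ∀ τ : ℍ,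
      ‖ModularForm.eta (δ * (g • τ : ℍ))‖ ^ 4 =
        u τ * Real.exp (-(Real.pi / 3) * τ.im * ((Int.gcd (g 1 0) δ : ℝ) ^ 2 / δ)) *
          (τ.im / (g • τ).im) := by
  obtain ⟨γ, A, D, B, hA, hAD, h00, h01, h10, h11⟩ := exists_diag_mul_eq_mul_upperTriangular g hδ
  obtain ⟨hApos, hDpos⟩ : 0 < A ∧ 0 < D := CanonicallyOrderedAdd.mul_pos.1 (hAD.symm ▸ hδ)
  obtain ⟨w, hw, hwim, hlim⟩ := exists_affine_map hApos hDpos B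
  refine ⟨fun τ => ‖eulerProd (Function.Periodic.qParam 1 (w τ))‖ ^ 4 * (A / (D * δ)),
    A / (D * δ), by positivity, ?_, fun τ => ?_⟩
  · simpa only [norm_one, one_pow, one_mul, Function.comp_apply] using
      ((tendsto_eulerProd_qParam.comp hlim).norm.pow 4).mul_const ((A : ℝ) / (D * δ))
  · have hsmul := smul_eq_natCast_mul_smul hDpos.ne' h00 h01 h10 h11 (hw τ)
    have him : (γ • w τ).im = δ * (g • τ).im := by
      simpa only [← nsmul_eq_mul, Complex.smul_im, coe_im] using congrArg Complex.im hsmul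
    have hexp : -(Real.pi / 3) * τ.im * ((Int.gcd (g 1 0) δ : ℝ) ^ 2 / δ) =
        -(Real.pi / 3) * (A / D * τ.im) := by
      rw [← hA, ← hAD]
      push_cast
      field_simp
    have h := norm_eta_smul γ (w τ)
    rw [hsmul, him, hwim, norm_eta_pow_four, hwim, ← eq_div_iff (by positivity)] at h
    rw [hexp, h]
    field_simp

/-- The eta quotient `∏ η(δ τ) ^ r(δ)` over the divisors `δ` of `N`. -/
def etaQuot (N : ℕ) (r : ℕ → ℤ) (τ : ℍ) : ℂ :=
  ∏ δ ∈ N.divisors, ModularForm.eta (δ * τ) ^ r δ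

theorem im_natCast_mul_pos {δ : ℕ} (hδ : 0 < δ) {z : ℂ} (hz : 0 < z.im) :
    0 < ((δ : ℂ) * z).im := by
  rw [← nsmul_eq_mul, Complex.smul_im]
  exact nsmul_pos hz hδ.ne'

theorem eta_natCast_mul_ne_zero {δ : ℕ} (hδ : 0 < δ) (τ : ℍ) :
    ModularForm.eta (δ * τ) ≠ 0 :=
  ModularForm.eta_ne_zero (im_natCast_mul_pos hδ τ.im_pos)

theorem mdifferentiable_etaQuot (N : ℕ) (r : ℕ → ℤ) :
    MDifferentiable 𝓘(ℂ) 𝓘(ℂ) (etaQuot N r) := by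
  rw [UpperHalfPlane.mdifferentiable_iff]
  have h : DifferentiableOn ℂ (fun z : ℂ => ∏ δ ∈ N.divisors, ModularForm.eta (δ * z) ^ r δ)
      {z : ℂ | 0 < z.im} := by
    refine DifferentiableOn.fun_finsetProd fun δ hδ z hz => ?_
    have hpos := im_natCast_mul_pos (Nat.pos_of_mem_divisors hδ) hz
    have heta : DifferentiableAt ℂ (fun z : ℂ => ModularForm.eta (δ * z)) z :=
      (ModularForm.differentiableAt_eta_of_mem_upperHalfPlaneSet hpos).comp z (by fun_prop)
    exact (heta.zpow (Or.inl (ModularForm.eta_ne_zero hpos))).differentiableWithinAt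
  refine h.congr fun z hz => ?_
  simp only [Function.comp_apply, etaQuot, ofComplex_apply_of_im_pos hz, coe_mk]

/-- Twenty-four times the order of vanishing, in `q`, of the eta quotient with exponents `r` at the
cusp `gi∞`, `g` having lower left entry `c`. -/
def cuspOrder (N : ℕ) (r : ℕ → ℤ) (c : ℤ) : ℝ :=
  ∑ δ ∈ N.divisors, (r δ : ℝ) * ((Int.gcd c δ : ℝ) ^ 2 / δ)

theorem exists_norm_etaQuot_asymptotic {N : ℕ} {r : ℕ → ℤ} (hr : ∑ δ ∈ N.divisors, r δ = 0)
    (g : SL(2, ℤ)) :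
    ∃ v : ℍ → ℝ, ∃ l : ℝ, Filter.Tendsto v atImInfty (𝓝 l) ∧ ∀ τ : ℍ,
      ‖etaQuot N r (g • τ)‖ ^ 4 =
        v τ * Real.exp (-(Real.pi / 3) * τ.im * cuspOrder N r (g 1 0)) := by
  choose! u k hk hu heq using fun (δ : ℕ) (hδ : δ ∈ N.divisors) =>
    exists_norm_eta_asymptotic g (Nat.pos_of_mem_divisors hδ)
  refine ⟨fun τ => ∏ δ ∈ N.divisors, u δ τ ^ r δ, ∏ δ ∈ N.divisors, k δ ^ r δ,
    tendsto_finsetProd _ fun δ hδ => (hu δ hδ).zpow₀ _ (Or.inl (hk δ hδ)), fun τ => ?_⟩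
  have hweight : ∏ δ ∈ N.divisors, (τ.im / (g • τ).im) ^ r δ = 1 := by
    rw [prod_zpow_eq_zpow_sum (div_pos τ.im_pos (g • τ).im_pos).ne', hr, zpow_zero]
  have hexp (δ : ℕ) : Real.exp (-(Real.pi / 3) * τ.im *
      (r δ * ((Int.gcd (g 1 0) δ : ℝ) ^ 2 / δ))) =
      Real.exp (-(Real.pi / 3) * τ.im * ((Int.gcd (g 1 0) δ : ℝ) ^ 2 / δ)) ^ r δ := by
    rw [← Real.rpow_intCast, ← Real.exp_mul]
    ring_nf
  calc ‖etaQuot N r (g • τ)‖ ^ 4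
      = ∏ δ ∈ N.divisors, (‖ModularForm.eta (δ * (g • τ : ℍ))‖ ^ 4) ^ r δ := by
        rw [etaQuot, norm_prod, ← Finset.prod_pow]
        refine Finset.prod_congr rfl fun δ _ => ?_
        rw [norm_zpow, ← zpow_natCast, zpow_comm, zpow_natCast]
    _ = (∏ δ ∈ N.divisors, u δ τ ^ r δ) *
          Real.exp (-(Real.pi / 3) * τ.im * cuspOrder N r (g 1 0)) := by
        rw [cuspOrder, Finset.mul_sum, Real.exp_sum, ← mul_one (_ * _), ← hweight,
          ← Finset.prod_mul_distrib, ← Finset.prod_mul_distrib]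
        refine Finset.prod_congr rfl fun δ hδ => ?_
        rw [heq δ hδ τ, mul_zpow, mul_zpow, hexp]

theorem exists_eventually_norm_etaQuot_le {N : ℕ} {r : ℕ → ℤ} (hr : ∑ δ ∈ N.divisors, r δ = 0)
    {g : SL(2, ℤ)} (hord : 0 ≤ cuspOrder N r (g 1 0)) :
    ∃ M : ℝ, ∀ᶠ τ in atImInfty, ‖etaQuot N r (g • τ)‖ ≤ M := by
  obtain ⟨v, l, hv, heq⟩ := exists_norm_etaQuot_asymptotic hr g
  refine ⟨max (l + 1) 1, (hv.eventually_le_const (lt_add_one l)).mono fun τ hτ => ?_⟩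
  have hone : 1 ≤ max (l + 1) 1 := le_max_right _ _
  have hexp : Real.exp (-(Real.pi / 3) * τ.im * cuspOrder N r (g 1 0)) ≤ 1 := by
    rw [Real.exp_le_one_iff, neg_mul, neg_mul, neg_nonpos]
    have := τ.im_pos
    positivity
  refine le_of_pow_le_pow_left₀ four_ne_zero (zero_le_one.trans hone) ?_
  calc ‖etaQuot N r (g • τ)‖ ^ 4
      = v τ * Real.exp (-(Real.pi / 3) * τ.im * cuspOrder N r (g 1 0)) := heq τ
    _ ≤ max (l + 1) 1 * 1 := mul_le_mul (hτ.trans (le_max_left _ _)) hexp (Real.exp_pos _).le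
        (zero_le_one.trans hone)
    _ ≤ max (l + 1) 1 ^ 4 := by
        rw [mul_one]
        exact le_self_pow₀ hone four_ne_zero

/-! ### Eta quotients as Hauptmoduln -/

theorem conj_T_zpow_mem_Gamma0 (N : ℕ) (g : SL(2, ℤ)) :
    g * ModularGroup.T ^ (N : ℤ) * g⁻¹ ∈ Gamma0 N := by
  rw [Gamma0_mem, SL_mul_apply, SL_mul_apply, SL_mul_apply, SL_inv_apply_zero_zero,
    SL_inv_apply_one_zero, ModularGroup.coe_T_zpow]
  simp only [Matrix.of_apply, Matrix.cons_val', Matrix.cons_val_zero, Matrix.cons_val_one,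
    Matrix.cons_val_fin_one, Int.cast_add, Int.cast_mul, Int.cast_neg, Int.cast_natCast,
    CharP.cast_eq_zero, Int.cast_one, Int.cast_zero]
  ring

theorem periodic_comp_ofComplex {N : ℕ} {F : ℍ → ℂ}
    (hF : ∀ τ, F (ModularGroup.T ^ (N : ℤ) • τ) = F τ) :
    Function.Periodic (F ∘ ofComplex) ((N : ℝ) : ℂ) := by
  intro w
  have him : (w + ((N : ℝ) : ℂ)).im = w.im := by
    rw [Complex.add_im, Complex.ofReal_im, add_zero]
  by_cases! hw : 0 < w.im
  · simp only [Function.comp_apply, ofComplex_apply_of_im_pos hw,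
      ofComplex_apply_of_im_pos (him.symm ▸ hw)]
    rw [← hF ⟨w, hw⟩]
    congr 1
    ext
    refine Eq.trans ?_ (ModularGroup.coe_T_zpow_smul_eq (z := ⟨w, hw⟩)).symm
    rw [Int.cast_natCast, coe_mk, coe_mk, Complex.ofReal_natCast]
  · simp only [Function.comp_apply, ofComplex_apply_of_im_nonpos hw,
      ofComplex_apply_of_im_nonpos (him.symm ▸ hw)]

theorem exists_tendsto_of_bounded {N : ℕ} (hN : 0 < N) {t : ℍ → ℂ}
    (ht : MDifferentiable 𝓘(ℂ) 𝓘(ℂ) t) (hinv : ∀ γ ∈ Gamma0 N, ∀ τ, t (γ • τ) = t τ)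
    (g : SL(2, ℤ)) {M : ℝ} (hM : ∀ᶠ τ in atImInfty, ‖t (g • τ)‖ ≤ M) :
    ∃ L, Filter.Tendsto (fun τ : ℍ => t (g • τ)) atImInfty (𝓝 L) := by
  set F : ℍ → ℂ := fun τ => t (g • τ)
  have hFd : MDifferentiable 𝓘(ℂ) 𝓘(ℂ) F :=
    ht.comp (mdifferentiable_smul (g := Matrix.SpecialLinearGroup.mapGL ℝ g) (by simp))
  have hper : Function.Periodic (F ∘ ofComplex) ((N : ℝ) : ℂ) := by
    refine periodic_comp_ofComplex fun τ => ?_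
    have := hinv _ (conj_T_zpow_mem_Gamma0 N g) (g • τ)
    rwa [← mul_smul, inv_mul_cancel_right, mul_smul] at this
  have hhol : ∀ᶠ z in Filter.comap Complex.im Filter.atTop,
      DifferentiableAt ℂ (F ∘ ofComplex) z := by
    filter_upwards [Filter.preimage_mem_comap (Filter.Ioi_mem_atTop 0)] with z hz
    exact (UpperHalfPlane.mdifferentiable_iff.mp hFd).differentiableAt
      (isOpen_upperHalfPlaneSet.mem_nhds hz)
  have hbd : Filter.BoundedAtFilter atImInfty F :=
    Asymptotics.IsBigO.of_bound M
      (hM.mono fun τ hτ => by simpa only [Pi.one_apply, norm_one, mul_one] using hτ)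
  have hlim := Function.Periodic.tendsto_at_I_inf (by exact_mod_cast hN) hper hhol
    (hbd.comp_tendsto tendsto_comap_im_ofComplex)
  exact ⟨_, (hlim.comp tendsto_coe_atImInfty).congr fun τ => by
    simp only [Function.comp_apply, ofComplex_apply]⟩

/-- The expansion in `q` at `∞` of the inverse of an eta quotient with a simple pole there. -/
def invEtaQuotCusp (N : ℕ) (r : ℕ → ℤ) (q : ℂ) : ℂ :=
  q * ∏ δ ∈ N.divisors, eulerProd (q ^ δ) ^ (-r δ)

theorem hasStrictDerivAt_invEtaQuotCusp (N : ℕ) (r : ℕ → ℤ) :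
    HasStrictDerivAt (invEtaQuotCusp N r) 1 0 := by
  have hzero : ∀ δ ∈ N.divisors, (0 : ℂ) ^ δ = 0 := fun δ hδ =>
    zero_pow (Nat.pos_of_mem_divisors hδ).ne'
  have ha : AnalyticAt ℂ (fun q : ℂ => ∏ δ ∈ N.divisors, eulerProd (q ^ δ) ^ (-r δ)) 0 := by
    refine Finset.analyticAt_fun_prod _ fun δ hδ => AnalyticAt.fun_zpow ?_ ?_
    · exact AnalyticAt.comp (f := fun q : ℂ => q ^ δ)
        ((hzero δ hδ).symm ▸ analyticAt_eulerProd_zero) (by fun_prop)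
    · rw [hzero δ hδ, eulerProd_zero]
      exact one_ne_zero
  refine ((hasStrictDerivAt_id (0 : ℂ)).mul ha.hasStrictDerivAt).congr_deriv ?_
  simp only [id, one_mul, zero_mul, add_zero]
  exact Finset.prod_eq_one fun δ hδ => by rw [hzero δ hδ, eulerProd_zero, one_zpow]

theorem qParam_natCast_mul (δ : ℕ) (z : ℂ) : Function.Periodic.qParam 1 (δ * z) =
    Function.Periodic.qParam 1 z ^ δ := by
  simp only [Function.Periodic.qParam, ← Complex.exp_nat_mul]
  congr 1
  ring

theorem prod_qParam_zpow {N : ℕ} {r : ℕ → ℤ} (hr : ∑ δ ∈ N.divisors, (δ : ℤ) * r δ = -24)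
    (z : ℂ) : ∏ δ ∈ N.divisors, Function.Periodic.qParam 24 (δ * z) ^ (-r δ) =
      Function.Periodic.qParam 1 z := by
  have hfactor (δ : ℕ) : Function.Periodic.qParam 24 (δ * z) ^ (-r δ) =
      Function.Periodic.qParam 24 z ^ (-((δ : ℤ) * r δ)) := by
    simp only [Function.Periodic.qParam, ← Complex.exp_int_mul]
    congr 1
    push_cast
    ring
  simp only [hfactor]
  rw [prod_zpow_eq_zpow_sum (Function.Periodic.qParam_ne_zero _), Finset.sum_neg_distrib, hr]
  simp only [Function.Periodic.qParam, ← Complex.exp_int_mul]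
  congr 1
  push_cast
  ring

theorem inv_etaQuot_eq {N : ℕ} {r : ℕ → ℤ} (hr : ∑ δ ∈ N.divisors, (δ : ℤ) * r δ = -24) (τ : ℍ) :
    (etaQuot N r τ)⁻¹ = invEtaQuotCusp N r (Function.Periodic.qParam 1 τ) := by
  rw [invEtaQuotCusp, ← prod_qParam_zpow hr, ← Finset.prod_mul_distrib, prod_qParam_zpow hr,
    etaQuot, ← Finset.prod_inv_distrib]
  refine Finset.prod_congr rfl fun δ _ => ?_
  rw [eta_eq_mul_eulerProd, ← zpow_neg, mul_zpow, qParam_natCast_mul]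

theorem etaQuot_ne_zero (N : ℕ) (r : ℕ → ℤ) (τ : ℍ) : etaQuot N r τ ≠ 0 :=
  Finset.prod_ne_zero_iff.mpr fun _ hδ =>
    zpow_ne_zero _ (eta_natCast_mul_ne_zero (Nat.pos_of_mem_divisors hδ) τ)

theorem tendsto_etaQuot_cobounded {N : ℕ} {r : ℕ → ℤ}
    (hr : ∑ δ ∈ N.divisors, (δ : ℤ) * r δ = -24) :
    Filter.Tendsto (etaQuot N r) atImInfty (Bornology.cobounded ℂ) := by
  have hcusp : Filter.Tendsto (invEtaQuotCusp N r) (𝓝 0) (𝓝 0) := by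
    simpa only [invEtaQuotCusp, zero_mul] using
      (hasStrictDerivAt_invEtaQuotCusp N r).hasDerivAt.continuousAt.tendsto
  have hinv : Filter.Tendsto (fun τ => (etaQuot N r τ)⁻¹) atImInfty (𝓝[≠] 0) :=
    tendsto_nhdsWithin_iff.mpr
      ⟨(hcusp.comp (qParam_tendsto_atImInfty one_pos)).congr fun τ => (inv_etaQuot_eq hr τ).symm,
        Filter.Eventually.of_forall fun τ => inv_ne_zero (etaQuot_ne_zero N r τ)⟩
  exact (Filter.tendsto_inv₀_nhdsNE_zero.comp hinv).congr fun τ => inv_inv (etaQuot N r τ)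

theorem exists_T_zpow_smul_of_qParam_eq {τ τ' : ℍ}
    (h : Function.Periodic.qParam 1 τ = Function.Periodic.qParam 1 τ') :
    ∃ k : ℤ, ModularGroup.T ^ k • τ = τ' := by
  obtain ⟨n, hn⟩ := Complex.exp_eq_exp_iff_exists_int.mp h.symm
  refine ⟨n, UpperHalfPlane.ext ?_⟩
  rw [ModularGroup.coe_T_zpow_smul_eq]
  refine mul_left_cancel₀ Complex.two_pi_I_ne_zero ?_
  push_cast at hn
  linear_combination -hn

theorem T_zpow_mem_Gamma0 (N : ℕ) (k : ℤ) : ModularGroup.T ^ k ∈ Gamma0 N := by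
  rw [Gamma0_mem, ModularGroup.coe_T_zpow]
  exact Int.cast_zero

theorem exists_etaQuot_injective_at_infinity {N : ℕ} {r : ℕ → ℤ}
    (hr : ∑ δ ∈ N.divisors, (δ : ℤ) * r δ = -24) :
    ∃ Y : ℝ, ∀ τ τ' : ℍ, Y < τ.im → Y < τ'.im → etaQuot N r τ = etaQuot N r τ' →
      ∃ γ ∈ Gamma0 N, γ • τ = τ' := by
  have hleft := (hasStrictDerivAt_invEtaQuotCusp N r).eventually_left_inverse one_ne_zero
  obtain ⟨Y, hY⟩ := (atImInfty_mem _).mp ((qParam_tendsto_atImInfty one_pos).eventually hleft)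
  refine ⟨Y, fun τ τ' hτ hτ' heq => ?_⟩
  have h := hY τ hτ.le
  have h' := hY τ' hτ'.le
  simp only [Set.mem_ofPred_eq, ← inv_etaQuot_eq hr] at h h'
  rw [heq] at h
  obtain ⟨k, hk⟩ := exists_T_zpow_smul_of_qParam_eq (h.symm.trans h')
  exact ⟨_, T_zpow_mem_Gamma0 N k, hk⟩

theorem natCast_mul_cuspOrder {N : ℕ} (hN : 0 < N) (r : ℕ → ℤ) (c : ℤ) :
    N * cuspOrder N r c = ((∑ δ ∈ N.divisors,
      r δ * (Nat.gcd (Int.gcd c N) δ : ℤ) ^ 2 * (N / δ : ℕ) : ℤ) : ℝ) := by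
  rw [cuspOrder, Finset.mul_sum, Int.cast_sum]
  refine Finset.sum_congr rfl fun δ hδ => ?_
  have hδN := Nat.dvd_of_mem_divisors hδ
  have hδ0 : (δ : ℝ) ≠ 0 := Nat.cast_ne_zero.2 (Nat.pos_of_mem_divisors hδ).ne'
  have hgcd : Nat.gcd (Int.gcd c N) δ = Int.gcd c δ := by
    simp only [Int.gcd_eq_natAbs, Int.natAbs_natCast]
    rw [Nat.gcd_assoc, Nat.gcd_eq_right hδN]
  rw [hgcd, Int.cast_mul, Int.cast_natCast, Nat.cast_div hδN hδ0]
  push_cast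
  field_simp

theorem gcd_mem_properDivisors {N : ℕ} (hN : 0 < N) {g : SL(2, ℤ)} (hg : g ∉ Gamma0 N) :
    Int.gcd (g 1 0) N ∈ N.properDivisors := by
  have hdvd : Int.gcd (g 1 0) N ∣ N := by exact_mod_cast Int.gcd_dvd_right (g 1 0) N
  refine Nat.mem_properDivisors.mpr ⟨hdvd, (Nat.le_of_dvd hN hdvd).lt_of_ne fun h => hg ?_⟩
  rw [mem_Gamma0_iff_dvd]
  exact h ▸ Int.gcd_dvd_left (g 1 0) N

theorem isHauptmodul_etaQuot {N : ℕ} (hN : 0 < N) {r : ℕ → ℤ} (hr0 : ∑ δ ∈ N.divisors, r δ = 0)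
    (hr24 : ∑ δ ∈ N.divisors, (δ : ℤ) * r δ = -24)
    (hord : ∀ k ∈ N.properDivisors,
      0 ≤ ∑ δ ∈ N.divisors, r δ * (Nat.gcd k δ : ℤ) ^ 2 * (N / δ : ℕ))
    (hinv : ∀ γ ∈ Gamma0 N, ∀ τ, etaQuot N r (γ • τ) = etaQuot N r τ) :
    IsHauptmodul (Gamma0 N) (etaQuot N r) := by
  have : NeZero N := ⟨hN.ne'⟩
  obtain ⟨Y, hY⟩ := exists_etaQuot_injective_at_infinity hr24
  refine isHauptmodul_of_injective_at_infinity (mdifferentiable_etaQuot N r) hinv (fun g hg => ?_)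
    (tendsto_etaQuot_cobounded hr24) hY
  have hcusp : 0 ≤ cuspOrder N r (g 1 0) := by
    refine nonneg_of_mul_nonneg_right (a := (N : ℝ)) ?_ (Nat.cast_pos.2 hN)
    rw [natCast_mul_cuspOrder hN]
    exact_mod_cast hord _ (gcd_mem_properDivisors hN hg)
  obtain ⟨M, hM⟩ := exists_eventually_norm_etaQuot_le hr0 hcusp
  exact exists_tendsto_of_bounded hN (mdifferentiable_etaQuot N r) hinv g hM

/-! ### Invariance of squares of eta quotients -/

/-- Conjugation of `γ` by `diag(δ, 1)`, where `δ * c` is the lower left entry of `γ`. -/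
def conjDiag (γ : SL(2, ℤ)) (δ : ℕ) (c : ℤ) (h : γ 1 0 = δ * c) : SL(2, ℤ) :=
  mkSL (γ 0 0) (δ * γ 0 1) c (γ 1 1) (by have := SL_det γ; rw [h] at this; linarith)

/-- Multiplication by a positive integer on the upper half plane. -/
def natMul (δ : ℕ) (hδ : 0 < δ) (τ : ℍ) : ℍ := ⟨δ * τ, im_natCast_mul_pos hδ τ.im_pos⟩

theorem coe_natMul (δ : ℕ) (hδ : 0 < δ) (τ : ℍ) : (natMul δ hδ τ : ℂ) = δ * τ := rfl

theorem natMul_smul {γ : SL(2, ℤ)} {δ : ℕ} (hδ : 0 < δ) {c : ℤ} (h : γ 1 0 = δ * c) (τ : ℍ) :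
    natMul δ hδ (γ • τ) = conjDiag γ δ c h • natMul δ hδ τ := by
  refine UpperHalfPlane.ext (smul_eq_natCast_mul_smul (A := δ) (D := 1) (B := 0) one_ne_zero
    ?_ ?_ ?_ ?_ ?_).symm
  · rw [conjDiag, mkSL_apply_zero_zero, mul_comm]
  · rw [conjDiag, mkSL_apply_zero_one, mul_zero, zero_add, Nat.cast_one, mul_one]
  · rw [conjDiag, mkSL_apply_one_zero, h, mul_comm]
  · rw [conjDiag, mkSL_apply_one_one, mul_zero, zero_add, Nat.cast_one, mul_one]
  · rw [coe_natMul, Int.cast_zero, add_zero, Nat.cast_one, div_one]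

theorem eta_natCast_mul_smul_sq {γ : SL(2, ℤ)} {δ : ℕ} (hδ : 0 < δ) {c : ℤ}
    (h : γ 1 0 = δ * c) (τ : ℍ) : ModularForm.eta (δ * (γ • τ : ℍ)) ^ 2 =
      zeta12 (etaPoly (γ 0 0) (δ * γ 0 1) c (γ 1 1)) * (γ 1 0 * τ + γ 1 1) *
        ModularForm.eta (δ * τ) ^ 2 := by
  have hconj := eta_smul_sq (conjDiag γ δ c h) (natMul δ hδ τ)
  rw [← natMul_smul, coe_natMul, coe_natMul] at hconj
  rw [hconj]
  simp only [etaExp, conjDiag, mkSL_apply_zero_zero, mkSL_apply_zero_one, mkSL_apply_one_zero,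
    mkSL_apply_one_one, h]
  push_cast
  ring

/-- The condition on the exponents of an eta quotient under which its square is modular for
`Γ₀(N)`, as a congruence over `A`; it is needed over `ℤ / 4` and over `ℤ / 3`. -/
def EtaCongruence (A : Type*) [CommRing A] (N : ℕ) (s : ℕ → ℤ) : Prop :=
  ∀ a b c d : A, a * d - b * (N * c) = 1 →
    ∑ δ ∈ N.divisors, (s δ : A) * etaPoly a (δ * b) ((N / δ : ℕ) * c) d = 0

instance EtaCongruence.instDecidable (A : Type*) [CommRing A] [Fintype A] [DecidableEq A] (N : ℕ)
    (s : ℕ → ℤ) : Decidable (EtaCongruence A N s) := by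
  unfold EtaCongruence
  infer_instance

theorem EtaCongruence.intCast_sum_eq_zero {A : Type*} [CommRing A] {N : ℕ} {s : ℕ → ℤ}
    (h : EtaCongruence A N s) {γ : SL(2, ℤ)} {c : ℤ} (hc : γ 1 0 = N * c) :
    ((∑ δ ∈ N.divisors, s δ * etaPoly (γ 0 0) (δ * γ 0 1) ((N / δ : ℕ) * c) (γ 1 1) : ℤ) : A) =
      0 := by
  have hdet := SL_det_intCast (A := A) γ
  rw [hc] at hdet
  simpa only [Int.cast_sum, Int.cast_mul, Int.cast_natCast, etaPoly_intCast] using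
    h (γ 0 0) (γ 0 1) c (γ 1 1) (by exact_mod_cast hdet)

theorem etaQuot_smul_sq {N : ℕ} {s : ℕ → ℤ} (hs : ∑ δ ∈ N.divisors, s δ = 0)
    (h4 : EtaCongruence (ZMod 4) N s) (h3 : EtaCongruence (ZMod 3) N s) {γ : SL(2, ℤ)}
    (hγ : γ ∈ Gamma0 N) (τ : ℍ) : etaQuot N s (γ • τ) ^ 2 = etaQuot N s τ ^ 2 := by
  obtain ⟨c, hc⟩ := mem_Gamma0_iff_dvd.1 hγ
  have hterm : ∀ δ ∈ N.divisors, (ModularForm.eta (δ * (γ • τ : ℍ)) ^ s δ) ^ 2 =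
      zeta12 (s δ * etaPoly (γ 0 0) (δ * γ 0 1) ((N / δ : ℕ) * c) (γ 1 1)) *
        (γ 1 0 * τ + γ 1 1) ^ s δ * (ModularForm.eta (δ * τ) ^ s δ) ^ 2 := by
    intro δ hδ
    have hcδ : γ 1 0 = δ * ((N / δ : ℕ) * c) := by
      rw [hc, ← mul_assoc]
      congr 1
      exact_mod_cast (Nat.mul_div_cancel' (Nat.dvd_of_mem_divisors hδ)).symm
    rw [← zpow_natCast, zpow_comm, zpow_natCast,
      eta_natCast_mul_smul_sq (Nat.pos_of_mem_divisors hδ) hcδ τ, mul_zpow, mul_zpow, zeta12_mul,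
      ← zpow_natCast, zpow_comm, ← zpow_natCast]
  rw [etaQuot, ← Finset.prod_pow, Finset.prod_congr rfl hterm, Finset.prod_mul_distrib,
    Finset.prod_mul_distrib, ← zeta12_sum, prod_zpow_eq_zpow_sum (SL_denom_ne_zero γ τ), hs,
    zeta12_eq_one (twelve_dvd_of_zmod (h4.intCast_sum_eq_zero hc) (h3.intCast_sum_eq_zero hc)),
    zpow_zero, one_mul, one_mul, etaQuot, Finset.prod_pow]

theorem etaQuot_two_mul (N : ℕ) (s : ℕ → ℤ) (τ : ℍ) :
    etaQuot N (fun δ => 2 * s δ) τ = etaQuot N s τ ^ 2 := by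
  rw [etaQuot, etaQuot, ← Finset.prod_pow]
  refine Finset.prod_congr rfl fun δ _ => ?_
  rw [mul_comm (2 : ℤ), zpow_mul, zpow_ofNat]

theorem isHauptmodul_etaQuot_sq {N : ℕ} (hN : 0 < N) {s : ℕ → ℤ}
    (hs0 : ∑ δ ∈ N.divisors, s δ = 0) (hs12 : ∑ δ ∈ N.divisors, (δ : ℤ) * s δ = -12)
    (hord : ∀ k ∈ N.properDivisors,
      0 ≤ ∑ δ ∈ N.divisors, s δ * (Nat.gcd k δ : ℤ) ^ 2 * (N / δ : ℕ))
    (h4 : EtaCongruence (ZMod 4) N s) (h3 : EtaCongruence (ZMod 3) N s) :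
    IsHauptmodul (Gamma0 N) (etaQuot N fun δ => 2 * s δ) := by
  refine isHauptmodul_etaQuot hN ?_ ?_ (fun k hk => ?_) fun γ hγ τ => ?_
  · rw [← Finset.mul_sum, hs0, mul_zero]
  · simp only [mul_left_comm _ (2 : ℤ), ← Finset.mul_sum, hs12]
    norm_num
  · simp only [mul_assoc (2 : ℤ), ← Finset.mul_sum]
    exact mul_nonneg zero_le_two (hord k hk)
  · rw [etaQuot_two_mul, etaQuot_two_mul, etaQuot_smul_sq hs0 h4 h3 hγ]

/-- The exponents `r` of an eta quotient given by the list of the pairs `(δ, r δ)` with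
`r δ ≠ 0`. -/
def exponents (l : List (ℕ × ℤ)) (δ : ℕ) : ℤ := (l.lookup δ).getD 0

theorem exists_isHauptmodul_of_exponents {N : ℕ} (l : List (ℕ × ℤ))
    (h : 0 < N ∧ ∑ δ ∈ N.divisors, exponents l δ = 0 ∧
      ∑ δ ∈ N.divisors, (δ : ℤ) * exponents l δ = -12 ∧
      (∀ k ∈ N.properDivisors,
        0 ≤ ∑ δ ∈ N.divisors, exponents l δ * (Nat.gcd k δ : ℤ) ^ 2 * (N / δ : ℕ)) ∧
      EtaCongruence (ZMod 4) N (exponents l) ∧ EtaCongruence (ZMod 3) N (exponents l)) :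
    ∃ f, IsHauptmodul (Gamma0 N) f :=
  ⟨_, isHauptmodul_etaQuot_sq h.1 h.2.1 h.2.2.1 h.2.2.2.1 h.2.2.2.2.1 h.2.2.2.2.2⟩

theorem exists_isHauptmodul_of_even_exponents {N : ℕ}
    (hN : N ∈ ({2, 3, 4, 5, 6, 7, 8, 10, 12, 13, 16} : Set ℕ)) :
    ∃ f, IsHauptmodul (Gamma0 N) f := by
  obtain rfl | rfl | rfl | rfl | rfl | rfl | rfl | rfl | rfl | rfl | rfl := hN
  · exact exists_isHauptmodul_of_exponents [(1, 12), (2, -12)] (by decide +kernel)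
  · exact exists_isHauptmodul_of_exponents [(1, 6), (3, -6)] (by decide +kernel)
  · exact exists_isHauptmodul_of_exponents [(1, 4), (4, -4)] (by decide +kernel)
  · exact exists_isHauptmodul_of_exponents [(1, 3), (5, -3)] (by decide +kernel)
  · exact exists_isHauptmodul_of_exponents [(1, -2), (2, 4), (3, 2), (6, -4)] (by decide +kernel)
  · exact exists_isHauptmodul_of_exponents [(1, 2), (7, -2)] (by decide +kernel)
  · exact exists_isHauptmodul_of_exponents [(1, 2), (2, -1), (4, 1), (8, -2)] (by decide +kernel)
  · exact exists_isHauptmodul_of_exponents [(1, -1), (2, 2), (5, 1), (10, -2)] (by decide +kernel)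
  · exact exists_isHauptmodul_of_exponents [(2, -1), (4, 2), (6, 1), (12, -2)] (by decide +kernel)
  · exact exists_isHauptmodul_of_exponents [(1, 1), (13, -1)] (by decide +kernel)
  · exact exists_isHauptmodul_of_exponents [(4, -1), (8, 3), (16, -2)] (by decide +kernel)

/-! ### The quotient `η(p τ) / η(τ)` -/

theorem exists_const_of_sq_eq_mul_sq {f g : ℍ → ℂ} (hf : Continuous f) (hg : Continuous g)
    (hg0 : ∀ τ, g τ ≠ 0) {ν : ℂ} (h : ∀ τ, f τ ^ 2 = ν * g τ ^ 2) : ∃ μ, ∀ τ, f τ = μ * g τ := by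
  rcases eq_or_ne ν 0 with rfl | hν
  · exact ⟨0, fun τ => by simpa using h τ⟩
  obtain ⟨c, hc⟩ := IsAlgClosed.exists_pow_nat_eq ν two_pos
  have hc0 : c ≠ 0 := ne_zero_pow two_ne_zero (hc ▸ hν)
  have hsq (τ : ℍ) : (f τ / g τ) ^ 2 = c ^ 2 := by
    rw [div_pow, h, mul_div_cancel_right₀ _ (pow_ne_zero _ (hg0 τ)), hc]
  rcases isPreconnected_univ.eq_or_eq_neg_of_sq_eq (f := fun τ => f τ / g τ) (g := fun _ => c)
    (hf.div hg hg0).continuousOn continuousOn_const (fun τ _ => hsq τ) (fun _ => hc0)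
    with hpos | hneg
  · exact ⟨c, fun τ => (div_eq_iff (hg0 τ)).mp (hpos (Set.mem_univ τ))⟩
  · exact ⟨-c, fun τ => (div_eq_iff (hg0 τ)).mp (hneg (Set.mem_univ τ))⟩

/-- The quotient `η(p τ) / η(τ)`. -/
def etaRatio (p : ℕ) (τ : ℍ) : ℂ := ModularForm.eta (p * τ) / ModularForm.eta τ

theorem continuous_eta_natCast_mul {p : ℕ} (hp : 0 < p) :
    Continuous fun τ : ℍ => ModularForm.eta (p * τ) := by
  refine continuous_iff_continuousAt.mpr fun τ => ?_
  exact ContinuousAt.comp (f := fun τ : ℍ => (p * τ : ℂ))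
    (ModularForm.differentiableAt_eta_of_mem_upperHalfPlaneSet
      (im_natCast_mul_pos hp τ.im_pos)).continuousAt
    (continuous_const.mul continuous_coe).continuousAt

theorem eta_coe_ne_zero (τ : ℍ) : ModularForm.eta τ ≠ 0 := ModularForm.eta_ne_zero τ.im_pos

theorem etaRatio_ne_zero {p : ℕ} (hp : 0 < p) (τ : ℍ) : etaRatio p τ ≠ 0 :=
  div_ne_zero (eta_natCast_mul_ne_zero hp τ) (eta_coe_ne_zero τ)

theorem continuous_etaRatio {p : ℕ} (hp : 0 < p) : Continuous (etaRatio p) :=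
  (continuous_eta_natCast_mul hp).div
    (by simpa only [Nat.cast_one, one_mul] using continuous_eta_natCast_mul one_pos)
    eta_coe_ne_zero

theorem exists_etaRatio_smul_eq {p : ℕ} (hp : 0 < p) {γ : SL(2, ℤ)} (hγ : γ ∈ Gamma0 p) :
    ∃ μ, ∀ τ, etaRatio p (γ • τ) = μ * etaRatio p τ := by
  obtain ⟨c, hc⟩ := mem_Gamma0_iff_dvd.1 hγ
  refine exists_const_of_sq_eq_mul_sq ((continuous_etaRatio hp).comp (continuous_SL_smul γ))
    (continuous_etaRatio hp) (etaRatio_ne_zero hp)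
    (ν := zeta12 (etaPoly (γ 0 0) (p * γ 0 1) c (γ 1 1)) / zeta12 (etaExp γ)) fun τ => ?_
  have hdenom := SL_denom_ne_zero γ τ
  have hzeta := zeta12_ne_zero (etaExp γ)
  change etaRatio p (γ • τ) ^ 2 = _
  rw [etaRatio, etaRatio, div_pow, div_pow, eta_natCast_mul_smul_sq hp hc, eta_smul_sq]
  field_simp

theorem eta_add_natCast (z : ℂ) (n : ℕ) : ModularForm.eta (z + n) =
    Complex.exp (2 * Real.pi * Complex.I / 24) ^ n * ModularForm.eta z := by
  induction n with
  | zero => rw [Nat.cast_zero, add_zero, pow_zero, one_mul]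
  | succ n ih =>
    rw [Nat.cast_succ, ← add_assoc, eta_add_one, ih]
    ring

theorem zeta12_one : zeta12 1 = Complex.exp (2 * Real.pi * Complex.I / 24) ^ 2 := by
  rw [zeta12, zpow_one, ← Complex.exp_nat_mul]
  congr 1
  push_cast
  ring

theorem etaRatio_T_smul (k : ℕ) (τ : ℍ) : etaRatio (2 * k + 1) (ModularGroup.T • τ) =
    zeta12 1 ^ k * etaRatio (2 * k + 1) τ := by
  have hT : ((ModularGroup.T • τ : ℍ) : ℂ) = τ + 1 := by
    rw [modular_T_smul, coe_vadd, add_comm, Complex.ofReal_one]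
  have hexp := Complex.exp_ne_zero (2 * Real.pi * Complex.I / 24)
  rw [etaRatio, etaRatio, hT, mul_add, mul_one, eta_add_natCast, eta_add_one, zeta12_one]
  field_simp
  ring

/-- The Fricke involution `τ ↦ -1 / (p τ)`. -/
def fricke (p : ℕ) (hp : 0 < p) (τ : ℍ) : ℍ := ModularGroup.S • natMul p hp τ

theorem coe_fricke (p : ℕ) (hp : 0 < p) (τ : ℍ) : (fricke p hp τ : ℂ) = -1 / (p * τ) := by
  rw [fricke, modular_S_smul, coe_mk, coe_natMul, neg_div, one_div, inv_neg]

theorem continuous_fricke {p : ℕ} (hp : 0 < p) : Continuous (fricke p hp) :=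
  (continuous_SL_smul _).comp
    (isEmbedding_coe.continuous_iff.2 (continuous_const.mul continuous_coe))

theorem natCast_mul_fricke {p : ℕ} (hp : 0 < p) (τ : ℍ) :
    (p * fricke p hp τ : ℂ) = (ModularGroup.S • τ : ℍ) := by
  have hpc : (p : ℂ) ≠ 0 := Nat.cast_ne_zero.2 hp.ne'
  have hτ := τ.ne_zero
  rw [coe_fricke, modular_S_smul]
  change _ = (-(τ : ℂ))⁻¹
  rw [inv_neg]
  field_simp

theorem etaRatio_fricke_sq {p : ℕ} (hp : 0 < p) (τ : ℍ) :
    etaRatio p (fricke p hp τ) ^ 2 = (p : ℂ)⁻¹ * (etaRatio p τ)⁻¹ ^ 2 := by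
  have hpc : (p : ℂ) ≠ 0 := Nat.cast_ne_zero.2 hp.ne'
  have hτ := τ.ne_zero
  have hzeta := zeta12_ne_zero (-3)
  have hS := eta_S_smul_sq (natMul p hp τ)
  rw [coe_natMul, ← fricke] at hS
  rw [etaRatio, etaRatio, natCast_mul_fricke, div_pow, eta_S_smul_sq, hS]
  field_simp

theorem exists_etaRatio_fricke {p : ℕ} (hp : 0 < p) :
    ∃ C ≠ 0, ∀ τ, etaRatio p (fricke p hp τ) = C / etaRatio p τ := by
  obtain ⟨C, hC⟩ := exists_const_of_sq_eq_mul_sq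
    ((continuous_etaRatio hp).comp (continuous_fricke hp))
    ((continuous_etaRatio hp).inv₀ (etaRatio_ne_zero hp))
    (fun τ => inv_ne_zero (etaRatio_ne_zero hp τ)) (etaRatio_fricke_sq hp)
  refine ⟨C, ?_, hC⟩
  rintro rfl
  exact etaRatio_ne_zero hp _ ((hC I).trans (zero_mul _))

/-- The lower triangular unipotent matrix with lower left entry `p`. -/
def lowerSL (p : ℕ) : SL(2, ℤ) := mkSL 1 0 p 1 (by ring)

theorem T_smul_fricke_lowerSL_smul {p : ℕ} (hp : 0 < p) (τ : ℍ) :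
    ModularGroup.T • fricke p hp (lowerSL p • τ) = fricke p hp τ := by
  have hpc : (p : ℂ) ≠ 0 := Nat.cast_ne_zero.2 hp.ne'
  have hτ := τ.ne_zero
  have hdenom := SL_denom_ne_zero (lowerSL p) τ
  ext
  rw [modular_T_smul, coe_vadd, coe_fricke, coe_fricke, coe_SL_smul]
  simp only [lowerSL, mkSL_apply_zero_zero, mkSL_apply_zero_one, mkSL_apply_one_zero,
    mkSL_apply_one_one, Int.cast_one, Int.cast_zero, Int.cast_natCast, one_mul, add_zero,
    Complex.ofReal_one] at hdenom ⊢
  field_simp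
  ring

theorem etaRatio_lowerSL_smul {p k : ℕ} (hp : p = 2 * k + 1) (τ : ℍ) :
    etaRatio p (lowerSL p • τ) = zeta12 1 ^ k * etaRatio p τ := by
  have hp0 : 0 < p := by omega
  obtain ⟨C, hC0, hC⟩ := exists_etaRatio_fricke hp0
  have hT : etaRatio p (ModularGroup.T • fricke p hp0 (lowerSL p • τ)) = _ :=
    hp ▸ etaRatio_T_smul k _
  have hne := etaRatio_ne_zero hp0 τ
  have hne' := etaRatio_ne_zero hp0 (lowerSL p • τ)
  rw [T_smul_fricke_lowerSL_smul, hC, hC] at hT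
  field_simp at hT
  rw [hT, mul_comm]

theorem zeta12_etaExp_mul (γ δ : SL(2, ℤ)) :
    zeta12 (etaExp (γ * δ)) = zeta12 (etaExp γ) * zeta12 (etaExp δ) := by
  have h := eta_smul_sq (γ * δ) I
  rw [SL_denom_mul, mul_smul, eta_smul_sq, eta_smul_sq] at h
  have hγ := SL_denom_ne_zero γ (δ • I)
  have hδ := SL_denom_ne_zero δ I
  have heta := eta_coe_ne_zero I
  field_simp at h
  exact h.symm

/-! ### Generators of `Γ₀(3)` and `Γ₀(5)` -/

theorem mul_T_zpow_apply_one_zero (γ : SL(2, ℤ)) (m : ℤ) :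
    (γ * ModularGroup.T ^ m) 1 0 = γ 1 0 := by
  rw [SL_mul_apply, ModularGroup.coe_T_zpow]
  simp

theorem mul_T_zpow_apply_one_one (γ : SL(2, ℤ)) (m : ℤ) :
    (γ * ModularGroup.T ^ m) 1 1 = γ 1 1 + m * γ 1 0 := by
  rw [SL_mul_apply, ModularGroup.coe_T_zpow]
  simp only [Matrix.of_apply, Matrix.cons_val', Matrix.cons_val_one, Matrix.cons_val_fin_one,
    Matrix.cons_val_zero, mul_one]
  ring

theorem mem_of_apply_one_zero_eq_zero {H : Subgroup SL(2, ℤ)} (hT : ModularGroup.T ∈ H)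
    (hneg : -1 ∈ H) {γ : SL(2, ℤ)} (hγ : γ 1 0 = 0) : γ ∈ H := by
  have hdet := SL_det γ
  rw [hγ, mul_zero, sub_zero] at hdet
  rcases Int.eq_one_or_neg_one_of_mul_eq_one' hdet with ⟨ha, hd⟩ | ⟨ha, hd⟩
  · have hpos : γ = ModularGroup.T ^ γ 0 1 := by
      refine SL_ext ?_ ?_ ?_ ?_ <;> simp [ModularGroup.coe_T_zpow, ha, hd, hγ]
    rw [hpos]
    exact H.zpow_mem hT _
  · have hneg' : γ = -1 * ModularGroup.T ^ (-γ 0 1) := by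
      refine SL_ext ?_ ?_ ?_ ?_ <;>
        simp [Matrix.SpecialLinearGroup.coe_neg, ModularGroup.coe_T_zpow, ha, hd, hγ]
    rw [hneg']
    exact H.mul_mem hneg (H.zpow_mem hT _)

theorem exists_two_mul_abs_add_mul_le {c : ℤ} (hc : c ≠ 0) (d : ℤ) :
    ∃ m : ℤ, 2 * |d + m * c| ≤ |c| := by
  have hcq : (c : ℚ) ≠ 0 := Int.cast_ne_zero.2 hc
  have hround := abs_sub_round ((d : ℚ) / c)
  have hsub : (d : ℚ) / c - round ((d : ℚ) / c) =
      (d + (-round ((d : ℚ) / c) : ℤ) * c) / c := by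
    push_cast
    field_simp
    ring
  rw [hsub, abs_div, div_le_iff₀ (abs_pos.mpr hcq)] at hround
  refine ⟨-round ((d : ℚ) / c), ?_⟩
  have hcast : (2 : ℚ) * |(d : ℚ) + (-round ((d : ℚ) / c) : ℤ) * c| ≤ |(c : ℚ)| := by linarith
  exact_mod_cast hcast

theorem Gamma0_le_of_descent {p : ℕ} {H : Subgroup SL(2, ℤ)} (hT : ModularGroup.T ∈ H)
    (hneg : -1 ∈ H)
    (hdesc : ∀ γ ∈ Gamma0 p, γ 1 0 ≠ 0 → 2 * |γ 1 1| ≤ |γ 1 0| →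
      ∃ δ ∈ H, γ * δ ∈ Gamma0 p ∧ |(γ * δ) 1 0| < |γ 1 0|) : Gamma0 p ≤ H := by
  intro γ hγ
  induction hn : (γ 1 0).natAbs using Nat.strong_induction_on generalizing γ with
  | _ n ih =>
    rcases eq_or_ne (γ 1 0) 0 with h0 | h0
    · exact mem_of_apply_one_zero_eq_zero hT hneg h0
    obtain ⟨m, hm⟩ := exists_two_mul_abs_add_mul_le h0 (γ 1 1)
    rw [← mul_T_zpow_apply_one_one, ← mul_T_zpow_apply_one_zero γ m] at hm
    obtain ⟨δ, hδ, hmem, hlt⟩ := hdesc (γ * ModularGroup.T ^ m)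
      (mul_mem hγ (T_zpow_mem_Gamma0 p m)) (by rwa [mul_T_zpow_apply_one_zero]) hm
    rw [mul_T_zpow_apply_one_zero, Int.abs_eq_natAbs, Int.abs_eq_natAbs, hn, Nat.cast_lt] at hlt
    exact (H.mul_mem_cancel_right (H.zpow_mem hT m)).mp
      ((H.mul_mem_cancel_right hδ).mp (ih _ hlt hmem rfl))

theorem abs_add_lt_or_abs_sub_lt {c x : ℤ} (hx : x ≠ 0) (h : |x| < 2 * |c|) :
    |c + x| < |c| ∨ |c - x| < |c| := by
  grind

theorem exists_lowerSL_descent {p : ℕ} (hp : 0 < p) {H : Subgroup SL(2, ℤ)} (hV : lowerSL p ∈ H)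
    {γ : SL(2, ℤ)} (hγ : γ ∈ Gamma0 p) (hd : γ 1 1 ≠ 0) (hlt : p * |γ 1 1| < 2 * |γ 1 0|) :
    ∃ δ ∈ H, γ * δ ∈ Gamma0 p ∧ |(γ * δ) 1 0| < |γ 1 0| := by
  have hVp : lowerSL p ∈ Gamma0 p := by
    rw [mem_Gamma0_iff_dvd, lowerSL, mkSL_apply_one_zero]
  have hmul : (γ * lowerSL p) 1 0 = γ 1 0 + p * γ 1 1 := by
    rw [SL_mul_apply, lowerSL, mkSL_apply_zero_zero, mkSL_apply_one_zero]
    ring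
  have hmul_inv : (γ * (lowerSL p)⁻¹) 1 0 = γ 1 0 - p * γ 1 1 := by
    rw [SL_mul_apply, SL_inv_apply_zero_zero, SL_inv_apply_one_zero, lowerSL, mkSL_apply_one_one,
      mkSL_apply_one_zero]
    ring
  rcases abs_add_lt_or_abs_sub_lt (c := γ 1 0) (mul_ne_zero (Nat.cast_ne_zero.2 hp.ne') hd)
    (by rwa [abs_mul, Nat.abs_cast]) with hadd | hsub
  · exact ⟨_, hV, mul_mem hγ hVp, by rwa [hmul]⟩
  · exact ⟨_, inv_mem hV, mul_mem hγ (inv_mem hVp), by rwa [hmul_inv]⟩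

theorem apply_one_one_ne_zero_of_mem_Gamma0 {p : ℕ} (hp : 1 < p) {γ : SL(2, ℤ)}
    (hγ : γ ∈ Gamma0 p) : (γ 1 1 : ZMod p) ≠ 0 := by
  have : Fact (1 < p) := ⟨hp⟩
  intro h
  have hdet := SL_det_intCast (A := ZMod p) γ
  rw [Gamma0_mem.1 hγ, h, mul_zero, mul_zero, sub_zero] at hdet
  exact zero_ne_one hdet

theorem Gamma0_three_le {H : Subgroup SL(2, ℤ)} (hT : ModularGroup.T ∈ H) (hneg : -1 ∈ H)
    (hV : lowerSL 3 ∈ H) : Gamma0 3 ≤ H := by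
  refine Gamma0_le_of_descent hT hneg fun γ hγ hc hd =>
    exists_lowerSL_descent (by norm_num) hV hγ (fun h => ?_) ?_
  · exact apply_one_one_ne_zero_of_mem_Gamma0 (by norm_num) hγ (by rw [h, Int.cast_zero])
  · have := abs_pos.mpr hc
    push_cast
    linarith

theorem abs_two_mul_add_five_mul_lt {c d : ℤ} (hc : c ≠ 0) (hd : 2 * |d| ≤ |c|)
    (hlt : ¬5 * |d| < 2 * |c|) : |2 * c + 5 * d| < |c| ∨ |-2 * c + 5 * d| < |c| := by
  grind

theorem Gamma0_five_le {H : Subgroup SL(2, ℤ)} (hT : ModularGroup.T ∈ H) (hneg : -1 ∈ H)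
    (hV : lowerSL 5 ∈ H) (hE : mkSL 2 (-1) 5 (-2) (by norm_num) ∈ H)
    (hE' : mkSL (-2) (-1) 5 2 (by norm_num) ∈ H) : Gamma0 5 ≤ H := by
  refine Gamma0_le_of_descent hT hneg fun γ hγ hc hd => ?_
  by_cases hlt : 5 * |γ 1 1| < 2 * |γ 1 0|
  · refine exists_lowerSL_descent (by norm_num) hV hγ (fun h => ?_) (by exact_mod_cast hlt)
    exact apply_one_one_ne_zero_of_mem_Gamma0 (by norm_num) hγ (by rw [h, Int.cast_zero])
  have hmul {a d : ℤ} (h : a * d - (-1) * 5 = 1) :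
      (γ * mkSL a (-1) 5 d h) 1 0 = a * γ 1 0 + 5 * γ 1 1 := by
    rw [SL_mul_apply, mkSL_apply_zero_zero, mkSL_apply_one_zero]
    ring
  have hmem {a d : ℤ} (h : a * d - (-1) * 5 = 1) : mkSL a (-1) 5 d h ∈ Gamma0 5 := by
    rw [mem_Gamma0_iff_dvd, mkSL_apply_one_zero, Nat.cast_ofNat]
  rcases abs_two_mul_add_five_mul_lt hc hd hlt with hadd | hsub
  · exact ⟨_, hE, mul_mem hγ (hmem _), by rwa [hmul]⟩
  · exact ⟨_, hE', mul_mem hγ (hmem _), by rwa [hmul]⟩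

/-! ### Eta quotients at the levels `9`, `18` and `25` -/

/-- The multiplier of `(η(p τ) / η(τ)) ^ 3`, where `p = 2 * k + 1`. -/
def etaRatioMultiplier (p k : ℕ) [Fact p.Prime] (γ : SL(2, ℤ)) : ℂ :=
  zeta12 (etaExp γ) ^ (3 * k) * (quadraticChar (ZMod p) (γ 1 1 : ℤ) : ℤ)

theorem etaRatioMultiplier_mul {p : ℕ} [Fact p.Prime] (k : ℕ) {γ : SL(2, ℤ)}
    (hγ : γ ∈ Gamma0 p) (δ : SL(2, ℤ)) : etaRatioMultiplier p k (γ * δ) =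
      etaRatioMultiplier p k γ * etaRatioMultiplier p k δ := by
  have hmul : (((γ * δ) 1 1 : ℤ) : ZMod p) = (γ 1 1 : ℤ) * (δ 1 1 : ℤ) := by
    rw [SL_mul_apply, Int.cast_add, Int.cast_mul, Int.cast_mul, Gamma0_mem.1 hγ, zero_mul, zero_add]
  rw [etaRatioMultiplier, etaRatioMultiplier, etaRatioMultiplier, hmul, zeta12_etaExp_mul, map_mul,
    mul_pow, Int.cast_mul, mul_mul_mul_comm]

theorem etaRatioMultiplier_one (p k : ℕ) [Fact p.Prime] : etaRatioMultiplier p k 1 = 1 := by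
  have hzeta : zeta12 (etaExp 1) = 1 := by
    have h := zeta12_etaExp_mul 1 1
    rw [one_mul] at h
    exact (mul_eq_left₀ (zeta12_ne_zero _)).mp h.symm
  simp [etaRatioMultiplier, hzeta]

/-- The elements of `Γ₀(p)` under which `(η(p τ) / η(τ)) ^ 3` transforms by
`etaRatioMultiplier`. -/
def etaRatioSubgroup (p k : ℕ) [Fact p.Prime] : Subgroup SL(2, ℤ) where
  carrier := {γ | γ ∈ Gamma0 p ∧
    ∀ τ, etaRatio p (γ • τ) ^ 3 = etaRatioMultiplier p k γ * etaRatio p τ ^ 3}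
  one_mem' := ⟨one_mem _, fun τ => by rw [one_smul, etaRatioMultiplier_one, one_mul]⟩
  mul_mem' := fun hγ hδ => ⟨mul_mem hγ.1 hδ.1, fun τ => by
    rw [mul_smul, hγ.2, hδ.2, etaRatioMultiplier_mul k hγ.1, mul_assoc]⟩
  inv_mem' := fun {γ} hγ => ⟨inv_mem hγ.1, fun τ => by
    have hmult := etaRatioMultiplier_mul k (inv_mem hγ.1) γ
    rw [inv_mul_cancel, etaRatioMultiplier_one] at hmult
    have htrans := hγ.2 (γ⁻¹ • τ)
    rw [smul_inv_smul] at htrans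
    rw [htrans, ← mul_assoc, ← hmult, one_mul]⟩

theorem mem_etaRatioSubgroup_of_smul_eq {p : ℕ} (k : ℕ) [Fact p.Prime] {γ : SL(2, ℤ)}
    (hγ : γ ∈ Gamma0 p) {τ : ℍ} (hτ : γ • τ = τ) (hmult : etaRatioMultiplier p k γ = 1) :
    γ ∈ etaRatioSubgroup p k := by
  have hp : 0 < p := (Fact.out : p.Prime).pos
  obtain ⟨μ, hμ⟩ := exists_etaRatio_smul_eq hp hγ
  have hfix := hμ τ
  rw [hτ] at hfix
  have hμ1 : μ = 1 := (mul_eq_right₀ (etaRatio_ne_zero hp τ)).mp hfix.symm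
  exact ⟨hγ, fun τ => by rw [hμ, hμ1, hmult, one_mul, one_mul]⟩

theorem T_mem_etaRatioSubgroup {p k : ℕ} (hp : p = 2 * k + 1) [Fact p.Prime] :
    ModularGroup.T ∈ etaRatioSubgroup p k := by
  refine ⟨zpow_one ModularGroup.T ▸ T_zpow_mem_Gamma0 p 1, fun τ => ?_⟩
  have hratio : etaRatio p (ModularGroup.T • τ) = _ := hp ▸ etaRatio_T_smul k τ
  have hexp : etaExp ModularGroup.T = 1 := by decide
  have hchar : ModularGroup.T 1 1 = 1 := rfl
  rw [hratio, etaRatioMultiplier, hexp, hchar, Int.cast_one, map_one, Int.cast_one, mul_one,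
    mul_pow, ← pow_mul, mul_comm k 3]

theorem zeta12_etaExp_pow {γ : SL(2, ℤ)} {n : ℕ} {e : ℤ} (h : 12 ∣ n * etaExp γ - e) :
    zeta12 (etaExp γ) ^ n = zeta12 e := by
  rw [← zeta12_congr h, zeta12_mul, zpow_natCast]

theorem lowerSL_mem_etaRatioSubgroup {p k : ℕ} (hp : p = 2 * k + 1) [Fact p.Prime]
    (hk : 12 ∣ (3 * k : ℕ) * etaExp (lowerSL p) - (3 * k : ℕ)) :
    lowerSL p ∈ etaRatioSubgroup p k := by
  refine ⟨by rw [mem_Gamma0_iff_dvd, lowerSL, mkSL_apply_one_zero], fun τ => ?_⟩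
  have hzeta : zeta12 (etaExp (lowerSL p)) ^ (3 * k) = zeta12 1 ^ (3 * k) := by
    rw [zeta12_etaExp_pow hk, ← zpow_natCast, ← zeta12_mul, mul_one]
  have hchar : lowerSL p 1 1 = 1 := by rw [lowerSL, mkSL_apply_one_one]
  rw [etaRatio_lowerSL_smul hp, etaRatioMultiplier, hzeta, hchar, Int.cast_one, map_one,
    Int.cast_one, mul_one, mul_pow, ← pow_mul, mul_comm k 3]

theorem zeta12_six : zeta12 6 = -1 := by
  rw [zeta12, ← Complex.exp_int_mul, show ((6 : ℤ) : ℂ) * (2 * Real.pi * Complex.I / 12) =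
    Real.pi * Complex.I by push_cast; ring, Complex.exp_pi_mul_I]

theorem etaRatioMultiplier_eq_one_of_neg {p k : ℕ} [Fact p.Prime] {γ : SL(2, ℤ)}
    (hexp : 12 ∣ (3 * k : ℕ) * etaExp γ - 6)
    (hchar : quadraticChar (ZMod p) (γ 1 1 : ℤ) = -1) : etaRatioMultiplier p k γ = 1 := by
  rw [etaRatioMultiplier, zeta12_etaExp_pow hexp, zeta12_six, hchar]
  norm_num

theorem neg_one_mem_Gamma0 (N : ℕ) : (-1 : SL(2, ℤ)) ∈ Gamma0 N := by
  simp [Gamma0_mem]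

theorem Gamma0_three_le_etaRatioSubgroup : Gamma0 3 ≤ etaRatioSubgroup 3 1 := by
  refine Gamma0_three_le (T_mem_etaRatioSubgroup (p := 3) (k := 1) rfl) ?_
    (lowerSL_mem_etaRatioSubgroup (p := 3) (k := 1) rfl (by decide))
  exact mem_etaRatioSubgroup_of_smul_eq 1 (neg_one_mem_Gamma0 3) (τ := I) (by simp)
    (etaRatioMultiplier_eq_one_of_neg (by decide) (by decide))

theorem exists_mkSL_smul_eq_self {a c d : ℤ} (hc : 0 < c) (had : d = -a)
    (h : a * d - -1 * c = 1) : ∃ τ : ℍ, mkSL a (-1) c d h • τ = τ := by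
  subst had
  have hcR : (0 : ℝ) < c := Int.cast_pos.2 hc
  have hcC : (c : ℂ) ≠ 0 := Int.cast_ne_zero.2 hc.ne'
  have him : 0 < ((a + Complex.I) / c : ℂ).im := by
    rw [← Complex.ofReal_intCast c, Complex.div_ofReal_im]
    simpa using hcR
  have hdet : (a : ℂ) ^ 2 = c - 1 := by exact_mod_cast (by linarith : a ^ 2 = c - 1)
  refine ⟨⟨(a + Complex.I) / c, him⟩, ?_⟩
  ext
  rw [coe_SL_smul, mkSL_apply_zero_zero, mkSL_apply_zero_one, mkSL_apply_one_zero,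
    mkSL_apply_one_one, coe_mk, mul_div_cancel₀ _ hcC]
  push_cast
  rw [add_neg_cancel_comm, div_eq_div_iff Complex.I_ne_zero hcC, mul_div_assoc']
  field_simp
  linear_combination hdet - Complex.I_sq

theorem fact_prime_five : Fact (Nat.Prime 5) := ⟨Nat.prime_five⟩

attribute [local instance] fact_prime_five

theorem Gamma0_five_le_etaRatioSubgroup : Gamma0 5 ≤ etaRatioSubgroup 5 2 := by
  have hmem {a d : ℤ} (h : a * d - -1 * 5 = 1) : mkSL a (-1) 5 d h ∈ Gamma0 5 := by
    rw [mem_Gamma0_iff_dvd, mkSL_apply_one_zero, Nat.cast_ofNat]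
  refine Gamma0_five_le (T_mem_etaRatioSubgroup (p := 5) (k := 2) rfl) ?_
    (lowerSL_mem_etaRatioSubgroup (p := 5) (k := 2) rfl (by decide)) ?_ ?_
  · refine mem_etaRatioSubgroup_of_smul_eq 2 (neg_one_mem_Gamma0 5) (τ := I) (by simp) ?_
    rw [etaRatioMultiplier, zeta12_etaExp_pow (e := 0) (by decide), zeta12_eq_one (dvd_zero _),
      show quadraticChar (ZMod 5) ((-1 : SL(2, ℤ)) 1 1 : ℤ) = 1 by decide, Int.cast_one, mul_one]
  · obtain ⟨τ, hτ⟩ := exists_mkSL_smul_eq_self (a := 2) (c := 5) (d := -2) (by norm_num) rfl rfl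
    exact mem_etaRatioSubgroup_of_smul_eq 2 (hmem _) hτ
      (etaRatioMultiplier_eq_one_of_neg (by decide) (by decide))
  · obtain ⟨τ, hτ⟩ := exists_mkSL_smul_eq_self (a := -2) (c := 5) (d := 2) (by norm_num) rfl rfl
    exact mem_etaRatioSubgroup_of_smul_eq 2 (hmem _) hτ
      (etaRatioMultiplier_eq_one_of_neg (by decide) (by decide))

theorem etaRatio_sq_eq_mul {p : ℕ} (hp : 0 < p) (τ : ℍ) :
    etaRatio (p ^ 2) τ = etaRatio p τ * etaRatio p (natMul p hp τ) := by
  rw [etaRatio, etaRatio, etaRatio, coe_natMul,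
    div_mul_div_cancel₀' (eta_natCast_mul_ne_zero hp τ), ← mul_assoc, Nat.cast_pow, sq]

theorem twelve_dvd_etaExp_add_etaExp_conjDiag {p k : ℕ}
    (hdec : ∀ a b c d : ZMod 4, a * d - b * (p * (p * c)) = 1 →
      k * (etaPoly a b (p * (p * c)) d + etaPoly a (p * b) (p * c) d) = 0)
    {γ : SL(2, ℤ)} {c : ℤ} (hc : γ 1 0 = p * (p * c)) :
    12 ∣ (3 * k : ℕ) * (etaExp γ + etaExp (conjDiag γ p (p * c) hc)) := by
  have hdet := SL_det_intCast (A := ZMod 4) γ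
  rw [hc, Int.cast_mul, Int.cast_mul, Int.cast_natCast] at hdet
  have hfour : (4 : ℤ) ∣ k * (etaExp γ + etaExp (conjDiag γ p (p * c) hc)) := by
    refine (ZMod.intCast_zmod_eq_zero_iff_dvd _ 4).mp ?_
    simp only [etaExp, conjDiag, hc, mkSL_apply_zero_zero, mkSL_apply_zero_one,
      mkSL_apply_one_zero, mkSL_apply_one_one]
    push_cast [etaPoly_intCast]
    exact hdec (γ 0 0) (γ 0 1) c (γ 1 1) hdet
  rw [Nat.cast_mul, mul_assoc]
  exact mul_dvd_mul_left 3 hfour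

theorem etaRatioMultiplier_mul_conjDiag {p k : ℕ} [Fact p.Prime] {γ : SL(2, ℤ)}
    (hγ : γ ∈ Gamma0 p) {c : ℤ} (hc : γ 1 0 = p * c)
    (hdvd : 12 ∣ (3 * k : ℕ) * (etaExp γ + etaExp (conjDiag γ p c hc))) :
    etaRatioMultiplier p k γ * etaRatioMultiplier p k (conjDiag γ p c hc) = 1 := by
  have hzeta := zeta12_eq_one hdvd
  rw [zeta12_mul, zpow_natCast, zeta12_add, mul_pow] at hzeta
  have hchar := quadraticChar_sq_one
    (apply_one_one_ne_zero_of_mem_Gamma0 (Fact.out : p.Prime).one_lt hγ)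
  have hconj : (conjDiag γ p c hc) 1 1 = γ 1 1 := by rw [conjDiag, mkSL_apply_one_one]
  rw [etaRatioMultiplier, etaRatioMultiplier, hconj, mul_mul_mul_comm, hzeta, one_mul, ← sq]
  exact_mod_cast hchar

theorem etaRatio_sq_smul_pow_three {p k : ℕ} [Fact p.Prime]
    (hle : Gamma0 p ≤ etaRatioSubgroup p k)
    (hdec : ∀ a b c d : ZMod 4, a * d - b * (p * (p * c)) = 1 →
      k * (etaPoly a b (p * (p * c)) d + etaPoly a (p * b) (p * c) d) = 0)
    {γ : SL(2, ℤ)} (hγ : γ ∈ Gamma0 (p ^ 2)) (τ : ℍ) :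
    etaRatio (p ^ 2) (γ • τ) ^ 3 = etaRatio (p ^ 2) τ ^ 3 := by
  have hp : 0 < p := (Fact.out : p.Prime).pos
  obtain ⟨c, hc⟩ : ∃ c, γ 1 0 = p * (p * c) := by
    obtain ⟨c, hc⟩ := mem_Gamma0_iff_dvd.1 hγ
    exact ⟨c, by rw [hc, Nat.cast_pow, sq, mul_assoc]⟩
  have hγp : γ ∈ Gamma0 p := Gamma0_le_Gamma0 (dvd_pow_self p two_ne_zero) hγ
  have hconj : conjDiag γ p (p * c) hc ∈ Gamma0 p := by
    rw [mem_Gamma0_iff_dvd, conjDiag, mkSL_apply_one_zero]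
    exact dvd_mul_right _ _
  have hmult := etaRatioMultiplier_mul_conjDiag hγp hc
    (twelve_dvd_etaExp_add_etaExp_conjDiag hdec hc)
  rw [etaRatio_sq_eq_mul hp, etaRatio_sq_eq_mul hp, natMul_smul hp hc, mul_pow, mul_pow,
    (hle hγp).2, (hle hconj).2, mul_mul_mul_comm, hmult, one_mul]

theorem etaRatio_nine_smul_pow_three {γ : SL(2, ℤ)} (hγ : γ ∈ Gamma0 9) (τ : ℍ) :
    etaRatio 9 (γ • τ) ^ 3 = etaRatio 9 τ ^ 3 :=
  etaRatio_sq_smul_pow_three (p := 3) Gamma0_three_le_etaRatioSubgroup (by decide +kernel) hγ τ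

theorem etaRatio_twentyFive_smul_pow_three {γ : SL(2, ℤ)} (hγ : γ ∈ Gamma0 25) (τ : ℍ) :
    etaRatio 25 (γ • τ) ^ 3 = etaRatio 25 τ ^ 3 :=
  etaRatio_sq_smul_pow_three (p := 5) Gamma0_five_le_etaRatioSubgroup (by decide +kernel) hγ τ

theorem eq_of_sq_eq_of_pow_three_eq {K : Type*} [Field K] {x y : K} (hy : y ≠ 0)
    (h2 : x ^ 2 = y ^ 2) (h3 : x ^ 3 = y ^ 3) : x = y :=
  mul_left_cancel₀ (pow_ne_zero 2 hy) (by linear_combination h3 - x * h2)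

theorem etaQuot_nine_eq (τ : ℍ) :
    etaQuot 9 (exponents [(1, 3), (9, -3)]) τ = (etaRatio 9 τ ^ 3)⁻¹ := by
  rw [etaQuot, show Nat.divisors 9 = {1, 3, 9} by decide +kernel]
  simp only [exponents, List.lookup, Int.reduceNeg, Finset.mem_insert, OfNat.one_ne_ofNat,
    Finset.mem_singleton, or_self, not_false_eq_true, Finset.prod_insert, Nat.cast_one, one_mul,
    BEq.rfl, Option.getD_some, zpow_ofNat, Nat.reduceEqDiff, Nat.cast_ofNat, Nat.reduceBEq,
    Option.getD_none, pow_zero, Finset.prod_singleton, zpow_neg, etaRatio, div_pow, inv_div]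
  ring

theorem etaQuot_twentyFive_eq (τ : ℍ) :
    etaQuot 25 (exponents [(1, 1), (25, -1)]) τ = (etaRatio 25 τ)⁻¹ := by
  rw [etaQuot, show Nat.divisors 25 = {1, 5, 25} by decide +kernel]
  simp only [exponents, List.lookup, Int.reduceNeg, Finset.mem_insert, OfNat.one_ne_ofNat,
    Finset.mem_singleton, or_self, not_false_eq_true, Finset.prod_insert, Nat.cast_one, one_mul,
    BEq.rfl, Option.getD_some, zpow_ofNat, pow_one, Nat.reduceEqDiff, Nat.cast_ofNat,
    Nat.reduceBEq, Option.getD_none, pow_zero, Finset.prod_singleton, zpow_neg, etaRatio, inv_div]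
  ring

theorem etaQuot_eighteen_eq (τ : ℍ) :
    etaQuot 18 (exponents [(1, -1), (2, 2), (9, 1), (18, -2)]) τ =
      etaRatio 9 τ / etaRatio 9 (natMul 2 two_pos τ) ^ 2 := by
  have h18 : (9 * (2 * τ) : ℂ) = 18 * τ := by ring
  rw [etaQuot, show Nat.divisors 18 = {1, 2, 3, 6, 9, 18} by decide +kernel]
  simp only [exponents, List.lookup, Int.reduceNeg, Finset.mem_insert, OfNat.one_ne_ofNat,
    Finset.mem_singleton, or_self, not_false_eq_true, Finset.prod_insert, Nat.cast_one, one_mul,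
    BEq.rfl, Option.getD_some, zpow_neg, zpow_ofNat, pow_one, Nat.reduceEqDiff, Nat.cast_ofNat,
    Nat.reduceBEq, Option.getD_none, pow_zero, Finset.prod_singleton, etaRatio, coe_natMul, h18,
    div_pow]
  rw [div_div_eq_mul_div]
  ring

theorem exists_isHauptmodul_nine : ∃ f, IsHauptmodul (Gamma0 9) f := by
  refine ⟨_, isHauptmodul_etaQuot (by norm_num) (r := exponents [(1, 3), (9, -3)])
    (by decide +kernel) (by decide +kernel) (by decide +kernel) fun γ hγ τ => ?_⟩
  rw [etaQuot_nine_eq, etaQuot_nine_eq, etaRatio_nine_smul_pow_three hγ]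

theorem exists_isHauptmodul_twentyFive : ∃ f, IsHauptmodul (Gamma0 25) f := by
  refine ⟨_, isHauptmodul_etaQuot (by norm_num) (r := exponents [(1, 1), (25, -1)])
    (by decide +kernel) (by decide +kernel) (by decide +kernel) fun γ hγ τ => ?_⟩
  refine eq_of_sq_eq_of_pow_three_eq (etaQuot_ne_zero _ _ _)
    (etaQuot_smul_sq (by decide +kernel) (by decide +kernel) (by decide +kernel) hγ τ) ?_
  rw [etaQuot_twentyFive_eq, etaQuot_twentyFive_eq, inv_pow, inv_pow,
    etaRatio_twentyFive_smul_pow_three hγ]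

theorem exists_isHauptmodul_eighteen : ∃ f, IsHauptmodul (Gamma0 18) f := by
  refine ⟨_, isHauptmodul_etaQuot (by norm_num)
    (r := exponents [(1, -1), (2, 2), (9, 1), (18, -2)])
    (by decide +kernel) (by decide +kernel) (by decide +kernel) fun γ hγ τ => ?_⟩
  refine eq_of_sq_eq_of_pow_three_eq (etaQuot_ne_zero _ _ _)
    (etaQuot_smul_sq (by decide +kernel) (by decide +kernel) (by decide +kernel) hγ τ) ?_
  obtain ⟨c, hc⟩ : ∃ c, γ 1 0 = (2 : ℕ) * (9 * c) := by
    obtain ⟨c, hc⟩ := mem_Gamma0_iff_dvd.1 hγ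
    exact ⟨c, by rw [hc]; push_cast; ring⟩
  have hγ9 : γ ∈ Gamma0 9 := Gamma0_le_Gamma0 (by norm_num) hγ
  have hconj : conjDiag γ 2 (9 * c) hc ∈ Gamma0 9 := by
    rw [mem_Gamma0_iff_dvd, conjDiag, mkSL_apply_one_zero]
    exact dvd_mul_right _ _
  rw [etaQuot_eighteen_eq, etaQuot_eighteen_eq, natMul_smul two_pos hc, div_pow, div_pow,
    ← pow_mul, ← pow_mul, mul_comm 2 3, pow_mul, pow_mul, etaRatio_nine_smul_pow_three hγ9,
    etaRatio_nine_smul_pow_three hconj]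

theorem exists_isHauptmodul {N : ℕ}
    (hN : N ∈ ({2, 3, 4, 5, 6, 7, 8, 9, 10, 12, 13, 16, 18, 25} : Set ℕ)) :
    ∃ f, IsHauptmodul (Gamma0 N) f := by
  by_cases heven : N ∈ ({2, 3, 4, 5, 6, 7, 8, 10, 12, 13, 16} : Set ℕ)
  · exact exists_isHauptmodul_of_even_exponents heven
  have hodd : N = 9 ∨ N = 18 ∨ N = 25 := by
    simp only [Set.mem_insert_iff, Set.mem_singleton_iff] at hN heven
    tauto
  obtain rfl | rfl | rfl := hodd
  exacts [exists_isHauptmodul_nine, exists_isHauptmodul_eighteen, exists_isHauptmodul_twentyFive]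

/-! ### Coxeter numbers of the A-type root systems -/

theorem cox_eq_coxOf : ∀ X ∈ NiemeierRootSystems, ∀ C ∈ X, C.cox = coxOf X := by decide

theorem map_coxOf_filter_isA :
    (NiemeierRootSystems.filter fun X => X.any ADE.isA).map coxOf =
      [2, 3, 4, 5, 6, 7, 8, 9, 10, 12, 13, 16, 18, 25] := by
  decide

theorem coxeterNumbers_eq :
    {m : ℕ | ∃ X ∈ NiemeierRootSystems, X.any ADE.isA = true ∧ ∀ C ∈ X, C.cox = m} =
      ({2, 3, 4, 5, 6, 7, 8, 9, 10, 12, 13, 16, 18, 25} : Set ℕ) := by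
  have hlist (m : ℕ) : m ∈ [2, 3, 4, 5, 6, 7, 8, 9, 10, 12, 13, 16, 18, 25] ↔
      m ∈ ({2, 3, 4, 5, 6, 7, 8, 9, 10, 12, 13, 16, 18, 25} : Set ℕ) := by
    simp only [List.mem_cons, List.not_mem_nil, or_false, Set.mem_insert_iff,
      Set.mem_singleton_iff]
  ext m
  rw [← hlist, ← map_coxOf_filter_isA, List.mem_map]
  constructor
  · rintro ⟨X, hX, hA, hm⟩
    obtain ⟨C, hC, -⟩ := List.any_eq_true.1 hA
    exact ⟨X, List.mem_filter.2 ⟨hX, hA⟩, (cox_eq_coxOf X hX C hC).symm.trans (hm C hC)⟩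
  · rintro ⟨X, hX, rfl⟩
    obtain ⟨hX, hA⟩ := List.mem_filter.1 hX
    exact ⟨X, hX, hA, cox_eq_coxOf X hX⟩

end

/-- the set of Coxeter numbers of the A-type Niemeier root systems is
exactly `{2,3,4,5,6,7,8,9,10,12,13,16,18,25}`, and this set coincides with the set of
integers `n > 1` for which `Γ0(n)` has genus zero (equivalently, admits a principal
modulus). -/
theorem statement13 :
    {m : ℕ | ∃ X ∈ NiemeierRootSystems, X.any ADE.isA = true ∧ ∀ C ∈ X, C.cox = m} =
      ({2, 3, 4, 5, 6, 7, 8, 9, 10, 12, 13, 16, 18, 25} : Set ℕ) ∧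
    ({2, 3, 4, 5, 6, 7, 8, 9, 10, 12, 13, 16, 18, 25} : Set ℕ) =
      {n : ℕ | 1 < n ∧
        ∃ f : UpperHalfPlane → ℂ, IsPrincipalModulus (GammaPlus n {1}) f} := by
  refine ⟨coxeterNumbers_eq, ?_⟩
  ext n
  simp only [isPrincipalModulus_gammaPlus_iff, Set.mem_ofPred_eq]
  refine ⟨fun hn => ⟨?_, exists_isHauptmodul hn⟩, fun ⟨hn, f, hf⟩ => hf.level_mem hn⟩
  simp only [Set.mem_insert_iff, Set.mem_singleton_iff] at hn
  omega
end
end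

section
/- Let m be a positive integer, let e be an exact divisor of m (e|m and gcd(e, m/e) = 1), and let f be a divisor of m. Then for any a, b, c, d ∈ Z with ade − bcm/e = 1 and γ = (1/√e)[[ae, b],[cm, de]] ∈ SL2(R), and all τ in the upper half-plane, one has e·(cmτ + de)^{−2}·λ_f((aeτ + b)/(cmτ + de)) = λ_{e∗f}(τ) − λ_e(τ), where e∗f = ef/gcd(e,f)². In other words, the weight 2 action of the Atkin–Lehner coset W_m(e) sends λ_f to λ_{e∗f} − λ_e. -/
/-!
Write `E₂*(z) = E₂(z) - 3 / (π Im z)` for the completed Eisenstein series, which has weight 2 for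
`SL₂(ℤ)`, and `B_N = diag(N, 1)`. The nonholomorphic terms cancel in
`24 λ_N = E₂* ∣ B_N - E₂*`. For an Atkin–Lehner matrix `W` attached to `e`, and `g = gcd(e, f)`,
there is `γ ∈ SL₂(ℤ)` with `B_f W = g γ B_{e∗f}`. Scalar matrices act trivially in weight 2, so
`E₂* ∣ B_f W = E₂* ∣ B_{e∗f}`; subtracting the case `f = 1` gives the formula.
-/

noncomputable section

open Topology MeasureTheory

/-- The weight 2 Eisenstein form
`λ_N(τ) = q∂_q log(η(Nτ)/η(τ)) = (N-1)/24 + Σ_{k>0} σ(k)(q^k - N q^{Nk})`. -/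
def lambdaN (N : ℕ) (τ : ℂ) : ℂ :=
  ((N : ℂ) - 1) / 24 +
    ∑' k : ℕ, ((ArithmeticFunction.sigma 1) (k + 1) : ℂ) *
      (e2 ((k + 1 : ℂ) * τ) - (N : ℂ) * e2 ((N : ℂ) * (k + 1 : ℂ) * τ))

open UpperHalfPlane EisensteinSeries
open Matrix (GeneralLinearGroup det_fin_two_of)
open scoped MatrixGroups ModularForm

lemma e2_natCast_succ_mul (k : ℕ) (τ : ℂ) :
    e2 ((k + 1 : ℂ) * τ) = Complex.exp (2 * Real.pi * Complex.I * τ) ^ (k + 1) := by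
  rw [e2, ← Complex.exp_nat_mul]
  congr 1
  push_cast
  ring

lemma summable_sigma_mul_e2 (z : ℍ) :
    Summable fun k : ℕ ↦ ((ArithmeticFunction.sigma 1) (k + 1) : ℂ) * e2 ((k + 1 : ℂ) * z) := by
  simp_rw [e2_natCast_succ_mul]
  exact (summable_nat_add_iff 1).mpr (summable_sigma_mul_cexp_pow (k := 2) one_le_two z)

lemma E2_eq_tsum_e2 (z : ℍ) :
    E2 z = 1 - 24 * ∑' k : ℕ,
      ((ArithmeticFunction.sigma 1) (k + 1) : ℂ) * e2 ((k + 1 : ℂ) * z) := by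
  rw [E2_eq_tsum_cexp, tsum_pnat_eq_tsum_succ
    (f := fun n : ℕ ↦ ((ArithmeticFunction.sigma 1) n : ℂ) *
      Complex.exp (2 * Real.pi * Complex.I * z) ^ n)]
  simp_rw [e2_natCast_succ_mul]

/-- The completed Eisenstein series `E₂*(z) = E₂(z) - 3 / (π Im z)`, which trades the
holomorphy of `E₂` for invariance of weight 2. -/
def completedE2 (z : ℍ) : ℂ := E2 z - 3 / Real.pi * (z.im : ℂ)⁻¹

lemma inv_im_slash_two (γ : SL(2, ℤ)) :
    (fun z : ℍ ↦ (z.im : ℂ)⁻¹) ∣[(2 : ℤ)] γ =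
      (fun z : ℍ ↦ (z.im : ℂ)⁻¹) - (Real.pi : ℂ)⁻¹ • D2 γ := by
  ext z
  have hdenom : denom γ z ≠ 0 := denom_ne_zero γ z
  have him : (z.im : ℂ) ≠ 0 := Complex.ofReal_ne_zero.mpr z.im_ne_zero
  have hconj : (starRingEnd ℂ) (denom γ z) = denom γ z - 2 * Complex.I * γ 1 0 * z.im := by
    rw [ModularGroup.denom_apply]
    exact Complex.ext (by simp) (by simp; ring)
  have hsmul : ((γ • z).im : ℂ)⁻¹ = denom γ z * (starRingEnd ℂ) (denom γ z) / z.im := by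
    rw [Complex.mul_conj, ModularGroup.im_smul_eq_div_normSq]
    simp
  rw [ModularForm.SL_slash_apply, hsmul, hconj, Pi.sub_apply, Pi.smul_apply, D2, smul_eq_mul,
    zpow_neg, zpow_ofNat]
  field_simp

lemma completedE2_slash (γ : SL(2, ℤ)) : completedE2 ∣[(2 : ℤ)] γ = completedE2 := by
  have hdecomp : completedE2 = E2 + (-3 / Real.pi : ℂ) • fun z : ℍ ↦ (z.im : ℂ)⁻¹ := by
    ext z
    simp only [completedE2, Pi.add_apply, Pi.smul_apply, smul_eq_mul]
    ring
  rw [hdecomp, SlashAction.add_slash, ModularForm.SL_smul_slash, inv_im_slash_two,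
    E2_slash_action, riemannZeta_two]
  ext z
  simp only [Pi.add_apply, Pi.sub_apply, Pi.smul_apply, smul_eq_mul]
  field_simp
  ring

lemma slash_scalar (k : ℤ) (u : ℝˣ) (φ : ℍ → ℂ) :
    φ ∣[k] GeneralLinearGroup.scalar (Fin 2) u = (u : ℂ) ^ (k - 2) • φ := by
  have hu : (u : ℂ) ≠ 0 := Complex.ofReal_ne_zero.mpr u.ne_zero
  have hdet : (GeneralLinearGroup.scalar (Fin 2) u).det.val = (u : ℝ) ^ 2 := by simp
  ext z
  rw [ModularForm.slash_apply, σ, if_pos (hdet ▸ sq_pos_of_ne_zero u.ne_zero), hdet,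
    glScalar_smul, denom_scalar, abs_of_nonneg (sq_nonneg _), Pi.smul_apply, smul_eq_mul,
    ContinuousAlgEquiv.refl_apply, mul_assoc, mul_comm]
  push_cast
  rw [← zpow_natCast, ← zpow_mul, ← zpow_add₀ hu]
  congr 2
  push_cast
  ring

/-- The matrix `B_N = diag(N, 1)`, acting on functions on `ℍ` by the level-raising operator. -/
def levelRaise (N : ℕ) [NeZero N] : GL (Fin 2) ℝ :=
  .mkOfDetNeZero !![(N : ℝ), 0; 0, 1] (by simp [NeZero.ne N])

section levelRaise

variable (N : ℕ) [NeZero N]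

lemma det_levelRaise : (levelRaise N).det.val = N := by
  simp [levelRaise]

lemma det_levelRaise_pos : 0 < (levelRaise N).det.val := by
  rw [det_levelRaise]
  exact_mod_cast NeZero.pos N

lemma denom_levelRaise (z : ℂ) : denom (levelRaise N) z = 1 := by
  simp [denom, levelRaise]

lemma coe_levelRaise_smul (z : ℍ) : (↑(levelRaise N • z) : ℂ) = N * z := by
  rw [coe_smul_of_det_pos (det_levelRaise_pos N), denom_levelRaise]
  simp [num, levelRaise]

lemma slash_levelRaise_apply (k : ℤ) (φ : ℍ → ℂ) (z : ℍ) :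
    (φ ∣[k] levelRaise N) z = (N : ℂ) ^ (k - 1) * φ (levelRaise N • z) := by
  rw [ModularForm.slash_apply, σ, if_pos (det_levelRaise_pos N), det_levelRaise, denom_levelRaise]
  simp [mul_comm]

lemma levelRaise_one : levelRaise 1 = 1 := by
  ext i j
  fin_cases i <;> fin_cases j <;> simp [levelRaise]

end levelRaise

/-- The form `λ_N` as a function on the upper half-plane, on which the slash action is defined. -/
def lambdaForm (N : ℕ) (z : ℍ) : ℂ := lambdaN N z

lemma lambdaForm_apply_eq_E2 (N : ℕ) [NeZero N] (z : ℍ) :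
    lambdaForm N z = (N * E2 (levelRaise N • z) - E2 z) / 24 := by
  have hterm (k : ℕ) : ((ArithmeticFunction.sigma 1) (k + 1) : ℂ) *
      (e2 ((k + 1 : ℂ) * z) - (N : ℂ) * e2 ((N : ℂ) * (k + 1 : ℂ) * z)) =
      ((ArithmeticFunction.sigma 1) (k + 1) : ℂ) * e2 ((k + 1 : ℂ) * z) -
      N * (((ArithmeticFunction.sigma 1) (k + 1) : ℂ) *
        e2 ((k + 1 : ℂ) * ↑(levelRaise N • z))) := by
    rw [coe_levelRaise_smul, mul_left_comm (k + 1 : ℂ), mul_assoc (N : ℂ)]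
    ring
  rw [lambdaForm, lambdaN, tsum_congr hterm, (summable_sigma_mul_e2 z).tsum_sub
    ((summable_sigma_mul_e2 (levelRaise N • z)).mul_left _), tsum_mul_left,
    E2_eq_tsum_e2, E2_eq_tsum_e2]
  ring

lemma lambdaForm_eq_completedE2 (N : ℕ) [NeZero N] :
    lambdaForm N = (1 / 24 : ℂ) • (completedE2 ∣[(2 : ℤ)] levelRaise N - completedE2) := by
  ext z
  have hN : (N : ℂ) ≠ 0 := NeZero.ne _
  have him : ((levelRaise N • z).im : ℂ) = N * z.im := by
    rw [← coe_im, coe_levelRaise_smul]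
    simp
  rw [lambdaForm_apply_eq_E2, Pi.smul_apply, Pi.sub_apply, slash_levelRaise_apply, completedE2,
    completedE2, him, smul_eq_mul, mul_inv, show (2 : ℤ) - 1 = 1 from rfl, zpow_one]
  field_simp
  ring

/-- The Atkin–Lehner matrix `[[ae, b], [cm, de]]` of level `m = en`, left unnormalised: the power
of the determinant in the weight 2 slash action accounts for the factor `1/√e`. -/
def atkinLehnerMatrix {e n : ℕ} [NeZero e] {a b c d : ℤ} (h : a * d * e - b * c * n = 1) :
    GL (Fin 2) ℝ :=
  .mkOfDetNeZero !![(a * e : ℝ), b; c * (e * n), d * e] <| by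
    have hR : (a * d * e - b * c * n : ℝ) = 1 := by exact_mod_cast h
    rw [det_fin_two_of, show (a * e * (d * e) - b * (c * (e * n)) : ℝ) = e by
      linear_combination e * hR]
    exact NeZero.ne _

section atkinLehnerMatrix

variable {e n : ℕ} [NeZero e] {a b c d : ℤ} (h : a * d * e - b * c * n = 1)

lemma det_atkinLehnerMatrix : (atkinLehnerMatrix h).det.val = e := by
  have hR : (a * d * e - b * c * n : ℝ) = 1 := by exact_mod_cast h
  simp only [atkinLehnerMatrix, GeneralLinearGroup.val_det_apply,
    GeneralLinearGroup.val_mkOfDetNeZero, det_fin_two_of]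
  linear_combination e * hR

lemma σ_atkinLehnerMatrix : σ (atkinLehnerMatrix h) = .refl ℝ ℂ := by
  rw [σ, if_pos]
  rw [det_atkinLehnerMatrix]
  exact_mod_cast NeZero.pos e

lemma denom_atkinLehnerMatrix (z : ℂ) :
    denom (atkinLehnerMatrix h) z = c * (e * n) * z + d * e := by
  simp [denom, atkinLehnerMatrix]

lemma coe_atkinLehnerMatrix_smul (z : ℍ) :
    (↑(atkinLehnerMatrix h • z) : ℂ) = (a * e * z + b) / (c * (e * n) * z + d * e) := by
  rw [coe_smul, σ_atkinLehnerMatrix, denom_atkinLehnerMatrix]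
  simp [num, atkinLehnerMatrix]

lemma slash_atkinLehnerMatrix_apply (k : ℤ) (φ : ℍ → ℂ) (z : ℍ) :
    (φ ∣[k] atkinLehnerMatrix h) z =
      (e : ℂ) ^ (k - 1) * (c * (e * n) * z + d * e) ^ (-k) * φ (atkinLehnerMatrix h • z) := by
  rw [ModularForm.slash_apply, σ_atkinLehnerMatrix, det_atkinLehnerMatrix,
    denom_atkinLehnerMatrix, ContinuousAlgEquiv.refl_apply, Nat.abs_cast, Complex.ofReal_natCast]
  ring

end atkinLehnerMatrix

lemma exists_levelRaise_mul_atkinLehnerMatrix {g e f n : ℕ} [NeZero g] [NeZero e] [NeZero f]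
    {a b c d : ℤ} (h : a * d * (g * e : ℕ) - b * c * (f * n : ℕ) = 1) :
    ∃ γ : SL(2, ℤ), levelRaise (g * f) * atkinLehnerMatrix h =
      GeneralLinearGroup.scalar (Fin 2) (Units.mk0 (g : ℝ) (NeZero.ne _)) * γ *
        levelRaise (e * f) := by
  let γ : SL(2, ℤ) := ⟨!![a * g, b * f; c * n, d * e], by
    rw [det_fin_two_of]
    push_cast at h
    linear_combination h⟩
  have hγ : (γ : GL (Fin 2) ℝ).val = !![(a * g : ℝ), b * f; c * n, d * e] := by
    ext i j
    rw [Matrix.SpecialLinearGroup.coe_GL_coe_matrix, Matrix.SpecialLinearGroup.map_apply_coe]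
    fin_cases i <;> fin_cases j <;> simp [γ]
  refine ⟨γ, Units.ext ?_⟩
  rw [Units.val_mul, Units.val_mul, Units.val_mul, hγ, GeneralLinearGroup.coe_scalar,
    Units.val_mk0, Matrix.scalar_apply, ← Matrix.smul_eq_diagonal_mul]
  ext i j
  fin_cases i <;> fin_cases j <;> simp [levelRaise, atkinLehnerMatrix] <;> ring

lemma completedE2_slash_levelRaise_slash_atkinLehnerMatrix {g e f n : ℕ} [NeZero g]
    [NeZero e] [NeZero f] {a b c d : ℤ} (h : a * d * (g * e : ℕ) - b * c * (f * n : ℕ) = 1) :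
    (completedE2 ∣[(2 : ℤ)] levelRaise (g * f)) ∣[(2 : ℤ)] atkinLehnerMatrix h =
      completedE2 ∣[(2 : ℤ)] levelRaise (e * f) := by
  obtain ⟨γ, hγ⟩ := exists_levelRaise_mul_atkinLehnerMatrix h
  rw [← SlashAction.slash_mul, hγ, SlashAction.slash_mul, SlashAction.slash_mul, slash_scalar,
    sub_self, zpow_zero, one_smul, ← ModularForm.SL_slash, completedE2_slash]

lemma completedE2_slash_atkinLehnerMatrix {e n : ℕ} [NeZero e] {a b c d : ℤ}
    (h : a * d * e - b * c * n = 1) :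
    completedE2 ∣[(2 : ℤ)] atkinLehnerMatrix h = completedE2 ∣[(2 : ℤ)] levelRaise e := by
  have h' : a * d * (1 * e : ℕ) - b * c * (1 * n : ℕ) = 1 := by simpa only [one_mul] using h
  simpa [levelRaise_one] using completedE2_slash_levelRaise_slash_atkinLehnerMatrix h'

lemma exists_common_factor_of_dvd_mul {e f n : ℕ} [NeZero e] (hf : f ∣ e * n) :
    ∃ g e' f' k : ℕ, e = g * e' ∧ f = g * f' ∧ n = f' * k ∧
      e * f / Nat.gcd e f ^ 2 = e' * f' := by
  have hg : 0 < Nat.gcd e f := Nat.gcd_pos_of_pos_left f (NeZero.pos e)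
  obtain ⟨e', f', hcop, he', hf'⟩ := Nat.exists_coprime e f
  obtain ⟨k, hk⟩ : f' ∣ n := by
    refine hcop.symm.dvd_of_dvd_mul_left (Nat.dvd_of_mul_dvd_mul_right hg ?_)
    rwa [← hf', mul_right_comm, ← he']
  refine ⟨Nat.gcd e f, e', f', k, by rwa [mul_comm], by rwa [mul_comm], hk, ?_⟩
  refine Nat.div_eq_of_eq_mul_right (pow_pos hg 2) ?_
  calc e * f = e' * Nat.gcd e f * (f' * Nat.gcd e f) := by rw [← he', ← hf']
    _ = Nat.gcd e f ^ 2 * (e' * f') := by ring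

theorem lambdaForm_slash_atkinLehnerMatrix {e f n : ℕ} [NeZero e] [NeZero f] (hf : f ∣ e * n)
    {a b c d : ℤ} (h : a * d * e - b * c * n = 1) :
    lambdaForm f ∣[(2 : ℤ)] atkinLehnerMatrix h =
      lambdaForm (e * f / Nat.gcd e f ^ 2) - lambdaForm e := by
  obtain ⟨g, e', f', k, rfl, rfl, rfl, hstar⟩ := exists_common_factor_of_dvd_mul hf
  have : NeZero g := ⟨left_ne_zero_of_mul (NeZero.ne (g * e'))⟩
  have : NeZero e' := ⟨right_ne_zero_of_mul (NeZero.ne (g * e'))⟩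
  have : NeZero f' := ⟨right_ne_zero_of_mul (NeZero.ne (g * f'))⟩
  rw [hstar, lambdaForm_eq_completedE2 (g * f'), lambdaForm_eq_completedE2 (e' * f'),
    lambdaForm_eq_completedE2 (g * e'), ModularForm.smul_slash, σ_atkinLehnerMatrix,
    ContinuousAlgEquiv.refl_apply, sub_eq_add_neg, SlashAction.add_slash, SlashAction.neg_slash,
    completedE2_slash_levelRaise_slash_atkinLehnerMatrix, completedE2_slash_atkinLehnerMatrix,
    ← smul_sub, sub_sub_sub_cancel_right, sub_eq_add_neg]

/-- let `e` be an exact divisor of `m` and `f ∣ m`.  For any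
`a, b, c, d ∈ ℤ` with `ade - bc(m/e) = 1`, defining
`γ = (1/√e)[[ae, b],[cm, de]] ∈ SL₂(ℝ)`, the weight 2 action of `γ` on `λ_f` satisfies
`e·(cmτ + de)⁻²·λ_f((aeτ + b)/(cmτ + de)) = λ_{e∗f}(τ) - λ_e(τ)`, where
`e∗f = ef/gcd(e,f)²`. -/
theorem statement17 (m e f : ℕ) (hm : 0 < m) (he : e ∣ m)
    (hexact : Nat.Coprime e (m / e)) (hf : f ∣ m)
    (a b c d : ℤ) (habcd : a * d * (e : ℤ) - b * c * ((m / e : ℕ) : ℤ) = 1) :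
    ∀ τ ∈ UHP,
      (e : ℂ) * ((c : ℂ) * (m : ℂ) * τ + (d : ℂ) * (e : ℂ)) ^ (-2 : ℤ) *
          lambdaN f (((a : ℂ) * (e : ℂ) * τ + (b : ℂ)) /
            ((c : ℂ) * (m : ℂ) * τ + (d : ℂ) * (e : ℂ))) =
        lambdaN (e * f / Nat.gcd e f ^ 2) τ - lambdaN e τ := by
  intro τ hτ
  obtain ⟨n, rfl⟩ := he
  have : NeZero e := ⟨(Nat.pos_of_mul_pos_right hm).ne'⟩
  have : NeZero f := ⟨(Nat.pos_of_dvd_of_pos hf hm).ne'⟩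
  rw [Nat.mul_div_cancel_left n (NeZero.pos e)] at habcd
  have hslash := congrFun (lambdaForm_slash_atkinLehnerMatrix hf habcd) ⟨τ, hτ⟩
  rw [slash_atkinLehnerMatrix_apply] at hslash
  simpa [lambdaForm, coe_atkinLehnerMatrix_smul] using hslash
end
end
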